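/- arXiv:2302.14194 — 2 statements merged into one kernel-verified Lean document; each statement's English description precedes it below -/
import Mathlib

section
/- Let p, q : Fin n → EuclideanSpace ℝ (Fin d) be injective families whose values are exactly the extreme points of P := convexHull ℝ (Set.range p) and Q := convexHull ℝ (Set.range q) respectively, and assume P and Q are combinatorially equivalent with compatible labelling. If (1) 0 ∈ interior Q; (2) ‖q i − q j‖ ≤ ‖p i − p j‖ for every edge (i,j) of P; (3) ‖p i‖ ≤ ‖q i‖ for all i; then there exists a linear isometry equivalence T : EuclideanSpace ℝ (Fin d) ≃ₗᵢ EuclideanSpace ℝ (Fin d) with T (p i) = q i for all i. -/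
/-- For `i ≠ j`, the pair `(i,j)` is an edge of the polytope `convexHull ℝ (Set.range p)`
if the closed segment between `p i` and `p j` is an extreme subset of it. -/
def IsEdge {n d : ℕ} (p : Fin n → EuclideanSpace ℝ (Fin d)) (i j : Fin n) : Prop :=
  i ≠ j ∧ IsExtreme ℝ (convexHull ℝ (Set.range p)) (segment ℝ (p i) (p j))

/-- Two polytopes with labelled vertices are combinatorially equivalent with compatible
labelling if for every `S ⊆ Fin n`, `convexHull ℝ (p '' S)` is an extreme subset of the
first polytope exactly when `convexHull ℝ (q '' S)` is an extreme subset of the second. -/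
def CombEquiv {n d : ℕ} (p q : Fin n → EuclideanSpace ℝ (Fin d)) : Prop :=
  ∀ S : Set (Fin n),
    IsExtreme ℝ (convexHull ℝ (Set.range p)) (convexHull ℝ (p '' S)) ↔
    IsExtreme ℝ (convexHull ℝ (Set.range q)) (convexHull ℝ (q '' S))

/-!
For `x` in the relative interior of `P`, let `ℓ i = ⟪p i - x, ·⟫` and consider
`Z k = ∫ exp (-max_i (ℓ i y - k i)) dy`. Let `w` and `M` be its gradient and Hessian at `k = 0`; the
entry `w i` is the integral over the cell where `ℓ i` attains the maximum. Cells of vertices that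
do not span an edge of `P` do not share a wall, so the off-diagonal part of `M` is nonnegative and
supported on the edges. Since `Z (k + c) = exp c * Z k`, the rows of `M` sum to `w`; since `Z` is
translation invariant, `∑ i, w i • (p i - x) = 0` and `M` annihilates the vectors `(ℓ i y)_i`. By
Prékopa–Leindler `Z` is log-concave, so `M` is nonpositive on the orthogonal complement of `w`, and
there it vanishes only on the vectors `(ℓ i y)_i`.

Brouwer's fixed point theorem and the correspondence of faces give an `x` with `∑ i, w i • q i = 0`.
Applying the nonpositivity of `M` to the coordinates of `q`,
`∑ w ‖q‖² ≤ ½ ∑ M ‖q i - q j‖² ≤ ½ ∑ M ‖p i - p j‖² = ∑ w ‖p - x‖² = ∑ w ‖p‖² - (∑ w) ‖x‖²`,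
and `‖p i‖ ≤ ‖q i‖` turns all of this into equalities. Hence `x = 0`, every `⟪e, q i⟫` is a linear
function of `p i`, and norms and the lengths of edges of positive weight agree; so `p` and `q` have
the same Gram matrix.
-/

open MeasureTheory Set Module Filter Metric
open scoped ENNReal Topology NNReal Matrix

section PrekopaLeindler

lemma volume_add_volume_le_of_midpoint_mem_of_isCompact {A B C : Set ℝ}
    (hA : IsCompact A) (hB : IsCompact B) (hA₀ : A.Nonempty) (hB₀ : B.Nonempty)
    (h : ∀ a ∈ A, ∀ b ∈ B, midpoint ℝ a b ∈ C) :
    volume A + volume B ≤ 2 * volume C := by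
  -- The midpoints of `A` with `min B` and of `max A` with `B` meet in one point only.
  have half (c : ℝ) (S : Set ℝ) : volume (AffineMap.homothety c (2⁻¹ : ℝ) '' S) = volume S / 2 := by
    rw [Measure.addHaar_image_homothety, mul_comm, ENNReal.div_eq_inv_mul, mul_comm]
    simp
  have homothety_eq (c x : ℝ) : AffineMap.homothety c (2⁻¹ : ℝ) x = (c + x) / 2 := by
    simp only [AffineMap.homothety_apply, vsub_eq_sub, smul_eq_mul, vadd_eq_add]; ring
  have midpoint_eq (x y : ℝ) : midpoint ℝ x y = (x + y) / 2 := by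
    rw [midpoint_eq_smul_add, smul_eq_mul, invOf_eq_inv]; ring
  have hdisj : AEDisjoint volume (AffineMap.homothety (sInf B) (2⁻¹ : ℝ) '' A)
      (AffineMap.homothety (sSup A) (2⁻¹ : ℝ) '' B) := by
    refine measure_mono_null (t := {(sSup A + sInf B) / 2}) ?_ (by simp)
    rintro _ ⟨⟨a, ha, rfl⟩, ⟨b, hb, hab⟩⟩
    have ha' := le_csSup hA.bddAbove ha
    have hb' := csInf_le hB.bddBelow hb
    rw [homothety_eq, homothety_eq] at hab
    rw [mem_singleton_iff, homothety_eq]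
    linarith
  have hsub : AffineMap.homothety (sInf B) (2⁻¹ : ℝ) '' A ∪
      AffineMap.homothety (sSup A) (2⁻¹ : ℝ) '' B ⊆ C := by
    rintro _ (⟨a, ha, rfl⟩ | ⟨b, hb, rfl⟩)
    · rw [homothety_eq, add_comm, ← midpoint_eq]
      exact h a ha _ (hB.sInf_mem hB₀)
    · rw [homothety_eq, ← midpoint_eq]
      exact h _ (hA.sSup_mem hA₀) b hb
  have hmeas : MeasurableSet (AffineMap.homothety (sSup A) (2⁻¹ : ℝ) '' B) :=
    (hB.image
      (AffineMap.homothety (sSup A) (2⁻¹ : ℝ)).continuous_of_finiteDimensional).measurableSet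
  calc volume A + volume B = 2 * (volume A / 2 + volume B / 2) := by
        rw [mul_add, ENNReal.mul_div_cancel (by simp) (by simp),
          ENNReal.mul_div_cancel (by simp) (by simp)]
    _ ≤ 2 * volume C := by
        rw [← half (sInf B) A, ← half (sSup A) B, ← measure_union₀ hmeas.nullMeasurableSet hdisj]
        gcongr

lemma volume_add_volume_le_of_midpoint_mem {A B C : Set ℝ}
    (hA : MeasurableSet A) (hB : MeasurableSet B) (hA₀ : A.Nonempty) (hB₀ : B.Nonempty)
    (h : ∀ a ∈ A, ∀ b ∈ B, midpoint ℝ a b ∈ C) :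
    volume A + volume B ≤ 2 * volume C := by
  obtain ⟨a₀, ha₀⟩ := hA₀
  obtain ⟨b₀, hb₀⟩ := hB₀
  rw [hA.measure_eq_iSup_isCompact, hB.measure_eq_iSup_isCompact]
  simp only [iSup_and']
  refine ENNReal.biSup_add_biSup_le' ⟨∅, empty_subset _, isCompact_empty⟩
    ⟨∅, empty_subset _, isCompact_empty⟩ fun K ⟨hKA, hK⟩ L ⟨hLB, hL⟩ ↦ ?_
  calc volume K + volume L ≤ volume (insert a₀ K) + volume (insert b₀ L) := by
        gcongr <;> exact subset_insert _ _
    _ ≤ 2 * volume C := volume_add_volume_le_of_midpoint_mem_of_isCompact (hK.insert a₀)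
        (hL.insert b₀) (insert_nonempty _ _) (insert_nonempty _ _) fun a ha b hb ↦
          h a (insert_subset ha₀ hKA ha) b (insert_subset hb₀ hLB hb)

lemma lintegral_add_lintegral_le_of_isLUB_one {f g m : ℝ → ℝ}
    (hf : Measurable f) (hg : Measurable g) (hm : Measurable m)
    (hf₀ : 0 ≤ f) (hg₀ : 0 ≤ g) (hm₀ : 0 ≤ m)
    (hf₁ : IsLUB (range f) 1) (hg₁ : IsLUB (range g) 1)
    (h : ∀ x y, f x * g y ≤ m (midpoint ℝ x y) ^ 2) :
    (∫⁻ x, .ofReal (f x)) + ∫⁻ x, .ofReal (g x) ≤ 2 * ∫⁻ x, .ofReal (m x) := by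
  have superlevel (t : ℝ) (ht : 0 < t) :
      volume {x | t < f x} + volume {x | t < g x} ≤ 2 * volume {x | t < m x} := by
    rcases lt_or_ge t 1 with ht1 | ht1
    · obtain ⟨_, ⟨x, rfl⟩, hx, -⟩ := hf₁.exists_between ht1
      obtain ⟨_, ⟨y, rfl⟩, hy, -⟩ := hg₁.exists_between ht1
      refine volume_add_volume_le_of_midpoint_mem (measurableSet_lt measurable_const hf)
        (measurableSet_lt measurable_const hg) ⟨x, hx⟩ ⟨y, hy⟩ fun a ha b hb ↦ ?_
      refine lt_of_pow_lt_pow_left₀ 2 (hm₀ _) (lt_of_lt_of_le ?_ (h a b))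
      rw [pow_two]
      exact mul_lt_mul'' ha hb ht.le ht.le
    · have hf_empty : {x | t < f x} = ∅ :=
        eq_empty_of_forall_notMem fun x hx ↦ ((hf₁.1 ⟨x, rfl⟩).trans ht1).not_gt hx
      have hg_empty : {x | t < g x} = ∅ :=
        eq_empty_of_forall_notMem fun x hx ↦ ((hg₁.1 ⟨x, rfl⟩).trans ht1).not_gt hx
      simp [hf_empty, hg_empty]
  have measurable_superlevel (u : ℝ → ℝ) : Measurable fun t : ℝ ↦ volume {x | t < u x} :=
    Antitone.measurable fun s t hst ↦ measure_mono fun x hx ↦ lt_of_le_of_lt hst hx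
  rw [lintegral_eq_lintegral_meas_lt _ (.of_forall hf₀) hf.aemeasurable,
    lintegral_eq_lintegral_meas_lt _ (.of_forall hg₀) hg.aemeasurable,
    lintegral_eq_lintegral_meas_lt _ (.of_forall hm₀) hm.aemeasurable,
    ← lintegral_const_mul _ (measurable_superlevel m),
    ← lintegral_add_left (measurable_superlevel f)]
  exact setLIntegral_mono' measurableSet_Ioi superlevel

lemma mul_le_sq_of_add_le_two_mul {a b c : ℝ≥0∞} (h : a + b ≤ 2 * c) :
    a * b ≤ c ^ 2 := by
  rcases eq_or_ne c ⊤ with rfl | hc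
  · simp
  have hab : a + b ≠ ⊤ := ne_top_of_le_ne_top (ENNReal.mul_ne_top (by simp) hc) h
  lift a to NNReal using (ENNReal.add_ne_top.mp hab).1
  lift b to NNReal using (ENNReal.add_ne_top.mp hab).2
  lift c to NNReal using hc
  norm_cast at h ⊢
  have hreal : (a : ℝ) + b ≤ 2 * c := mod_cast h
  have : (a : ℝ) * b ≤ c ^ 2 := by nlinarith [hreal, sq_nonneg ((a : ℝ) - b), a.2, b.2]
  exact_mod_cast this

lemma lintegral_mul_lintegral_le_of_bddAbove {f g m : ℝ → ℝ}
    (hf : Measurable f) (hg : Measurable g) (hm : Measurable m)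
    (hf₀ : 0 ≤ f) (hg₀ : 0 ≤ g) (hm₀ : 0 ≤ m)
    (hfb : BddAbove (range f)) (hgb : BddAbove (range g))
    (h : ∀ x y, f x * g y ≤ m (midpoint ℝ x y) ^ 2) :
    (∫⁻ x, .ofReal (f x)) * ∫⁻ x, .ofReal (g x) ≤ (∫⁻ x, .ofReal (m x)) ^ 2 := by
  have zero_of_nonpos {u : ℝ → ℝ} (hu : BddAbove (range u)) (h : sSup (range u) ≤ 0) :
      ∫⁻ x, .ofReal (u x) = 0 := by
    simp [ENNReal.ofReal_of_nonpos ((le_csSup hu ⟨_, rfl⟩).trans h)]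
  have lintegral_eq {u : ℝ → ℝ} (hu : Measurable u) {c : ℝ} (hc : 0 < c) :
      ∫⁻ x, .ofReal (u x) = .ofReal c * ∫⁻ x, .ofReal (u x / c) := by
    rw [← lintegral_const_mul _ (hu.div_const c).ennreal_ofReal]
    simp_rw [← ENNReal.ofReal_mul hc.le, mul_div_cancel₀ _ hc.ne']
  have isLUB_div {u : ℝ → ℝ} (hu : BddAbove (range u)) (hc : 0 < sSup (range u)) :
      IsLUB (range fun x ↦ u x / sSup (range u)) 1 := by
    have := (isLUB_csSup (range_nonempty u) hu).mul_right (inv_nonneg.mpr hc.le)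
    rwa [mul_inv_cancel₀ hc.ne', ← range_comp] at this
  set A := sSup (range f)
  set B := sSup (range g)
  rcases le_or_gt A 0 with hA | hA
  · simp [zero_of_nonpos hfb hA]
  rcases le_or_gt B 0 with hB | hB
  · simp [zero_of_nonpos hgb hB]
  have hr : 0 < √(A * B) := by positivity
  have hsum := lintegral_add_lintegral_le_of_isLUB_one (hf.div_const A) (hg.div_const B)
    (hm.div_const √(A * B)) (fun x ↦ div_nonneg (hf₀ x) hA.le) (fun x ↦ div_nonneg (hg₀ x) hB.le)
    (fun x ↦ div_nonneg (hm₀ x) hr.le) (isLUB_div hfb hA) (isLUB_div hgb hB) fun x y ↦ by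
      rw [div_pow, Real.sq_sqrt (by positivity), div_mul_div_comm]
      exact div_le_div_of_nonneg_right (h x y) (by positivity)
  rw [lintegral_eq hf hA, lintegral_eq hg hB, lintegral_eq hm hr, mul_mul_mul_comm, mul_pow,
    ← ENNReal.ofReal_mul hA.le, ← ENNReal.ofReal_pow hr.le, Real.sq_sqrt (by positivity)]
  gcongr
  exact mul_le_sq_of_add_le_two_mul hsum

/-- The midpoint Prékopa–Leindler inequality for `μ`: the hypothesis
`f x * g y ≤ m (midpoint ℝ x y) ^ 2` integrates to `(∫ f) * (∫ g) ≤ (∫ m) ^ 2`. -/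
def MidpointPrekopaLeindler {V : Type*} [AddCommGroup V] [Module ℝ V] [MeasurableSpace V]
    (μ : Measure V) : Prop :=
  ∀ ⦃f g m : V → ℝ≥0∞⦄, Measurable f → Measurable g → Measurable m →
    (∀ x y, f x * g y ≤ m (midpoint ℝ x y) ^ 2) →
    (∫⁻ x, f x ∂μ) * ∫⁻ x, g x ∂μ ≤ (∫⁻ x, m x ∂μ) ^ 2

namespace MidpointPrekopaLeindler

lemma volume_real : MidpointPrekopaLeindler (volume : Measure ℝ) := by
  intro f g m hf hg hm h
  have trunc (N : ℕ) : (∫⁻ x, min (f x) N) * ∫⁻ x, min (g x) N ≤ (∫⁻ x, m x) ^ 2 := by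
    have min_ne_top (a : ℝ≥0∞) : min a N ≠ ⊤ := (min_lt_of_right_lt (by simp)).ne
    have toReal_le (a : ℝ≥0∞) : (min a N).toReal ≤ N :=
      ENNReal.toReal_le_of_le_ofReal (by positivity) (by simp)
    have key := lintegral_mul_lintegral_le_of_bddAbove
      (hf.min (measurable_const (a := (N : ℝ≥0∞)))).ennreal_toReal
      (hg.min (measurable_const (a := (N : ℝ≥0∞)))).ennreal_toReal
      (hm.min (measurable_const (a := (N : ℝ≥0∞)))).ennreal_toReal
      (fun _ ↦ ENNReal.toReal_nonneg) (fun _ ↦ ENNReal.toReal_nonneg)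
      (fun _ ↦ ENNReal.toReal_nonneg) ⟨N, forall_mem_range.mpr fun _ ↦ toReal_le _⟩
      ⟨N, forall_mem_range.mpr fun _ ↦ toReal_le _⟩ fun x y ↦ by
        rw [← ENNReal.toReal_mul, ← ENNReal.toReal_pow]
        refine ENNReal.toReal_mono (ENNReal.pow_ne_top (min_ne_top _)) ?_
        rcases le_total (m (midpoint ℝ x y)) N with hN | hN
        · rw [min_eq_left hN]
          exact (mul_le_mul' (min_le_left _ _) (min_le_left _ _)).trans (h x y)
        · rw [min_eq_right hN, pow_two]
          exact mul_le_mul' (min_le_right _ _) (min_le_right _ _)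
    simp only [ENNReal.ofReal_toReal (min_ne_top _)] at key
    exact key.trans (by gcongr; exact min_le_left _ _)
  have iSup_trunc {u : ℝ → ℝ≥0∞} (hu : Measurable u) :
      ∫⁻ x, u x = ⨆ N : ℕ, ∫⁻ x, min (u x) N := by
    rw [← lintegral_iSup (fun N ↦ hu.min measurable_const)
      fun M N hMN x ↦ min_le_min_left _ (by exact_mod_cast hMN)]
    simp_rw [← inf_iSup_eq, ENNReal.iSup_natCast, inf_top_eq]
  rw [iSup_trunc hf, iSup_trunc hg, ENNReal.iSup_mul]
  refine iSup_le fun M ↦ ?_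
  rw [ENNReal.mul_iSup]
  refine iSup_le fun N ↦ le_trans ?_ (trunc (max M N))
  gcongr <;> simp

variable {V W : Type*} [AddCommGroup V] [Module ℝ V] [MeasurableSpace V]
  [AddCommGroup W] [Module ℝ W] [MeasurableSpace W] {μ : Measure V} {ν : Measure W}

lemma prod [SFinite ν] (hμ : MidpointPrekopaLeindler μ) (hν : MidpointPrekopaLeindler ν) :
    MidpointPrekopaLeindler (μ.prod ν) := by
  intro f g m hf hg hm h
  rw [lintegral_prod _ hf.aemeasurable, lintegral_prod _ hg.aemeasurable,
    lintegral_prod _ hm.aemeasurable]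
  exact hμ hf.lintegral_prod_right' hg.lintegral_prod_right' hm.lintegral_prod_right' fun x x' ↦
    hν (hf.comp measurable_prodMk_left) (hg.comp measurable_prodMk_left)
      (hm.comp measurable_prodMk_left) fun y y' ↦ h (x, y) (x', y')

lemma map (hμ : MidpointPrekopaLeindler μ) {L : V → W} (hL : Measurable L)
    (hmid : ∀ x y, L (midpoint ℝ x y) = midpoint ℝ (L x) (L y)) :
    MidpointPrekopaLeindler (μ.map L) := by
  intro f g m hf hg hm h
  rw [lintegral_map hf hL, lintegral_map hg hL, lintegral_map hm hL]
  exact hμ (hf.comp hL) (hg.comp hL) (hm.comp hL) fun x y ↦ by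
    simpa only [Function.comp_apply, hmid] using h (L x) (L y)

lemma smul (hμ : MidpointPrekopaLeindler μ) (c : ℝ≥0∞) : MidpointPrekopaLeindler (c • μ) := by
  intro f g m hf hg hm h
  simp only [lintegral_smul_measure, smul_eq_mul]
  rw [mul_mul_mul_comm, mul_pow, ← pow_two]
  gcongr
  exact hμ hf hg hm h

lemma volume_pi (n : ℕ) : MidpointPrekopaLeindler (volume : Measure (Fin n → ℝ)) := by
  induction n with
  | zero =>
    intro f g m _ _ _ h
    rw [Measure.volume_pi_eq_dirac default]
    simpa using h default default
  | succ n ih =>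
    rw [← (volume_preserving_piFinSuccAbove (fun _ : Fin (n + 1) ↦ ℝ) 0).symm.map_eq]
    refine (volume_real.prod ih).map (MeasurableEquiv.measurable _) fun x y ↦ ?_
    ext i
    refine Fin.cases ?_ (fun j ↦ ?_) i <;>
      simp [midpoint_eq_smul_add, MeasurableEquiv.piFinSuccAbove, Fin.insertNthEquiv, mul_add]

lemma of_isAddHaarMeasure {V : Type*} [NormedAddCommGroup V] [NormedSpace ℝ V]
    [FiniteDimensional ℝ V] [MeasurableSpace V] [BorelSpace V] (μ : Measure V)
    [μ.IsAddHaarMeasure] : MidpointPrekopaLeindler μ := by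
  let e : (Fin (finrank ℝ V) → ℝ) ≃L[ℝ] V := ContinuousLinearEquiv.ofFinrankEq (by simp)
  rw [Measure.isAddLeftInvariant_eq_smul μ (volume.map e)]
  exact ((volume_pi _).map e.continuous.measurable fun x y ↦ by simp [midpoint_eq_smul_add]).smul _

end MidpointPrekopaLeindler

end PrekopaLeindler

section Brouwer

variable {E : Type*} [NormedAddCommGroup E] [NormedSpace ℝ E]

lemma lipschitzWith_indicator_of_eq_zero_on_frontier {F : Type*} [NormedAddCommGroup F]
    {u : E → F} {s : Set E} {K : ℝ≥0} (hs : IsClosed s) (hu : LipschitzOnWith K u s)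
    (hzero : ∀ x ∈ frontier s, u x = 0) : LipschitzWith K (s.indicator u) := by
  have cross {x y : E} (hx : x ∈ s) (hy : y ∉ s) :
      dist (s.indicator u x) (s.indicator u y) ≤ K * dist x y := by
    obtain ⟨z, hz, hzs⟩ : ∃ z ∈ segment ℝ x y, z ∈ frontier s := by
      by_contra! hno
      have hcover : segment ℝ x y ⊆ interior s ∪ sᶜ := fun z hz ↦ or_iff_not_imp_right.mpr fun hzs ↦
        by_contra fun hzi ↦ hno z hz ⟨subset_closure (not_not.mp hzs), hzi⟩
      obtain ⟨z, -, hzi, hzc⟩ := (convex_segment x y).isPreconnected _ _ isOpen_interior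
        hs.isOpen_compl hcover
        ⟨x, left_mem_segment ℝ x y,
          (hcover (left_mem_segment ℝ x y)).resolve_right (not_not.mpr hx)⟩
        ⟨y, right_mem_segment ℝ x y, hy⟩
      exact hzc (interior_subset hzi)
    rw [indicator_of_mem hx, indicator_of_notMem hy, ← hzero z hzs]
    refine (hu.dist_le_mul x hx z (hs.frontier_subset hzs)).trans ?_
    gcongr
    linarith [dist_add_dist_of_mem_segment hz, dist_nonneg (x := z) (y := y)]
  refine LipschitzWith.of_dist_le_mul fun x y ↦ ?_
  by_cases hx : x ∈ s <;> by_cases hy : y ∈ s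
  · rw [indicator_of_mem hx, indicator_of_mem hy]
    exact hu.dist_le_mul x hx y hy
  · exact cross hx hy
  · rw [dist_comm, dist_comm x]
    exact cross hy hx
  · rw [indicator_of_notMem hx, indicator_of_notMem hy, dist_self]
    positivity

lemma bijective_id_add_of_lipschitzWith [CompleteSpace E] {u : E → E} {K : ℝ≥0}
    (hu : LipschitzWith K u) (hK : K < 1) : Function.Bijective fun x ↦ x + u x := by
  have happrox : ApproximatesLinearOn (fun x ↦ x + u x)
      (ContinuousLinearEquiv.refl ℝ E : E →L[ℝ] E) univ K := fun x _ y _ ↦ by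
    simpa [add_sub_add_comm] using hu.norm_sub_le x y
  have hnorm : Subsingleton E ∨ K < ‖((ContinuousLinearEquiv.refl ℝ E).symm : E →L[ℝ] E)‖₊⁻¹ := by
    rcases subsingleton_or_nontrivial E with hE | hE
    · exact .inl hE
    · right
      have : ‖((ContinuousLinearEquiv.refl ℝ E).symm : E →L[ℝ] E)‖₊ = 1 :=
        NNReal.eq (ContinuousLinearMap.norm_id (𝕜 := ℝ) (E := E))
      simpa [this] using hK
  exact (happrox.toHomeomorph _ hnorm).bijective

variable [FiniteDimensional ℝ E]

lemma det_one_add_pos_of_norm_lt_one {A : E →L[ℝ] E} (hA : ‖A‖ < 1) :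
    0 < (1 + A).det := by
  by_contra! hneg
  have hcont : ContinuousOn (fun B : E →L[ℝ] E ↦ (1 + B).det) (ball 0 1) :=
    (ContinuousLinearMap.continuous_det.comp (by fun_prop)).continuousOn
  obtain ⟨B, hB, hdet⟩ := (convex_ball (0 : E →L[ℝ] E) 1).isPreconnected.intermediate_value
    (mem_ball_zero_iff.mpr hA) (mem_ball_self one_pos) hcont
    (show (0 : ℝ) ∈ Icc _ _ from ⟨hneg, by simp [ContinuousLinearMap.det]⟩)
  have hunit : IsUnit (1 + B) := by
    simpa using isUnit_one_sub_of_norm_lt_one (x := -B) (by simpa using hB)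
  exact (LinearMap.isUnit_det _ (hunit.map ContinuousLinearMap.toLinearMapRingHom)).ne_zero hdet

lemma exists_det_one_add_eq_sum (E : Type*) [NormedAddCommGroup E] [NormedSpace ℝ E]
    [FiniteDimensional ℝ E] {δ : ℝ} (hδ : 0 < δ) :
    ∃ t c : Fin (finrank ℝ E + 1) → ℝ, (∀ k, t k ∈ Ico 0 δ) ∧ ∑ k, c k = 1 ∧
      ∀ A : E →L[ℝ] E, (1 + A).det = ∑ k, c k * (1 + t k • A).det := by
  -- `s ↦ det (1 + s • A)` is a polynomial of degree at most `finrank ℝ E`: interpolate at `s = 1`.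
  set m := finrank ℝ E
  set t : Fin (m + 1) → ℝ := fun k ↦ δ * k / (m + 1) with ht
  have ht_inj : InjOn t (Finset.univ : Finset (Fin (m + 1))) := fun k _ l _ hkl ↦ by
    have : (m : ℝ) + 1 ≠ 0 := by positivity
    simp only [ht] at hkl
    field_simp at hkl
    exact Fin.ext (by exact_mod_cast hkl)
  refine ⟨t, fun k ↦ (Lagrange.basis Finset.univ t k).eval 1, fun k ↦ ⟨by positivity, ?_⟩, ?_, ?_⟩
  · have : (k : ℝ) < m + 1 := by exact_mod_cast k.2
    rw [div_lt_iff₀ (by positivity)]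
    gcongr
  · rw [← Polynomial.eval_finsetSum, Lagrange.sum_basis ht_inj Finset.univ_nonempty,
      Polynomial.eval_one]
  · intro A
    let b := finBasis ℝ E
    let M := LinearMap.toMatrix b b (A : E →ₗ[ℝ] E)
    let P : Polynomial ℝ := ((Polynomial.X : Polynomial ℝ) • M.map Polynomial.C +
      (1 : Matrix (Fin m) (Fin m) ℝ).map Polynomial.C).det
    have hdeg : P.degree < (Finset.univ : Finset (Fin (m + 1))).card := by
      refine lt_of_le_of_lt (Polynomial.degree_le_of_natDegree_le (n := m) ?_) ?_
      · exact (Polynomial.natDegree_det_X_add_C_le M 1).trans_eq (Fintype.card_fin m)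
      · rw [Finset.card_fin]
        exact_mod_cast Nat.lt_succ_self m
    have heval (s : ℝ) : P.eval s = (1 + s • A).det := by
      have hM : LinearMap.toMatrix b b ((1 + s • A : E →L[ℝ] E) : E →ₗ[ℝ] E) = s • M + 1 := by
        rw [add_comm, ← LinearMap.toMatrix_one b, ← map_smul, ← map_add]
        rfl
      rw [ContinuousLinearMap.det, ← LinearMap.det_toMatrix b, hM, ← Polynomial.coe_evalRingHom,
        RingHom.map_det]
      congr 1
      ext i j
      rcases eq_or_ne i j with rfl | hij
      · simp [mul_comm s]
      · simp [Matrix.one_apply_ne hij, mul_comm s]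
    have key := congrArg (Polynomial.eval 1) (Lagrange.eq_interpolate ht_inj hdeg)
    simpa [Lagrange.interpolate_apply, Polynomial.eval_finsetSum, heval, mul_comm] using key

lemma det_eq_zero_of_hasFDerivAt_of_norm_const {E : Type*} [NormedAddCommGroup E]
    [InnerProductSpace ℝ E] [FiniteDimensional ℝ E] {r : E → E} {D : E →L[ℝ] E} {x : E}
    (hr : HasFDerivAt r D x) {R : ℝ} (hR : R ≠ 0) (hnorm : ∀ y, ‖r y‖ = R) : D.det = 0 := by
  have horth (v : E) : inner ℝ (r x) (D v) = 0 := by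
    have hconst : HasFDerivAt (fun y ↦ ‖r y‖ ^ 2) (0 : E →L[ℝ] ℝ) x := by
      simp only [hnorm]
      exact hasFDerivAt_const _ _
    simpa using DFunLike.congr_fun (hr.norm_sq.unique hconst) v
  by_contra hdet
  have hunit := (LinearMap.isUnit_iff_isUnit_det (D : E →ₗ[ℝ] E)).mpr (isUnit_iff_ne_zero.mpr hdet)
  obtain ⟨v, hv⟩ := LinearMap.range_eq_top.mp
    ((LinearMap.isUnit_iff_range_eq_top _).mp hunit) (r x)
  have := horth v
  rw [show D v = r x from hv, real_inner_self_eq_norm_sq, hnorm] at this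
  exact hR (pow_eq_zero_iff two_ne_zero |>.mp this)

lemma setIntegral_det_one_add_eq_of_lipschitzWith_lt_one [MeasurableSpace E] [BorelSpace E]
    (μ : Measure E) [μ.IsAddHaarMeasure] {s : Set E} (hs : MeasurableSet s) {u : E → E} {K : ℝ≥0}
    (hu : LipschitzWith K u) (hK : K < 1) (hu_out : ∀ x ∉ s, u x = 0) {D : E → E →L[ℝ] E}
    (hD : ∀ x ∈ s, HasFDerivAt u (D x) x) :
    ∫ x in s, (1 + D x).det ∂μ = μ.real s := by
  have hbij := bijective_id_add_of_lipschitzWith hu hK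
  have himage : (fun x ↦ x + u x) '' s = s := by
    have hfix : (fun x ↦ x + u x) '' sᶜ = sᶜ := by
      refine (image_congr fun x hx ↦ ?_).trans (image_id _)
      simp [hu_out x hx]
    rw [← compl_inj_iff, ← image_compl_eq hbij, hfix]
  have hderiv (x : E) (hx : x ∈ s) : HasFDerivWithinAt (fun x ↦ x + u x) (1 + D x) s x :=
    ((hasFDerivAt_id x).add (hD x hx)).hasFDerivWithinAt
  have hcov := integral_image_eq_integral_abs_det_fderiv_smul μ hs hderiv hbij.injective.injOn
    fun _ ↦ (1 : ℝ)
  rw [himage] at hcov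
  simp only [smul_eq_mul, mul_one, integral_const, measureReal_restrict_apply_univ] at hcov
  rw [hcov]
  refine setIntegral_congr_fun hs fun x hx ↦ (abs_of_pos (det_one_add_pos_of_norm_lt_one ?_)).symm
  exact ((hD x hx).le_of_lipschitz hu).trans_lt (mod_cast hK)

lemma setIntegral_det_one_add_eq [MeasurableSpace E] [BorelSpace E] (μ : Measure E)
    [μ.IsAddHaarMeasure] {s : Set E} (hs : MeasurableSet s) (hs_bdd : Bornology.IsBounded s)
    {u : E → E} {K : ℝ≥0} (hu : LipschitzWith K u) (hu_out : ∀ x ∉ s, u x = 0)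
    {D : E → E →L[ℝ] E} (hD_cont : Continuous D) (hD : ∀ x ∈ s, HasFDerivAt u (D x) x) :
    ∫ x in s, (1 + D x).det ∂μ = μ.real s := by
  obtain ⟨t, c, ht, hc, hdet⟩ :=
    exists_det_one_add_eq_sum E (δ := (1 / (K + 1) : ℝ)) (by positivity)
  have hsmall (k) : ∫ x in s, (1 + t k • D x).det ∂μ = μ.real s := by
    have htK : ‖t k‖₊ * K < 1 := by
      have := (lt_div_iff₀ (by positivity)).mp (ht k).2
      rw [← NNReal.coe_lt_coe, NNReal.coe_mul, coe_nnnorm, Real.norm_of_nonneg (ht k).1,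
        NNReal.coe_one]
      linarith [(ht k).1]
    exact setIntegral_det_one_add_eq_of_lipschitzWith_lt_one μ hs
      ((lipschitzWith_smul (t k)).comp hu) htK (fun x hx ↦ by simp [hu_out x hx])
      fun x hx ↦ (hD x hx).const_smul (t k)
  have hint (a : ℝ) : IntegrableOn (fun x ↦ (1 + a • D x).det) s μ := by
    have : Continuous fun x ↦ (1 + a • D x).det := ContinuousLinearMap.continuous_det.comp
      (continuous_const.add (hD_cont.const_smul a))
    exact (this.continuousOn.integrableOn_compact hs_bdd.isCompact_closure).mono_set subset_closure
  simp only [hdet (D _)]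
  rw [integral_finsetSum _ fun k _ ↦ (hint (t k)).const_mul (c k)]
  simp only [integral_const_mul, hsmall, ← Finset.sum_mul, hc, one_mul]

lemma exists_norm_ne_of_contDiff_of_eqOn_sphere {E : Type*} [NormedAddCommGroup E]
    [InnerProductSpace ℝ E] [FiniteDimensional ℝ E] {r : E → E} (hr : ContDiff ℝ 1 r) {R : ℝ}
    (hR : 0 < R) (hsphere : ∀ x, ‖x‖ = R → r x = x) : ∃ x, ‖r x‖ ≠ R := by
  by_contra! hnorm
  borelize E
  let μ : Measure E := Measure.addHaar
  have hsub : ContDiff ℝ 1 fun x ↦ r x - x := hr.sub contDiff_id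
  let D : E → E →L[ℝ] E := fderiv ℝ fun x ↦ r x - x
  have hsubD (x : E) : HasFDerivAt (fun x ↦ r x - x) (D x) x :=
    (hsub.differentiable (by simp) x).hasFDerivAt
  let u : E → E := (closedBall 0 R).indicator fun x ↦ r x - x
  obtain ⟨K, hK⟩ := hsub.contDiffOn.exists_lipschitzOnWith (by simp)
    (convex_closedBall (0 : E) R) (isCompact_closedBall 0 R)
  have hu : LipschitzWith K u :=
    lipschitzWith_indicator_of_eq_zero_on_frontier isClosed_closedBall hK fun x hx ↦ by
      rw [frontier_closedBall _ hR.ne', mem_sphere_zero_iff_norm] at hx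
      rw [hsphere x hx, sub_self]
  have hu_out (x : E) (hx : x ∉ ball 0 R) : u x = 0 := by
    by_cases hxR : x ∈ closedBall 0 R
    · have : ‖x‖ = R := le_antisymm (mem_closedBall_zero_iff.mp hxR) (by simpa using hx)
      exact (indicator_of_mem hxR _).trans (by rw [hsphere x this, sub_self])
    · exact indicator_of_notMem hxR _
  have hDu (x : E) (hx : x ∈ ball 0 R) : HasFDerivAt u (D x) x := by
    refine (hsubD x).congr_of_eventuallyEq ?_
    filter_upwards [isOpen_ball.mem_nhds hx] with y hy
    exact indicator_of_mem (ball_subset_closedBall hy) _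
  have hvol : ∫ x in ball 0 R, (1 + D x).det ∂μ = μ.real (ball 0 R) :=
    setIntegral_det_one_add_eq μ measurableSet_ball isBounded_ball hu hu_out
      (hsub.continuous_fderiv (by simp)) hDu
  have hzero (x : E) : (1 + D x).det = 0 := by
    refine det_eq_zero_of_hasFDerivAt_of_norm_const (r := r) (x := x) ?_ hR.ne' hnorm
    exact ((hasFDerivAt_id x).add (hsubD x)).congr_of_eventuallyEq (.of_forall fun y ↦ by simp)
  simp only [hzero, integral_zero] at hvol
  exact (ENNReal.toReal_pos (measure_ball_pos μ 0 hR).ne' measure_ball_lt_top.ne).ne hvol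

variable {E : Type*} [NormedAddCommGroup E] [InnerProductSpace ℝ E] [FiniteDimensional ℝ E]

lemma exists_eq_zero_of_eq_self_outside_ball {g : E → E} (hg : Continuous g) {R : ℝ}
    (hR : 0 < R) (hid : ∀ x, R ≤ ‖x‖ → g x = x) : ∃ x, g x = 0 := by
  by_contra! hg₀
  obtain ⟨c, hc, hgc⟩ : ∃ c > 0, ∀ x, c ≤ ‖g x‖ := by
    obtain ⟨v, -, hv⟩ := (isCompact_closedBall (0 : E) R).exists_isMinOn ⟨0, by simp [hR.le]⟩
      hg.norm.continuousOn
    refine ⟨min ‖g v‖ R, lt_min (norm_pos_iff.mpr (hg₀ v)) hR, fun x ↦ ?_⟩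
    rcases le_total ‖x‖ R with h | h
    · exact (min_le_left _ _).trans (hv (by simpa using h))
    · rw [hid x h]
      exact (min_le_right _ _).trans h
  obtain ⟨w, hw, hw_near, hw_supp⟩ := Continuous.exists_contDiff_approx 1
    (f := fun x ↦ g x - x) (hg.sub continuous_id) (ε := fun _ ↦ c) continuous_const fun _ ↦ hc
  have hw_out (x : E) (hx : ‖x‖ = R) : w x = 0 := by
    by_contra hne
    exact hw_supp hne (by simp [hid x hx.ge])
  have hne (x : E) : x + w x ≠ 0 := fun h ↦ by
    have := hw_near x
    rw [dist_eq_norm, sub_sub_eq_add_sub, add_comm, h, zero_sub, norm_neg] at this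
    exact this.not_ge (hgc x)
  have hsmooth : ContDiff ℝ 1 fun x ↦ x + w x := contDiff_id.add hw
  obtain ⟨x, hx⟩ := exists_norm_ne_of_contDiff_of_eqOn_sphere
    (r := fun x ↦ (R * ‖x + w x‖⁻¹) • (x + w x))
    ((contDiff_const.mul ((hsmooth.norm ℝ hne).inv fun x ↦ norm_ne_zero_iff.mpr (hne x))).smul
      hsmooth) hR fun x hx ↦ by
        rw [hw_out x hx, add_zero, hx, mul_inv_cancel₀ hR.ne', one_smul]
  refine hx ?_
  rw [norm_smul, norm_mul, norm_inv, norm_norm, Real.norm_of_nonneg hR.le,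
    inv_mul_cancel_right₀ (norm_ne_zero_iff.mpr (hne x))]

theorem exists_eq_zero_of_inner_pos {f : E → E} (hf : Continuous f) {R : ℝ} (hR : 0 < R)
    (hpos : ∀ y, R ≤ ‖y‖ → 0 < inner ℝ y (f y)) : ∃ y, f y = 0 := by
  let s : E → ℝ := fun y ↦ max 0 (min 1 (‖y‖ / R - 1))
  have hs₀ (y) : 0 ≤ s y := le_max_left _ _
  have hs₁ (y) : s y ≤ 1 := max_le zero_le_one (min_le_left _ _)
  obtain ⟨y, hy⟩ := exists_eq_zero_of_eq_self_outside_ball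
    (g := fun y ↦ (1 - s y) • f y + s y • y) (by fun_prop) (R := 2 * R) (by positivity)
    fun y hy ↦ by
      have : s y = 1 := by
        have : 2 ≤ ‖y‖ / R := (le_div_iff₀ hR).mpr hy
        simp only [s]
        rw [min_eq_left (by linarith), max_eq_right zero_le_one]
      simp [this]
  refine ⟨y, ?_⟩
  rcases lt_or_ge ‖y‖ R with hyR | hyR
  · have : s y = 0 := by
      have : ‖y‖ / R < 1 := (div_lt_one hR).mpr hyR
      exact max_eq_left ((min_le_right _ _).trans (by linarith))
    simpa [this] using hy
  · have hinner : (1 - s y) * inner ℝ y (f y) + s y * ‖y‖ ^ 2 = 0 := by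
      rw [← real_inner_self_eq_norm_sq, ← inner_smul_right, ← inner_smul_right, ← inner_add_right,
        hy, inner_zero_right]
    have hf_pos := hpos y hyR
    have hy_pos : 0 < ‖y‖ ^ 2 := by have := hR.trans_le hyR; positivity
    nlinarith [hs₀ y, hs₁ y, mul_nonneg (hs₀ y) hy_pos.le,
      mul_nonneg (sub_nonneg.mpr (hs₁ y)) hf_pos.le]

end Brouwer

section MaxAffine

variable {V : Type*} [NormedAddCommGroup V] [NormedSpace ℝ V] {ι : Type*}

/-- The piecewise affine convex function `y ↦ max i, (ℓ i y - k i)`. -/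
noncomputable def maxAffine (ℓ : ι → V →L[ℝ] ℝ) (k : ι → ℝ) (y : V) : ℝ :=
  ⨆ i, (ℓ i y - k i)

/-- The closed region on which the `i`-th affine function realizes `maxAffine ℓ k`. -/
def cell (ℓ : ι → V →L[ℝ] ℝ) (k : ι → ℝ) (i : ι) : Set V :=
  {y | ∀ j, ℓ j y - k j ≤ ℓ i y - k i}

/-- The functionals `ℓ i` positively span the dual space, stated in polar form; this is what makes
`exp (-maxAffine ℓ k)` integrable. -/
def PositivelySpanning (ℓ : ι → V →L[ℝ] ℝ) : Prop :=
  ∀ y, (∀ i, ℓ i y ≤ 0) → y = 0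

lemma isClosed_cell (ℓ : ι → V →L[ℝ] ℝ) (k : ι → ℝ) (i : ι) : IsClosed (cell ℓ k i) := by
  simp only [cell, Set.ofPred_forall]
  exact isClosed_iInter fun j ↦ isClosed_le (by fun_prop) (by fun_prop)

lemma maxAffine_translate (ℓ : ι → V →L[ℝ] ℝ) (k : ι → ℝ) (y z : V) :
    maxAffine ℓ (fun i ↦ k i + ℓ i z) (y + z) = maxAffine ℓ k y := by
  simp [maxAffine]

lemma maxAffine_smul (ℓ : ι → V →L[ℝ] ℝ) (k : ι → ℝ) (y : V) {t : ℝ} (ht : 0 ≤ t) :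
    maxAffine ℓ (t • k) (t • y) = t * maxAffine ℓ k y := by
  simp only [maxAffine, map_smul, Pi.smul_apply, smul_eq_mul, ← mul_sub, Real.mul_iSup_of_nonneg ht]

section Finite

variable [Finite ι] (ℓ ℓ' : ι → V →L[ℝ] ℝ) (k k' : ι → ℝ) (y : V)

lemma le_maxAffine (i : ι) : ℓ i y - k i ≤ maxAffine ℓ k y :=
  le_ciSup (f := fun i ↦ ℓ i y - k i) (Set.finite_range _).bddAbove i

variable {ℓ k y} in
lemma maxAffine_eq_of_mem_cell {i : ι} (hy : y ∈ cell ℓ k i) :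
    maxAffine ℓ k y = ℓ i y - k i :=
  have : Nonempty ι := ⟨i⟩
  le_antisymm (ciSup_le hy) (le_maxAffine ℓ k y i)

variable [Nonempty ι]

variable {ℓ k y} in
lemma maxAffine_le_iff {r : ℝ} : maxAffine ℓ k y ≤ r ↔ ∀ i, ℓ i y - k i ≤ r :=
  ciSup_le_iff (Set.finite_range _).bddAbove

lemma exists_mem_cell : ∃ i, y ∈ cell ℓ k i := by
  obtain ⟨i, hi⟩ := exists_eq_ciSup_of_finite (f := fun i ↦ ℓ i y - k i)
  exact ⟨i, fun j ↦ (le_maxAffine ℓ k y j).trans_eq hi.symm⟩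

lemma maxAffine_add_const (c : ℝ) : maxAffine ℓ (fun i ↦ k i + c) y = maxAffine ℓ k y - c := by
  refine eq_of_forall_ge_iff fun r ↦ ?_
  simp only [maxAffine_le_iff, sub_le_iff_le_add]
  exact forall_congr' fun i ↦ by rw [add_assoc, add_comm c]

variable {ℓ k y} in
lemma maxAffine_update [DecidableEq ι] {i : ι} {s : ℝ} (hs : s ≤ k i) :
    maxAffine ℓ (Function.update k i s) y = max (maxAffine ℓ k y) (ℓ i y - s) := by
  refine eq_of_forall_ge_iff fun r ↦ ?_
  simp only [max_le_iff, maxAffine_le_iff]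
  refine ⟨fun h ↦ ⟨fun j ↦ ?_, by simpa using h i⟩, fun h j ↦ ?_⟩
  · rcases eq_or_ne j i with rfl | hj
    · have := h j
      rw [Function.update_self] at this
      linarith
    · simpa [hj] using h j
  · rcases eq_or_ne j i with rfl | hj
    · simpa using h.2
    · simpa [hj] using h.1 j

variable {ℓ k y} in
lemma exp_neg_maxAffine_sub_update [DecidableEq ι] {i : ι} {s : ℝ} (hs : s ≤ k i) :
    Real.exp (-maxAffine ℓ k y) - Real.exp (-maxAffine ℓ (Function.update k i s) y) =
      max (Real.exp (-maxAffine ℓ k y) - Real.exp (-(ℓ i y - s))) 0 := by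
  rw [maxAffine_update hs, ← min_neg_neg, Real.exp_monotone.map_min, ← max_sub_sub_left, sub_self,
    max_comm]

lemma two_mul_maxAffine_midpoint_le (y' : V) :
    2 * maxAffine ℓ (midpoint ℝ k k') (midpoint ℝ y y') ≤ maxAffine ℓ k y + maxAffine ℓ k' y' := by
  obtain ⟨i, hi⟩ := exists_mem_cell ℓ (midpoint ℝ k k') (midpoint ℝ y y')
  rw [maxAffine_eq_of_mem_cell hi]
  have h : 2 * (ℓ i (midpoint ℝ y y') - midpoint ℝ k k' i) = ℓ i y - k i + (ℓ i y' - k' i) := by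
    simp only [midpoint_eq_smul_add, map_smul, map_add, Pi.smul_apply, Pi.add_apply, smul_eq_mul,
      invOf_eq_inv]
    ring
  exact h.trans_le (add_le_add (le_maxAffine ..) (le_maxAffine ..))

end Finite

lemma hasFDerivAt_exp_neg_maxAffine [Finite ι] {ℓ : ι → V →L[ℝ] ℝ} {y : V} {k : ι → ℝ} {i : ι}
    (hi : ∀ j ≠ i, ℓ j y - k j < ℓ i y - k i) :
    HasFDerivAt (fun k ↦ Real.exp (-maxAffine ℓ k y))
      (Real.exp (-maxAffine ℓ k y) • ContinuousLinearMap.proj (R := ℝ) (φ := fun _ ↦ ℝ) i) k := by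
  cases nonempty_fintype ι
  have hnear : ∀ᶠ k' in 𝓝 k, maxAffine ℓ k' y = ℓ i y - k' i := by
    have : ∀ j, ∀ᶠ k' : ι → ℝ in 𝓝 k, ℓ j y - k' j ≤ ℓ i y - k' i := by
      intro j
      rcases eq_or_ne j i with rfl | hj
      · exact .of_forall fun _ ↦ le_rfl
      · have hc : ContinuousAt (fun k' : ι → ℝ ↦ ℓ i y - k' i - (ℓ j y - k' j)) k := by fun_prop
        filter_upwards [hc.eventually (lt_mem_nhds (sub_pos.2 (hi j hj)))] with k' hk'
        exact (sub_pos.1 hk').le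
    filter_upwards [eventually_all.2 this] with k' hk' using maxAffine_eq_of_mem_cell hk'
  have hproj : HasFDerivAt (fun k' : ι → ℝ ↦ -(ℓ i y - k' i))
      (ContinuousLinearMap.proj (R := ℝ) (φ := fun _ ↦ ℝ) i) k := by
    simp only [neg_sub]
    exact (ContinuousLinearMap.proj (R := ℝ) (φ := fun _ : ι ↦ ℝ) i).hasFDerivAt.sub_const _
  rw [hnear.self_of_nhds]
  refine hproj.exp.congr_of_eventuallyEq ?_
  filter_upwards [hnear] with k' hk' using by rw [hk']

@[fun_prop]
lemma continuous_maxAffine [Finite ι] [Nonempty ι] {X : Type*} [TopologicalSpace X]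
    {ℓ : X → ι → V →L[ℝ] ℝ} {k : X → ι → ℝ} {y : X → V} (hℓ : Continuous ℓ) (hk : Continuous k)
    (hy : Continuous y) : Continuous fun x ↦ maxAffine (ℓ x) (k x) (y x) := by
  cases nonempty_fintype ι
  simp only [maxAffine, ← Finset.sup'_univ_eq_ciSup]
  exact Continuous.finset_sup'_apply _ fun i _ ↦ by fun_prop

variable [Fintype ι] [Nonempty ι] (ℓ : ι → V →L[ℝ] ℝ)

lemma maxAffine_le_add_dist (k k' : ι → ℝ) (y : V) :
    maxAffine ℓ k y ≤ maxAffine ℓ k' y + dist k k' := by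
  refine maxAffine_le_iff.2 fun i ↦ ?_
  have := (le_abs_self (k' i - k i)).trans ((abs_sub_comm _ _).trans_le (dist_le_pi_dist k k' i))
  linarith [le_maxAffine ℓ k' y i]

variable {ℓ}

lemma lipschitzOnWith_exp_neg_maxAffine {ε : ℝ} {y : V}
    (hco : ∀ k, ε * ‖y‖ - ‖k‖ ≤ maxAffine ℓ k y) (k : ι → ℝ) :
    LipschitzOnWith (Real.nnabs (Real.exp (‖k‖ + 1) * Real.exp (-(ε * ‖y‖))))
      (fun k ↦ Real.exp (-maxAffine ℓ k y)) (ball k 1) := by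
  refine LipschitzOnWith.of_le_add_mul _ fun a ha b _ ↦ ?_
  have hbound : Real.exp (-maxAffine ℓ a y) ≤ Real.exp (‖k‖ + 1) * Real.exp (-(ε * ‖y‖)) := by
    rw [← Real.exp_add]
    gcongr
    linarith [hco a, norm_le_norm_add_norm_sub' a k, mem_ball_iff_norm.1 ha]
  have htangent : Real.exp (-maxAffine ℓ a y) * (maxAffine ℓ a y - maxAffine ℓ b y + 1) ≤
      Real.exp (-maxAffine ℓ b y) := by
    calc _ ≤ Real.exp (-maxAffine ℓ a y) * Real.exp (maxAffine ℓ a y - maxAffine ℓ b y) := by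
          gcongr
          exact Real.add_one_le_exp _
      _ = _ := by rw [← Real.exp_add]; ring_nf
  have hd : maxAffine ℓ b y - maxAffine ℓ a y ≤ dist a b := by
    linarith [maxAffine_le_add_dist ℓ b a y, dist_comm a b]
  calc Real.exp (-maxAffine ℓ a y)
      ≤ Real.exp (-maxAffine ℓ b y) +
        Real.exp (-maxAffine ℓ a y) * (maxAffine ℓ b y - maxAffine ℓ a y) := by linarith
    _ ≤ Real.exp (-maxAffine ℓ b y) + Real.exp (-maxAffine ℓ a y) * dist a b := by gcongr
    _ ≤ _ := by
      rw [Real.coe_nnabs]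
      gcongr
      exact hbound.trans (le_abs_self _)

variable [FiniteDimensional ℝ V]

lemma PositivelySpanning.eventually_coercive (hℓ : PositivelySpanning ℓ) :
    ∃ ε > 0, ∀ᶠ ℓ' in 𝓝 ℓ, ∀ k y, ε * ‖y‖ - ‖k‖ ≤ maxAffine ℓ' k y := by
  have hpos : ∀ y ∈ sphere (0 : V) 1, 0 < maxAffine ℓ 0 y := by
    intro y hy
    by_contra! h
    have := hℓ y fun i ↦ by simpa using (le_maxAffine ℓ 0 y i).trans h
    simp [this] at hy
  have hcont : Continuous fun a : (ι → V →L[ℝ] ℝ) × V ↦ maxAffine a.1 0 a.2 := by fun_prop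
  obtain ⟨ε, hε, hmin⟩ := (isCompact_sphere (0 : V) 1).exists_forall_le'
    (f := fun y ↦ maxAffine ℓ 0 y) (by fun_prop) hpos
  have hnear : ∀ᶠ ℓ' in 𝓝 ℓ, ∀ y ∈ sphere (0 : V) 1, ε / 2 < maxAffine ℓ' 0 y := by
    refine (isCompact_sphere (0 : V) 1).eventually_forall_of_forall_eventually fun y hy ↦ ?_
    exact hcont.continuousAt.eventually (lt_mem_nhds ((half_lt_self hε).trans_le (hmin y hy)))
  refine ⟨ε / 2, half_pos hε, hnear.mono fun ℓ' h k y ↦ ?_⟩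
  have hzero : ε / 2 * ‖y‖ ≤ maxAffine ℓ' 0 y := by
    rcases eq_or_ne y 0 with rfl | hy
    · simp [maxAffine]
    have hunit := h (‖y‖⁻¹ • y) (by simp [norm_smul, hy])
    have := maxAffine_smul ℓ' 0 (‖y‖⁻¹ • y) (norm_nonneg y)
    rw [smul_inv_smul₀ (norm_ne_zero_iff.2 hy), smul_zero] at this
    rw [this, mul_comm]
    gcongr
  have := maxAffine_le_add_dist ℓ' 0 k y
  rw [dist_zero_left] at this
  linarith

lemma PositivelySpanning.coercive (hℓ : PositivelySpanning ℓ) :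
    ∃ ε > 0, ∀ k y, ε * ‖y‖ - ‖k‖ ≤ maxAffine ℓ k y := by
  obtain ⟨ε, hε, h⟩ := hℓ.eventually_coercive
  exact ⟨ε, hε, h.self_of_nhds⟩

end MaxAffine

section PartitionFunction

variable {V : Type*} [NormedAddCommGroup V] [NormedSpace ℝ V] [MeasurableSpace V] {ι : Type*}

/-- The exponential integral `∫ exp (-max i, (ℓ i y - k i))`, whose logarithm is the concave
potential driving the whole argument. -/
noncomputable def partitionFunction (μ : Measure V) (ℓ : ι → V →L[ℝ] ℝ) (k : ι → ℝ) : ℝ :=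
  ∫ y, Real.exp (-maxAffine ℓ k y) ∂μ

/-- The contribution of the `i`-th cell to `partitionFunction μ ℓ k`. -/
noncomputable def cellWeight (μ : Measure V) (ℓ : ι → V →L[ℝ] ℝ) (k : ι → ℝ) (i : ι) : ℝ :=
  ∫ y in cell ℓ k i, Real.exp (-maxAffine ℓ k y) ∂μ

variable [BorelSpace V] [FiniteDimensional ℝ V] (μ : Measure V) [μ.IsAddHaarMeasure]

lemma integrable_exp_neg_mul_norm {ε : ℝ} (hε : 0 < ε) :
    Integrable (fun y ↦ Real.exp (-(ε * ‖y‖))) μ := by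
  set n := finrank ℝ V + 1
  have hint : Integrable (fun y : V ↦ (1 + ‖y‖) ^ (-(n : ℝ))) μ :=
    integrable_one_add_norm (by simp [n])
  refine (hint.const_mul (Real.exp ε * n.factorial / ε ^ n)).mono' (by fun_prop)
    (.of_forall fun y ↦ ?_)
  have hpos : 0 < 1 + ‖y‖ := by positivity
  have h : (ε * (1 + ‖y‖)) ^ n / n.factorial ≤ Real.exp (ε * (1 + ‖y‖)) :=
    Real.pow_div_factorial_le_exp _ (by positivity) n
  rw [Real.norm_of_nonneg (Real.exp_nonneg _), Real.rpow_neg hpos.le, Real.rpow_natCast,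
    Real.exp_neg, inv_le_iff_one_le_mul₀ (Real.exp_pos _)]
  calc 1 = n.factorial / (ε ^ n * (1 + ‖y‖) ^ n) *
        ((ε * (1 + ‖y‖)) ^ n / n.factorial) := by rw [mul_pow]; field_simp
    _ ≤ n.factorial / (ε ^ n * (1 + ‖y‖) ^ n) * Real.exp (ε * (1 + ‖y‖)) := by gcongr
    _ = _ := by rw [mul_add, mul_one, Real.exp_add]; field_simp

lemma ae_sub_ne_sub {ℓ : ι → V →L[ℝ] ℝ} [Countable ι] (hℓ : Function.Injective ℓ) (k : ι → ℝ) :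
    ∀ᵐ y ∂μ, ∀ i j, i ≠ j → ℓ i y - k i ≠ ℓ j y - k j := by
  rw [ae_all_iff]; intro i
  rw [ae_all_iff]; intro j
  rw [eventually_imp_distrib_left]; intro hij
  set H : AffineSubspace ℝ V :=
    (AffineSubspace.mk' (k i - k j) ⊥).comap ((ℓ i - ℓ j : V →L[ℝ] ℝ) : V →ₗ[ℝ] ℝ).toAffineMap
  have hH (y : V) : y ∈ H ↔ ℓ i y - k i = ℓ j y - k j := by
    rw [sub_eq_sub_iff_sub_eq_sub]
    simp [H, AffineSubspace.mem_comap, sub_eq_zero]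
  have hne : H ≠ ⊤ := by
    intro htop
    refine hij (hℓ (ContinuousLinearMap.ext fun y ↦ ?_))
    have h0 := (hH 0).1 (htop ▸ AffineSubspace.mem_top ..)
    have hy := (hH y).1 (htop ▸ AffineSubspace.mem_top ..)
    simp only [map_zero] at h0
    linarith
  filter_upwards [measure_eq_zero_iff_ae_notMem.1 (μ.addHaar_affineSubspace H hne)] with y hy
  exact fun h ↦ hy ((hH y).2 h)

variable [Nonempty ι] {ℓ : ι → V →L[ℝ] ℝ}

lemma PositivelySpanning.integrable_exp_neg_maxAffine [Finite ι] (hℓ : PositivelySpanning ℓ)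
    (k : ι → ℝ) : Integrable (fun y ↦ Real.exp (-maxAffine ℓ k y)) μ := by
  cases nonempty_fintype ι
  obtain ⟨ε, hε, hco⟩ := hℓ.coercive
  refine ((integrable_exp_neg_mul_norm μ hε).const_mul (Real.exp ‖k‖)).mono' (by fun_prop)
    (.of_forall fun y ↦ ?_)
  rw [Real.norm_of_nonneg (Real.exp_nonneg _), ← Real.exp_add]
  gcongr
  linarith [hco k y]

theorem hasFDerivAt_partitionFunction [Fintype ι] (hℓ : PositivelySpanning ℓ)
    (hinj : Function.Injective ℓ) (k : ι → ℝ) :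
    HasFDerivAt (partitionFunction μ ℓ)
      (∑ i, cellWeight μ ℓ k i • ContinuousLinearMap.proj (R := ℝ) (φ := fun _ ↦ ℝ) i) k := by
  obtain ⟨ε, hε, hco⟩ := hℓ.coercive
  let π (i : ι) : (ι → ℝ) →L[ℝ] ℝ := ContinuousLinearMap.proj i
  let F : ι → V → ℝ := fun i ↦ (cell ℓ k i).indicator fun y ↦ Real.exp (-maxAffine ℓ k y)
  have hF (i : ι) : Integrable (fun y ↦ F i y • π i) μ :=
    ((hℓ.integrable_exp_neg_maxAffine μ k).indicator
      (isClosed_cell ℓ k i).measurableSet).smul_const (π i)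
  have hF' : Integrable (fun y ↦ ∑ i, F i y • π i) μ :=
    integrable_finsetSum (f := fun i y ↦ F i y • π i) _ fun i _ ↦ hF i
  have hderiv : ∀ᵐ y ∂μ,
      HasFDerivAt (fun k ↦ Real.exp (-maxAffine ℓ k y)) (∑ i, F i y • π i) k := by
    filter_upwards [ae_sub_ne_sub μ hinj k] with y hy
    obtain ⟨i, hi⟩ := exists_mem_cell ℓ k y
    have hlt : ∀ j ≠ i, ℓ j y - k j < ℓ i y - k i := fun j hj ↦ (hi j).lt_of_ne (hy j i hj)
    have hoff : ∀ j ≠ i, F j y = 0 := fun j hj ↦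
      indicator_of_notMem (fun h : y ∈ cell ℓ k j ↦ (hlt j hj).not_ge (h i)) _
    have hsum : ∑ j, F j y • π j = Real.exp (-maxAffine ℓ k y) • π i := by
      rw [Finset.sum_eq_single i (fun j _ hj ↦ by rw [hoff j hj, zero_smul]) (by simp)]
      exact congrArg (· • π i) (indicator_of_mem hi _)
    exact hsum ▸ hasFDerivAt_exp_neg_maxAffine hlt
  have hlip : ∀ᵐ y ∂μ, LipschitzOnWith (Real.nnabs (Real.exp (‖k‖ + 1) * Real.exp (-(ε * ‖y‖))))
      (fun k ↦ Real.exp (-maxAffine ℓ k y)) (ball k 1) :=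
    .of_forall fun y ↦ lipschitzOnWith_exp_neg_maxAffine (hco · y) k
  have hint : ∫ y, ∑ i, F i y • π i ∂μ = ∑ i, cellWeight μ ℓ k i • π i := by
    rw [integral_finsetSum (f := fun i y ↦ F i y • π i) _ fun i _ ↦ hF i]
    refine Finset.sum_congr rfl fun i _ ↦ ?_
    rw [integral_smul_const, integral_indicator (isClosed_cell ℓ k i).measurableSet, cellWeight]
  exact hint ▸ (hasFDerivAt_integral_of_dominated_loc_of_lip (ball_mem_nhds k one_pos)
    (.of_forall fun k ↦ (hℓ.integrable_exp_neg_maxAffine μ k).aestronglyMeasurable)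
    (hℓ.integrable_exp_neg_maxAffine μ k) hF'.aestronglyMeasurable hlip
    ((integrable_exp_neg_mul_norm μ hε).const_mul _) hderiv).2

end PartitionFunction

section CellWeight

variable {V : Type*} [NormedAddCommGroup V] [NormedSpace ℝ V] [MeasurableSpace V] [BorelSpace V]
  [FiniteDimensional ℝ V] (μ : Measure V) [μ.IsAddHaarMeasure] {ι : Type*} [Finite ι]
  [Nonempty ι] {ℓ : ι → V →L[ℝ] ℝ}

lemma PositivelySpanning.partitionFunction_pos (hℓ : PositivelySpanning ℓ) (k : ι → ℝ) :
    0 < partitionFunction μ ℓ k :=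
  integral_exp_pos (hℓ.integrable_exp_neg_maxAffine μ k)

lemma PositivelySpanning.cellWeight_pos_iff (hℓ : PositivelySpanning ℓ) (k : ι → ℝ) (i : ι) :
    0 < cellWeight μ ℓ k i ↔ μ (cell ℓ k i) ≠ 0 := by
  rw [cellWeight, setIntegral_pos_iff_support_of_nonneg_ae (.of_forall fun _ ↦ Real.exp_nonneg _)
    (hℓ.integrable_exp_neg_maxAffine μ k).integrableOn, pos_iff_ne_zero]
  simp [Function.support, Real.exp_ne_zero]

lemma PositivelySpanning.exists_forall_lt_of_cellWeight_pos (hℓ : PositivelySpanning ℓ)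
    (hinj : Function.Injective ℓ) {k : ι → ℝ} {i : ι} (h : 0 < cellWeight μ ℓ k i) :
    ∃ y, ∀ j ≠ i, ℓ j y - k j < ℓ i y - k i := by
  rw [hℓ.cellWeight_pos_iff μ, ← frequently_ae_mem_iff] at h
  obtain ⟨y, hy, hne⟩ := (h.and_eventually (ae_sub_ne_sub μ hinj k)).exists
  exact ⟨y, fun j hj ↦ (hy j).lt_of_ne (hne j i hj)⟩

lemma PositivelySpanning.exists_mem_cell_of_cellWeight_pos (hℓ : PositivelySpanning ℓ) (k : ι → ℝ)
    (y : V) : ∃ i, 0 < cellWeight μ ℓ k i ∧ y ∈ cell ℓ k i := by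
  set C := ⋃ i ∈ {i | 0 < cellWeight μ ℓ k i}, cell ℓ k i
  have hclosed : IsClosed C := (Set.toFinite _).isClosed_biUnion fun i _ ↦ isClosed_cell ℓ k i
  have hae : ∀ᵐ y ∂μ, y ∈ C := by
    have hnull : ∀ᵐ y ∂μ, ∀ i, ¬ 0 < cellWeight μ ℓ k i → y ∉ cell ℓ k i := by
      refine ae_all_iff.2 fun i ↦ eventually_imp_distrib_left.2 fun hi ↦ ?_
      rw [hℓ.cellWeight_pos_iff μ, not_not] at hi
      exact measure_eq_zero_iff_ae_notMem.1 hi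
    filter_upwards [hnull] with y hy
    obtain ⟨i, hi⟩ := exists_mem_cell ℓ k y
    exact mem_biUnion (show i ∈ {i | _} from by_contra fun h ↦ hy i h hi) hi
  have hy : y ∈ C := hclosed.closure_eq ▸ Measure.dense_of_ae hae y
  simpa [C] using hy

end CellWeight

section VertexFigure

variable {V : Type*} [NormedAddCommGroup V] [NormedSpace ℝ V] {ι : Type*}

/-- The functionals `ℓ i` positively span and each is exposed by some vector: they are the vertices
of a polytope with `0` in its interior. -/
structure IsVertexFamily (ℓ : ι → V →L[ℝ] ℝ) : Prop where
  positivelySpanning : PositivelySpanning ℓ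
  exists_exposing : ∀ i, ∃ e, ℓ i e = 1 ∧ ∀ j ≠ i, ℓ j e < 1

lemma IsVertexFamily.injective {ℓ : ι → V →L[ℝ] ℝ} (hℓ : IsVertexFamily ℓ) :
    Function.Injective ℓ := by
  intro i j hij
  obtain ⟨e, hi, he⟩ := hℓ.exists_exposing i
  by_contra hne
  exact (he j (Ne.symm hne)).ne (hij ▸ hi)

/-- The vertex figure at `ℓ i`: along the line `t ↦ t • e + z` with `z ∈ ker (ℓ i)`, the `i`-th
affine function overtakes the `j`-th one at the time
`vertexFigure ℓ i e j z - vertexFigureOffset ℓ i e k j`. -/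
noncomputable def vertexFigure (ℓ : ι → V →L[ℝ] ℝ) (i : ι) (e : V) (j : {j // j ≠ i}) :
    (ℓ i).ker →L[ℝ] ℝ :=
  (1 - ℓ j e)⁻¹ • (ℓ j).comp (ℓ i).ker.subtypeL

/-- The constant terms accompanying `vertexFigure`. -/
noncomputable def vertexFigureOffset (ℓ : ι → V →L[ℝ] ℝ) (i : ι) (e : V) :
    (ι → ℝ) →L[ℝ] ({j // j ≠ i} → ℝ) :=
  ContinuousLinearMap.pi fun j ↦
    (1 - ℓ j e)⁻¹ • (ContinuousLinearMap.proj (R := ℝ) (φ := fun _ ↦ ℝ) j.1 -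
      ContinuousLinearMap.proj (R := ℝ) (φ := fun _ ↦ ℝ) i)

variable {ℓ : ι → V →L[ℝ] ℝ} {i : ι} {e : V}

lemma PositivelySpanning.nonempty_ne (hℓ : PositivelySpanning ℓ) (hi : ℓ i e = 1) :
    Nonempty {j // j ≠ i} := by
  by_contra h
  have hall : ∀ j, j = i := fun j ↦ by_contra fun hj ↦ h ⟨j, hj⟩
  have := hℓ (-e) fun j ↦ by simp [hall j, hi]
  simp [neg_eq_zero.1 this] at hi

lemma PositivelySpanning.vertexFigure (hℓ : PositivelySpanning ℓ) (he : ∀ j ≠ i, ℓ j e < 1) :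
    PositivelySpanning (vertexFigure ℓ i e) := by
  refine fun z hz ↦ Subtype.ext (hℓ z fun j ↦ ?_)
  rcases eq_or_ne j i with rfl | hj
  · exact z.2.le
  · exact (mul_nonpos_iff_pos_imp_nonpos.1 (hz ⟨j, hj⟩)).1 (inv_pos.2 (sub_pos.2 (he j hj)))

lemma IsVertexFamily.vertexFigure_injective (hℓ : IsVertexFamily ℓ) (hi : ℓ i e = 1)
    (he : ∀ j ≠ i, ℓ j e < 1) : Function.Injective (vertexFigure ℓ i e) := by
  have hlt (j l : {j // j ≠ i}) (hne : j ≠ l) (h : vertexFigure ℓ i e j = vertexFigure ℓ i e l) :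
      1 - ℓ l e < 1 - ℓ j e := by
    obtain ⟨e', hj, he'⟩ := hℓ.exists_exposing j
    have hj0 := sub_pos.2 (he j j.2)
    have hl0 := sub_pos.2 (he l l.2)
    have hker : e' - ℓ i e' • e ∈ (ℓ i).ker := by simp [hi]
    have h' := congr($h ⟨_, hker⟩)
    simp only [_root_.vertexFigure, _root_.smul_apply, ContinuousLinearMap.comp_apply,
      Submodule.subtypeL_apply, map_sub, map_smul, smul_eq_mul, hj] at h'
    field_simp at h'
    have := he' i j.2.symm
    have := he' l fun h ↦ hne (Subtype.ext h.symm)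
    nlinarith
  intro j l h
  by_contra hne
  exact (hlt j l hne h).asymm (hlt l j (Ne.symm hne) h.symm)

lemma sub_sub_sub_apply_smul_add (hi : ℓ i e = 1) {j : {j // j ≠ i}} (hj : ℓ j e ≠ 1)
    (k : ι → ℝ) (z : (ℓ i).ker) (t : ℝ) :
    (ℓ i (t • e + (z : V)) - k i) - (ℓ j (t • e + (z : V)) - k j) =
      (1 - ℓ j e) * (t - (vertexFigure ℓ i e j z - vertexFigureOffset ℓ i e k j)) := by
  have hz : ℓ i z = 0 := z.2
  have hne : 1 - ℓ j e ≠ 0 := sub_ne_zero.2 hj.symm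
  simp only [vertexFigure, vertexFigureOffset, map_add, map_smul, hi, hz, smul_eq_mul,
    _root_.smul_apply, ContinuousLinearMap.comp_apply, Submodule.subtypeL_apply,
    ContinuousLinearMap.coe_pi', _root_.sub_apply, ContinuousLinearMap.proj_apply]
  field_simp
  ring

lemma smul_add_mem_cell_iff [Finite ι] [Nonempty {j // j ≠ i}] (hi : ℓ i e = 1)
    (he : ∀ j ≠ i, ℓ j e < 1) {k : ι → ℝ} {z : (ℓ i).ker} {t : ℝ} :
    t • e + (z : V) ∈ cell ℓ k i ↔
      maxAffine (vertexFigure ℓ i e) (vertexFigureOffset ℓ i e k) z ≤ t := by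
  have hj (j : {j // j ≠ i}) :
      vertexFigure ℓ i e j z - vertexFigureOffset ℓ i e k j ≤ t ↔
        ℓ j (t • e + (z : V)) - k j ≤ ℓ i (t • e + (z : V)) - k i := by
    rw [← sub_nonneg, ← mul_nonneg_iff_of_pos_left (sub_pos.2 (he j j.2)),
      ← sub_sub_sub_apply_smul_add hi (he j j.2).ne, sub_nonneg]
  rw [maxAffine_le_iff]
  simp_rw [hj]
  refine ⟨fun h j ↦ h j, fun h j ↦ ?_⟩
  rcases eq_or_ne j i with rfl | hne
  exacts [le_rfl, h ⟨j, hne⟩]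

lemma integral_indicator_cell_smul_add [Finite ι] [Nonempty {j // j ≠ i}] (hi : ℓ i e = 1)
    (he : ∀ j ≠ i, ℓ j e < 1) (k : ι → ℝ) (z : (ℓ i).ker) :
    ∫ t : ℝ, (cell ℓ k i).indicator (fun y ↦ Real.exp (-maxAffine ℓ k y)) (t • e + (z : V)) =
      Real.exp (k i) *
        Real.exp (-maxAffine (vertexFigure ℓ i e) (vertexFigureOffset ℓ i e k) z) := by
  have hray (t : ℝ) :
      (cell ℓ k i).indicator (fun y ↦ Real.exp (-maxAffine ℓ k y)) (t • e + (z : V)) =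
        (Ici (maxAffine (vertexFigure ℓ i e) (vertexFigureOffset ℓ i e k) z)).indicator
          (fun t ↦ Real.exp (k i) * Real.exp (-t)) t := by
    by_cases ht : t • e + (z : V) ∈ cell ℓ k i
    · rw [indicator_of_mem ht, indicator_of_mem (mem_Ici.2 ((smul_add_mem_cell_iff hi he).1 ht)),
        maxAffine_eq_of_mem_cell ht, ← Real.exp_add, map_add, map_smul, hi,
        show ℓ i z = 0 from z.2, smul_eq_mul]
      ring_nf
    · rw [indicator_of_notMem ht,
        indicator_of_notMem (s := Ici _) fun h ↦ ht ((smul_add_mem_cell_iff hi he).2 h)]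
  simp_rw [hray]
  rw [integral_indicator measurableSet_Ici, integral_const_mul, integral_Ici_eq_integral_Ioi,
    integral_exp_neg_Ioi]

end VertexFigure

section Slicing

variable {V : Type*} [NormedAddCommGroup V] [NormedSpace ℝ V] [FiniteDimensional ℝ V]
  [MeasurableSpace V] [BorelSpace V] (μ : Measure V) [μ.IsAddHaarMeasure]

lemma exists_measurePreserving_smul_add_ker (f : V →L[ℝ] ℝ) {e : V} (he : f e = 1) :
    ∃ ν : Measure f.ker, ν.IsAddHaarMeasure ∧
      MeasurableEmbedding (fun x : ℝ × f.ker ↦ x.1 • e + x.2) ∧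
      MeasurePreserving (fun x : ℝ × f.ker ↦ x.1 • e + x.2) (volume.prod ν) μ := by
  let Φ : (ℝ × f.ker) ≃L[ℝ] V := (ContinuousLinearEquiv.equivOfRightInverse f
    (ContinuousLinearMap.toSpanSingleton ℝ e) fun t ↦ by simp [he]).symm
  let ν : Measure f.ker := Measure.addHaar
  have : ((volume.prod ν).map Φ).IsAddHaarMeasure := Φ.isAddHaarMeasure_map _
  set c := Measure.addHaarScalarFactor μ ((volume.prod ν).map Φ)
  have hc : c ≠ 0 := (Measure.addHaarScalarFactor_pos_of_isAddHaarMeasure _ _).ne'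
  refine ⟨c • ν, .nnreal_smul _ hc, Φ.toHomeomorph.measurableEmbedding, Φ.continuous.measurable, ?_⟩
  calc _ = c • (volume.prod ν).map Φ := by
        rw [Measure.prod_smul_right, Measure.map_smul]; rfl
    _ = μ := (Measure.isAddLeftInvariant_eq_smul _ _).symm

variable {ι : Type*} [Finite ι] {ℓ : ι → V →L[ℝ] ℝ} {i : ι} {e : V}

theorem exists_cellWeight_eq_exp_mul_partitionFunction (hℓ : PositivelySpanning ℓ)
    (hi : ℓ i e = 1) (he : ∀ j ≠ i, ℓ j e < 1) :
    ∃ ν : Measure (ℓ i).ker, ν.IsAddHaarMeasure ∧ ∀ k, cellWeight μ ℓ k i =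
      Real.exp (k i) * partitionFunction ν (vertexFigure ℓ i e) (vertexFigureOffset ℓ i e k) := by
  have := hℓ.nonempty_ne hi
  have : Nonempty ι := ⟨i⟩
  obtain ⟨ν, hν, hemb, hpres⟩ := exists_measurePreserving_smul_add_ker μ (ℓ i) hi
  refine ⟨ν, hν, fun k ↦ ?_⟩
  set F : V → ℝ := (cell ℓ k i).indicator fun y ↦ Real.exp (-maxAffine ℓ k y) with hFdef
  have hmeas := (isClosed_cell ℓ k i).measurableSet
  have hF : Integrable F μ := (hℓ.integrable_exp_neg_maxAffine μ k).indicator hmeas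
  calc cellWeight μ ℓ k i = ∫ y, F y ∂μ := (integral_indicator hmeas).symm
    _ = ∫ x : ℝ × (ℓ i).ker, F (x.1 • e + x.2) ∂(volume.prod ν) := (hpres.integral_comp hemb F).symm
    _ = ∫ z : (ℓ i).ker, (∫ t : ℝ, F (t • e + (z : V))) ∂ν :=
      integral_prod_symm _ (hpres.integrable_comp_of_integrable hF)
    _ = _ := by
      simp_rw [hFdef, integral_indicator_cell_smul_add hi he, integral_const_mul, partitionFunction]

end Slicing

section Invariance

variable {V : Type*} [NormedAddCommGroup V] [NormedSpace ℝ V] [MeasurableSpace V] (μ : Measure V)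
  {ι : Type*} (ℓ : ι → V →L[ℝ] ℝ) (k : ι → ℝ)

lemma cellWeight_add_const [Finite ι] (c : ℝ) :
    cellWeight μ ℓ (fun i ↦ k i + c) = Real.exp c • cellWeight μ ℓ k := by
  ext i
  have : Nonempty ι := ⟨i⟩
  have hcell : cell ℓ (fun i ↦ k i + c) i = cell ℓ k i := by
    simp [cell, ← sub_sub]
  simp only [cellWeight, hcell, Pi.smul_apply, smul_eq_mul, maxAffine_add_const, neg_sub,
    sub_eq_add_neg c, Real.exp_add, integral_const_mul]

variable [BorelSpace V] [μ.IsAddLeftInvariant]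

lemma partitionFunction_translate (z : V) :
    partitionFunction μ ℓ (fun i ↦ k i + ℓ i z) = partitionFunction μ ℓ k := by
  rw [partitionFunction, ← integral_add_right_eq_self _ z]
  simp only [maxAffine_translate, partitionFunction]

lemma cellWeight_translate (z : V) :
    cellWeight μ ℓ (fun i ↦ k i + ℓ i z) = cellWeight μ ℓ k := by
  ext i
  have hcell : (· + z) ⁻¹' cell ℓ (fun i ↦ k i + ℓ i z) i = cell ℓ k i := by
    ext y
    simp only [cell, mem_preimage, mem_ofPred_eq, map_add, add_sub_add_right_eq_sub]
  rw [cellWeight, ← (measurePreserving_add_right μ z).setIntegral_preimage_emb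
    (measurableEmbedding_addRight z), hcell]
  simp only [maxAffine_translate, cellWeight]

end Invariance

section WeightJacobian

variable {V : Type*} [NormedAddCommGroup V] [NormedSpace ℝ V] [MeasurableSpace V] (μ : Measure V)
  {ι : Type*}

lemma cellWeight_nonneg (ℓ : ι → V →L[ℝ] ℝ) (k : ι → ℝ) (i : ι) : 0 ≤ cellWeight μ ℓ k i :=
  integral_nonneg fun _ ↦ Real.exp_nonneg _

variable [Fintype ι] [DecidableEq ι]

/-- The Jacobian of the cell weights as functions of the offsets `k`; by
`hasFDerivAt_partitionFunction` it is the Hessian of the partition function. -/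
noncomputable def weightJacobian (ℓ : ι → V →L[ℝ] ℝ) (k : ι → ℝ) : Matrix ι ι ℝ :=
  LinearMap.toMatrix' (fderiv ℝ (cellWeight μ ℓ) k).toLinearMap

lemma weightJacobian_mulVec (ℓ : ι → V →L[ℝ] ℝ) (k v : ι → ℝ) :
    weightJacobian μ ℓ k *ᵥ v = fderiv ℝ (cellWeight μ ℓ) k v :=
  LinearMap.toMatrix'_mulVec _ _

variable [BorelSpace V] [FiniteDimensional ℝ V] [μ.IsAddHaarMeasure] {ℓ : ι → V →L[ℝ] ℝ}

namespace IsVertexFamily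

variable (hℓ : IsVertexFamily ℓ)
include hℓ

omit [Fintype ι] [DecidableEq ι] in
lemma cellWeight_pos [Finite ι] (k : ι → ℝ) (i : ι) : 0 < cellWeight μ ℓ k i := by
  obtain ⟨e, hi, he⟩ := hℓ.exists_exposing i
  have := hℓ.positivelySpanning.nonempty_ne hi
  obtain ⟨ν, hν, hw⟩ :=
    exists_cellWeight_eq_exp_mul_partitionFunction μ hℓ.positivelySpanning hi he
  rw [hw]
  exact mul_pos (Real.exp_pos _) ((hℓ.positivelySpanning.vertexFigure he).partitionFunction_pos ν _)

lemma exists_hasFDerivAt_cellWeight {i : ι} {e : V} (hi : ℓ i e = 1) (he : ∀ j ≠ i, ℓ j e < 1) :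
    ∃ ν : Measure (ℓ i).ker, ν.IsAddHaarMeasure ∧ ∀ k, ∃ w' : (ι → ℝ) →L[ℝ] ℝ,
      HasFDerivAt (cellWeight μ ℓ · i) w' k ∧ ∀ v, v i = 0 → w' v =
        Real.exp (k i) * ∑ j : {j // j ≠ i}, cellWeight ν (vertexFigure ℓ i e)
          (vertexFigureOffset ℓ i e k) j * ((1 - ℓ j e)⁻¹ * v j) := by
  have := hℓ.positivelySpanning.nonempty_ne hi
  obtain ⟨ν, hν, hw⟩ :=
    exists_cellWeight_eq_exp_mul_partitionFunction μ hℓ.positivelySpanning hi he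
  refine ⟨ν, hν, fun k ↦ ?_⟩
  have hexp := (ContinuousLinearMap.proj (R := ℝ) (φ := fun _ ↦ ℝ) i).hasFDerivAt (x := k).exp
  have hZ := (hasFDerivAt_partitionFunction ν (hℓ.positivelySpanning.vertexFigure he)
    (hℓ.vertexFigure_injective hi he) _).comp k (vertexFigureOffset ℓ i e).hasFDerivAt
  simp_rw [hw]
  refine ⟨_, hexp.mul hZ, fun v hv ↦ ?_⟩
  simp [vertexFigureOffset, hv]

omit [Fintype ι] [DecidableEq ι] in
lemma differentiable_cellWeight [Finite ι] : Differentiable ℝ (cellWeight μ ℓ) := by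
  classical
  cases nonempty_fintype ι
  refine differentiable_pi.2 fun i k ↦ ?_
  obtain ⟨e, hi, he⟩ := hℓ.exists_exposing i
  obtain ⟨_, _, h⟩ := hℓ.exists_hasFDerivAt_cellWeight μ hi he
  exact (h k).choose_spec.1.differentiableAt

lemma exists_weightJacobian_apply_eq {i : ι} {e : V} (hi : ℓ i e = 1) (he : ∀ j ≠ i, ℓ j e < 1) :
    ∃ ν : Measure (ℓ i).ker, ν.IsAddHaarMeasure ∧ ∀ k, ∀ j : {j // j ≠ i},
      weightJacobian μ ℓ k i j = Real.exp (k i) * (cellWeight ν (vertexFigure ℓ i e)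
          (vertexFigureOffset ℓ i e k) j * (1 - ℓ j e)⁻¹) := by
  obtain ⟨ν, hν, h⟩ := hℓ.exists_hasFDerivAt_cellWeight μ hi he
  refine ⟨ν, hν, fun k j ↦ ?_⟩
  obtain ⟨w', hw', hv⟩ := h k
  have hderiv := hasFDerivAt_pi'.1 (hℓ.differentiable_cellWeight μ k).hasFDerivAt i
  have happ : weightJacobian μ ℓ k i j = w' (Pi.single j.1 1) := by
    rw [hw'.unique hderiv, ContinuousLinearMap.comp_apply, ← weightJacobian_mulVec,
      Matrix.mulVec_single_one]
    rfl
  rw [happ, hv _ (by simp [j.2.symm]), Finset.sum_eq_single j (fun l _ hl ↦ ?_) (by simp)]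
  · simp
  · simp [Subtype.coe_inj, hl]

lemma weightJacobian_nonneg (k : ι → ℝ) {i j : ι} (hij : i ≠ j) : 0 ≤ weightJacobian μ ℓ k i j := by
  obtain ⟨e, hi, he⟩ := hℓ.exists_exposing i
  obtain ⟨ν, _, h⟩ := hℓ.exists_weightJacobian_apply_eq μ hi he
  rw [h k ⟨j, hij.symm⟩]
  have := cellWeight_nonneg ν (vertexFigure ℓ i e) (vertexFigureOffset ℓ i e k) ⟨j, hij.symm⟩
  have := sub_pos.2 (he j hij.symm)
  positivity

lemma isSymm_weightJacobian (k : ι → ℝ) : (weightJacobian μ ℓ k).IsSymm := by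
  cases isEmpty_or_nonempty ι
  · exact Subsingleton.elim _ _
  let π (i : ι) : (ι → ℝ) →L[ℝ] ℝ := ContinuousLinearMap.proj i
  let L : (ι → ℝ) →L[ℝ] (ι → ℝ) →L[ℝ] ℝ := ∑ i, (π i).smulRight (π i)
  have hgrad (b : ι → ℝ) : HasFDerivAt (partitionFunction μ ℓ) (L (cellWeight μ ℓ b)) b := by
    simpa [L, π] using hasFDerivAt_partitionFunction μ hℓ.positivelySpanning hℓ.injective b
  have hsymm := second_derivative_symmetric hgrad
    (L.hasFDerivAt.comp k (hℓ.differentiable_cellWeight μ k).hasFDerivAt)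
  ext i j
  simpa [L, π, ← weightJacobian_mulVec, Pi.single_apply] using hsymm (Pi.single i 1) (Pi.single j 1)

lemma weightJacobian_mulVec_one (k : ι → ℝ) : weightJacobian μ ℓ k *ᵥ 1 = cellWeight μ ℓ k := by
  have hline := (hℓ.differentiable_cellWeight μ k).hasFDerivAt.hasLineDerivAt 1
  have hexp : HasLineDerivAt ℝ (cellWeight μ ℓ) (cellWeight μ ℓ k) k 1 := by
    have h := (Real.hasDerivAt_exp 0).smul_const (cellWeight μ ℓ k)
    rw [Real.exp_zero, one_smul] at h
    refine h.congr_of_eventuallyEq (.of_forall fun t ↦ ?_)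
    dsimp only
    rw [← cellWeight_add_const]
    congr
    ext i
    simp
  rw [weightJacobian_mulVec, hline.unique hexp]

lemma weightJacobian_mulVec_apply (k : ι → ℝ) (z : V) :
    weightJacobian μ ℓ k *ᵥ (ℓ · z) = 0 := by
  have hline := (hℓ.differentiable_cellWeight μ k).hasFDerivAt.hasLineDerivAt (ℓ · z)
  have hconst : HasLineDerivAt ℝ (cellWeight μ ℓ) 0 k (ℓ · z) := by
    refine (hasDerivAt_const 0 (cellWeight μ ℓ k)).congr_of_eventuallyEq (.of_forall fun t ↦ ?_)
    dsimp only
    rw [← cellWeight_translate μ ℓ k (t • z)]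
    congr
    ext i
    simp
  rw [weightJacobian_mulVec, hline.unique hconst]

omit [DecidableEq ι] in
lemma sum_cellWeight_mul_apply (k : ι → ℝ) (z : V) : ∑ i, cellWeight μ ℓ k i * ℓ i z = 0 := by
  cases isEmpty_or_nonempty ι
  · simp
  have hline := (hasFDerivAt_partitionFunction μ hℓ.positivelySpanning hℓ.injective
    k).hasLineDerivAt (ℓ · z)
  have hconst : HasLineDerivAt ℝ (partitionFunction μ ℓ) 0 k (ℓ · z) := by
    refine (hasDerivAt_const 0 (partitionFunction μ ℓ k)).congr_of_eventuallyEq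
      (.of_forall fun t ↦ ?_)
    dsimp only
    rw [← partitionFunction_translate μ ℓ k (t • z)]
    congr
    ext i
    simp
  simpa using hline.unique hconst

lemma exists_forall_lt_of_weightJacobian_pos {k : ι → ℝ} {i j : ι} (hij : i ≠ j)
    (h : 0 < weightJacobian μ ℓ k i j) :
    ∃ y, ℓ j y - k j = ℓ i y - k i ∧ ∀ l, l ≠ i → l ≠ j → ℓ l y - k l < ℓ i y - k i := by
  obtain ⟨e, hi, he⟩ := hℓ.exists_exposing i
  have := hℓ.positivelySpanning.nonempty_ne hi
  obtain ⟨ν, _, hM⟩ := hℓ.exists_weightJacobian_apply_eq μ hi he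
  rw [hM k ⟨j, hij.symm⟩] at h
  have hw := pos_of_mul_pos_left (pos_of_mul_pos_right h (Real.exp_nonneg _))
    (inv_nonneg.2 (sub_nonneg.2 (he j hij.symm).le))
  obtain ⟨z, hz⟩ := (hℓ.positivelySpanning.vertexFigure he).exists_forall_lt_of_cellWeight_pos ν
    (hℓ.vertexFigure_injective hi he) hw
  set t := vertexFigure ℓ i e ⟨j, hij.symm⟩ z - vertexFigureOffset ℓ i e k ⟨j, hij.symm⟩
  have hgap (l : {l // l ≠ i}) := sub_sub_sub_apply_smul_add hi (he l l.2).ne k z t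
  refine ⟨t • e + z, ?_, fun l hli hlj ↦ ?_⟩
  · have := hgap ⟨j, hij.symm⟩
    rw [sub_self, mul_zero, sub_eq_zero] at this
    exact this.symm
  · have := mul_pos (sub_pos.2 (he l hli)) (sub_pos.2 (hz ⟨l, hli⟩ (by simpa using hlj)))
    exact sub_pos.1 (hgap ⟨l, hli⟩ ▸ this)

lemma eq_zero_of_weightJacobian_pos {i : ι} {y : V} (hi : ℓ i y = 0)
    (h : ∀ j ≠ i, 0 < weightJacobian μ ℓ 0 i j → ℓ j y = 0) : y = 0 := by
  obtain ⟨e, hei, he⟩ := hℓ.exists_exposing i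
  have := hℓ.positivelySpanning.nonempty_ne hei
  obtain ⟨ν, _, hM⟩ := hℓ.exists_weightJacobian_apply_eq μ hei he
  have hspan := hℓ.positivelySpanning.vertexFigure he
  obtain ⟨j, hw, hmem⟩ := hspan.exists_mem_cell_of_cellWeight_pos ν
    (vertexFigureOffset ℓ i e 0) ⟨y, hi⟩
  have hj : ℓ j y = 0 := h j j.2 <| by
    rw [hM]
    exact mul_pos (Real.exp_pos _) (mul_pos hw (inv_pos.2 (sub_pos.2 (he j j.2))))
  refine congrArg Subtype.val (hspan ⟨y, hi⟩ fun l ↦ ?_)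
  simpa [vertexFigure, hj] using hmem l

end IsVertexFamily

end WeightJacobian

section LogConcavity

lemma MidpointPrekopaLeindler.integral_mul_integral_le {V : Type*} [AddCommGroup V] [Module ℝ V]
    [MeasurableSpace V] {μ : Measure V} (hμ : MidpointPrekopaLeindler μ) {f g m : V → ℝ}
    (hf : Measurable f) (hg : Measurable g) (hm : Measurable m) (hf0 : 0 ≤ f) (hg0 : 0 ≤ g)
    (hm0 : 0 ≤ m) (hfi : Integrable f μ) (hgi : Integrable g μ) (hmi : Integrable m μ)
    (h : ∀ x y, f x * g y ≤ m (midpoint ℝ x y) ^ 2) :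
    (∫ y, f y ∂μ) * ∫ y, g y ∂μ ≤ (∫ y, m y ∂μ) ^ 2 := by
  have hfI := integral_nonneg (μ := μ) hf0
  have hmI := integral_nonneg (μ := μ) hm0
  rw [← ENNReal.ofReal_le_ofReal_iff (by positivity), ENNReal.ofReal_mul hfI,
    ENNReal.ofReal_pow hmI, ofReal_integral_eq_lintegral_ofReal hfi (.of_forall hf0),
    ofReal_integral_eq_lintegral_ofReal hgi (.of_forall hg0),
    ofReal_integral_eq_lintegral_ofReal hmi (.of_forall hm0)]
  refine hμ hf.ennreal_ofReal hg.ennreal_ofReal hm.ennreal_ofReal fun x y ↦ ?_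
  rw [← ENNReal.ofReal_mul (hf0 x), ← ENNReal.ofReal_pow (hm0 _)]
  exact ENNReal.ofReal_le_ofReal (h x y)

lemma max_sub_exp_mul_max_sub_exp_le {a a' r r' c s : ℝ} (hc : 2 * c ≤ a + a')
    (hs : 2 * s = r + r') :
    max (Real.exp (-a) - Real.exp (-r)) 0 * max (Real.exp (-a') - Real.exp (-r')) 0 ≤
      max (Real.exp (-c) - Real.exp (-s)) 0 ^ 2 := by
  rcases le_or_gt r a with hr | hr
  · rw [max_eq_right (a := _ - Real.exp (-r)) (by simpa using hr), zero_mul]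
    positivity
  rcases le_or_gt r' a' with hr' | hr'
  · rw [max_eq_right (a := _ - Real.exp (-r')) (by simpa using hr'), mul_zero]
    positivity
  have hsq (x : ℝ) : Real.exp (-x) = Real.exp (-x / 2) ^ 2 := by
    rw [← Real.exp_nat_mul]; push_cast; ring_nf
  have hsplit : Real.exp (-s) = Real.exp (-r / 2) * Real.exp (-r' / 2) := by
    rw [← Real.exp_add]; congr 1; linarith
  have hlt : Real.exp (-s) < Real.exp (-a / 2) * Real.exp (-a' / 2) := by
    rw [← Real.exp_add, Real.exp_lt_exp]; linarith
  calc max (Real.exp (-a) - Real.exp (-r)) 0 * max (Real.exp (-a') - Real.exp (-r')) 0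
      = (Real.exp (-a / 2) ^ 2 - Real.exp (-r / 2) ^ 2) *
          (Real.exp (-a' / 2) ^ 2 - Real.exp (-r' / 2) ^ 2) := by
        rw [max_eq_left (by simpa using hr.le), max_eq_left (by simpa using hr'.le), hsq a, hsq r,
          hsq a', hsq r']
    _ ≤ (Real.exp (-a / 2) * Real.exp (-a' / 2) - Real.exp (-s)) ^ 2 := by
        rw [hsplit]
        nlinarith [sq_nonneg (Real.exp (-a / 2) * Real.exp (-r' / 2) -
          Real.exp (-r / 2) * Real.exp (-a' / 2))]
    _ ≤ max (Real.exp (-c) - Real.exp (-s)) 0 ^ 2 := by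
        refine pow_le_pow_left₀ (sub_pos.2 hlt).le (le_max_of_le_left ?_) 2
        rw [← Real.exp_add]
        gcongr
        linarith

variable {V : Type*} [NormedAddCommGroup V] [NormedSpace ℝ V] [MeasurableSpace V] [BorelSpace V]
  [FiniteDimensional ℝ V] (μ : Measure V) [μ.IsAddHaarMeasure] {ι : Type*} [Finite ι]
  {ℓ : ι → V →L[ℝ] ℝ}

namespace PositivelySpanning

variable (hℓ : PositivelySpanning ℓ)
include hℓ

theorem partitionFunction_mul_le [Nonempty ι] (k k' : ι → ℝ) :
    partitionFunction μ ℓ k * partitionFunction μ ℓ k' ≤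
      partitionFunction μ ℓ (midpoint ℝ k k') ^ 2 := by
  refine (MidpointPrekopaLeindler.of_isAddHaarMeasure μ).integral_mul_integral_le
    (by fun_prop) (by fun_prop) (by fun_prop) (fun _ ↦ Real.exp_nonneg _)
    (fun _ ↦ Real.exp_nonneg _) (fun _ ↦ Real.exp_nonneg _)
    (hℓ.integrable_exp_neg_maxAffine μ _) (hℓ.integrable_exp_neg_maxAffine μ _)
    (hℓ.integrable_exp_neg_maxAffine μ _) fun x y ↦ ?_
  rw [← Real.exp_add, ← Real.exp_nat_mul, Real.exp_le_exp]
  have := two_mul_maxAffine_midpoint_le ℓ k k' x y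
  push_cast
  linarith

variable [DecidableEq ι]

lemma partitionFunction_sub_update {k : ι → ℝ} {i : ι} {s : ℝ} (hs : s ≤ k i) :
    partitionFunction μ ℓ k - partitionFunction μ ℓ (Function.update k i s) =
      ∫ y, max (Real.exp (-maxAffine ℓ k y) - Real.exp (-(ℓ i y - s))) 0 ∂μ := by
  have : Nonempty ι := ⟨i⟩
  rw [partitionFunction, partitionFunction, ← integral_sub
    (hℓ.integrable_exp_neg_maxAffine μ _) (hℓ.integrable_exp_neg_maxAffine μ _)]
  simp_rw [exp_neg_maxAffine_sub_update hs]

lemma partitionFunction_update_le {k : ι → ℝ} {i : ι} {s : ℝ} (hs : s ≤ k i) :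
    partitionFunction μ ℓ (Function.update k i s) ≤ partitionFunction μ ℓ k := by
  rw [← sub_nonneg, hℓ.partitionFunction_sub_update μ hs]
  exact integral_nonneg fun _ ↦ le_max_right _ _

theorem partitionFunction_sub_update_mul_le {k k' : ι → ℝ} {i : ι} {s s' : ℝ}
    (hs : s ≤ k i) (hs' : s' ≤ k' i) :
    (partitionFunction μ ℓ k - partitionFunction μ ℓ (Function.update k i s)) *
        (partitionFunction μ ℓ k' - partitionFunction μ ℓ (Function.update k' i s')) ≤
      (partitionFunction μ ℓ (midpoint ℝ k k') -
        partitionFunction μ ℓ (Function.update (midpoint ℝ k k') i (midpoint ℝ s s'))) ^ 2 := by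
  have : Nonempty ι := ⟨i⟩
  have hmid : midpoint ℝ s s' ≤ midpoint ℝ k k' i := by
    rw [pi_midpoint_apply]
    exact midpoint_le_midpoint hs hs'
  have hint {k : ι → ℝ} {s : ℝ} (hs : s ≤ k i) :
      Integrable (fun y ↦ max (Real.exp (-maxAffine ℓ k y) - Real.exp (-(ℓ i y - s))) 0) μ := by
    simp_rw [← exp_neg_maxAffine_sub_update hs]
    exact (hℓ.integrable_exp_neg_maxAffine μ _).sub (hℓ.integrable_exp_neg_maxAffine μ _)
  rw [hℓ.partitionFunction_sub_update μ hs, hℓ.partitionFunction_sub_update μ hs',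
    hℓ.partitionFunction_sub_update μ hmid]
  refine (MidpointPrekopaLeindler.of_isAddHaarMeasure μ).integral_mul_integral_le
    (by fun_prop) (by fun_prop) (by fun_prop) (fun _ ↦ le_max_right _ _)
    (fun _ ↦ le_max_right _ _) (fun _ ↦ le_max_right _ _) (hint hs) (hint hs') (hint hmid)
    fun x y ↦ max_sub_exp_mul_max_sub_exp_le (two_mul_maxAffine_midpoint_le ℓ k k' x y) ?_
  simp only [midpoint_eq_smul_add, map_smul, map_add, smul_eq_mul, invOf_eq_inv]
  ring

end PositivelySpanning

lemma nonpos_of_mul_neg_le_sq {h h' : ℝ → ℝ} {c : ℝ} (hh : ∀ᶠ t in 𝓝 0, HasDerivAt h (h' t) t)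
    (hh' : HasDerivAt h' c 0) (hcrit : h' 0 = 0) (h0 : 0 ≤ h 0)
    (hmid : ∀ᶠ t in 𝓝 0, h t * h (-t) ≤ h 0 ^ 2) : c ≤ 0 := by
  by_contra! hc
  set g : ℝ → ℝ := fun t ↦ h t - c / 4 * t ^ 2
  have hg : ∀ᶠ t in 𝓝 0, HasDerivAt g (h' t - c / 2 * t) t := by
    filter_upwards [hh] with t ht
    refine (ht.sub ((hasDerivAt_pow 2 t).const_mul (c / 4))).congr_deriv ?_
    push_cast; ring
  have hderiv : deriv g =ᶠ[𝓝 0] fun t ↦ h' t - c / 2 * t := hg.mono fun t ht ↦ ht.deriv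
  have hg' : HasDerivAt (deriv g) (c / 2) 0 := by
    refine ((hh'.sub ((hasDerivAt_id 0).const_mul (c / 2))).congr_deriv ?_).congr_of_eventuallyEq
      hderiv
    ring
  have hmin : ∀ᶠ t in 𝓝 0, g 0 ≤ g t :=
    isLocalMin_of_deriv_deriv_pos (by rw [hg'.deriv]; positivity)
      (by rw [hderiv.eq_of_nhds, hcrit]; simp) hg.self_of_nhds.continuousAt
  have hneg : Tendsto (fun t : ℝ ↦ -t) (𝓝 0) (𝓝 0) := by
    simpa using (continuous_neg (G := ℝ)).tendsto 0
  have hev := ((hmin.and (hneg.eventually hmin)).and hmid).filter_mono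
    (nhdsWithin_le_nhds (s := {0}ᶜ))
  obtain ⟨t, ⟨⟨hpos, hneg⟩, hle⟩, ht⟩ := (hev.and self_mem_nhdsWithin).exists
  have ht2 : 0 < c / 4 * t ^ 2 :=
    mul_pos (by positivity) (sq_pos_of_ne_zero (mem_compl_singleton_iff.1 ht))
  simp only [g] at hpos hneg
  nlinarith

end LogConcavity

section Asymptotics

variable {V : Type*} [NormedAddCommGroup V] [NormedSpace ℝ V] [MeasurableSpace V] [BorelSpace V]
  [FiniteDimensional ℝ V] (μ : Measure V) [μ.IsAddHaarMeasure] {ι : Type*} [Finite ι]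
  [Nonempty ι] {ℓ : ι → V →L[ℝ] ℝ}

namespace PositivelySpanning

variable (hℓ : PositivelySpanning ℓ)
include hℓ

lemma partitionFunction_smul_le {k : ι → ℝ} {m t : ℝ} (hm : ∀ y, m ≤ maxAffine ℓ k y)
    (ht : 1 ≤ t) :
    partitionFunction μ ℓ (t • k) ≤
      t ^ finrank ℝ V * Real.exp (-(m * (t - 1))) * partitionFunction μ ℓ k := by
  have ht0 : 0 < t := by positivity
  calc partitionFunction μ ℓ (t • k)
      = t ^ finrank ℝ V * ∫ y, Real.exp (-maxAffine ℓ (t • k) (t • y)) ∂μ := by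
        rw [Measure.integral_comp_smul μ (fun y ↦ Real.exp (-maxAffine ℓ (t • k) y)) t,
          partitionFunction, abs_of_pos (by positivity), smul_eq_mul,
          mul_inv_cancel_left₀ (by positivity)]
    _ ≤ t ^ finrank ℝ V * ∫ y, Real.exp (-(m * (t - 1))) * Real.exp (-maxAffine ℓ k y) ∂μ := by
        refine mul_le_mul_of_nonneg_left (integral_mono_of_nonneg
          (.of_forall fun _ ↦ Real.exp_nonneg _)
          ((hℓ.integrable_exp_neg_maxAffine μ k).const_mul _) (.of_forall fun y ↦ ?_))
          (by positivity)
        dsimp only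
        rw [maxAffine_smul ℓ k y ht0.le, ← Real.exp_add]
        gcongr
        nlinarith [hm y]
    _ = _ := by rw [integral_const_mul, partitionFunction, mul_assoc]

lemma exists_le_apply_of_partitionFunction_smul_eq {k : ι → ℝ}
    (hk : ∀ t : ℝ, partitionFunction μ ℓ (t • k) = partitionFunction μ ℓ 0) :
    ∃ y, ∀ i, ℓ i y ≤ k i := by
  cases nonempty_fintype ι
  obtain ⟨ε, hε, hco⟩ := hℓ.coercive
  obtain ⟨y, hy⟩ : ∃ y, ∀ z, maxAffine ℓ k y ≤ maxAffine ℓ k z := by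
    refine (show Continuous fun y ↦ maxAffine ℓ k y by fun_prop).exists_forall_le ?_
    refine tendsto_atTop_mono (hco k) (tendsto_atTop_add_const_right _ _ ?_)
    exact (tendsto_norm_cocompact_atTop (E := V)).const_mul_atTop hε
  refine ⟨y, fun i ↦ sub_nonpos.1 ((le_maxAffine ℓ k y i).trans ?_)⟩
  by_contra! hm
  set n := finrank ℝ V
  set m := maxAffine ℓ k y
  have hlim : Tendsto (fun t : ℝ ↦ t ^ n * Real.exp (-(m * (t - 1))) * partitionFunction μ ℓ k)
      atTop (𝓝 0) := by
    have := ((tendsto_rpow_mul_exp_neg_mul_atTop_nhds_zero n m hm).const_mul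
      (Real.exp m * partitionFunction μ ℓ k))
    rw [mul_zero] at this
    refine this.congr fun t ↦ ?_
    rw [Real.rpow_natCast, mul_sub, mul_one, neg_sub, sub_eq_add_neg, Real.exp_add, neg_mul]
    ring
  exact (hℓ.partitionFunction_pos μ 0).not_ge
    (ge_of_tendsto hlim ((eventually_ge_atTop 1).mono fun t ht ↦
      hk t ▸ hℓ.partitionFunction_smul_le μ hy ht))

end PositivelySpanning

end Asymptotics

section Kernel

variable {V : Type*} [NormedAddCommGroup V] [NormedSpace ℝ V] [MeasurableSpace V] [BorelSpace V]
  [FiniteDimensional ℝ V] (μ : Measure V) [μ.IsAddHaarMeasure] {ι : Type*} [Fintype ι]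
  [DecidableEq ι] [Nonempty ι] {ℓ : ι → V →L[ℝ] ℝ}

lemma midpoint_add_smul_add_neg_smul {E : Type*} [AddCommGroup E] [Module ℝ E] (b k : E) (t : ℝ) :
    midpoint ℝ (b + t • k) (b + (-t) • k) = b := by
  rw [neg_smul, ← sub_eq_add_neg, midpoint_add_sub]

namespace IsVertexFamily

variable (hℓ : IsVertexFamily ℓ)
include hℓ

omit [DecidableEq ι] in
lemma hasDerivAt_partitionFunction_add_smul (b k : ι → ℝ) (t : ℝ) :
    HasDerivAt (fun t ↦ partitionFunction μ ℓ (b + t • k)) (cellWeight μ ℓ (b + t • k) ⬝ᵥ k) t := by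
  have hline : HasDerivAt (fun t : ℝ ↦ b + t • k) k t := by
    simpa using ((hasDerivAt_id t).smul_const k).const_add b
  refine ((hasFDerivAt_partitionFunction μ hℓ.positivelySpanning hℓ.injective
    (b + t • k)).comp_hasDerivAt t hline).congr_deriv ?_
  simp [dotProduct]

omit [Nonempty ι] in
lemma hasDerivAt_cellWeight_add_smul (b k : ι → ℝ) (t : ℝ) :
    HasDerivAt (fun t ↦ cellWeight μ ℓ (b + t • k)) (weightJacobian μ ℓ (b + t • k) *ᵥ k) t := by
  have hline : HasDerivAt (fun t : ℝ ↦ b + t • k) k t := by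
    simpa using ((hasDerivAt_id t).smul_const k).const_add b
  rw [weightJacobian_mulVec]
  exact (hℓ.differentiable_cellWeight μ _).hasFDerivAt.comp_hasDerivAt t hline

omit [Nonempty ι] in
lemma hasDerivAt_cellWeight_dotProduct (b k u : ι → ℝ) (t : ℝ) :
    HasDerivAt (fun t ↦ cellWeight μ ℓ (b + t • k) ⬝ᵥ u)
      ((weightJacobian μ ℓ (b + t • k) *ᵥ k) ⬝ᵥ u) t :=
  .fun_sum fun i _ ↦ (hasDerivAt_pi.1 (hℓ.hasDerivAt_cellWeight_add_smul μ b k t) i).mul_const (u i)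

omit [Nonempty ι] in
lemma weightJacobian_mulVec_dotProduct_comm (b u v : ι → ℝ) :
    (weightJacobian μ ℓ b *ᵥ u) ⬝ᵥ v = (weightJacobian μ ℓ b *ᵥ v) ⬝ᵥ u := by
  rw [dotProduct_comm, Matrix.dotProduct_mulVec, ← Matrix.mulVec_transpose,
    (hℓ.isSymm_weightJacobian μ b).eq]

lemma dotProduct_weightJacobian_mulVec_nonpos {b k : ι → ℝ} (hk : cellWeight μ ℓ b ⬝ᵥ k = 0) :
    (weightJacobian μ ℓ b *ᵥ k) ⬝ᵥ k ≤ 0 := by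
  refine nonpos_of_mul_neg_le_sq
    (.of_forall fun t ↦ hℓ.hasDerivAt_partitionFunction_add_smul μ b k t)
    (by simpa using hℓ.hasDerivAt_cellWeight_dotProduct μ b k k 0) (by simpa using hk)
    (integral_nonneg fun _ ↦ Real.exp_nonneg _) (.of_forall fun t ↦ ?_)
  have := hℓ.positivelySpanning.partitionFunction_mul_le μ (b + t • k) (b + (-t) • k)
  rw [midpoint_add_smul_add_neg_smul] at this
  rwa [zero_smul, add_zero]

lemma weightJacobian_mulVec_eq_zero {b k : ι → ℝ} (hk : cellWeight μ ℓ b ⬝ᵥ k = 0)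
    (hkk : (weightJacobian μ ℓ b *ᵥ k) ⬝ᵥ k = 0) : weightJacobian μ ℓ b *ᵥ k = 0 := by
  set M := weightJacobian μ ℓ b
  set w := cellWeight μ ℓ b
  have hsymm (u v : ι → ℝ) : (M *ᵥ u) ⬝ᵥ v = (M *ᵥ v) ⬝ᵥ u :=
    hℓ.weightJacobian_mulVec_dotProduct_comm μ b u v
  have hone : M *ᵥ 1 = w := hℓ.weightJacobian_mulVec_one μ b
  have horth (u : ι → ℝ) (hu : w ⬝ᵥ u = 0) : (M *ᵥ k) ⬝ᵥ u = 0 := by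
    have hquad (s : ℝ) : (M *ᵥ u) ⬝ᵥ u * (s * s) + 2 * ((M *ᵥ k) ⬝ᵥ u) * s + 0 ≤ 0 := by
      have : (M *ᵥ (k + s • u)) ⬝ᵥ (k + s • u) ≤ 0 :=
        hℓ.dotProduct_weightJacobian_mulVec_nonpos μ (by simp [w, hk, hu])
      simp only [Matrix.mulVec_add, Matrix.mulVec_smul, dotProduct_add, add_dotProduct,
        smul_dotProduct, dotProduct_smul, smul_eq_mul, hkk, hsymm u k] at this
      linarith
    have := discrim_le_zero_of_nonpos hquad
    simp only [discrim] at this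
    nlinarith
  have hw : 0 < w ⬝ᵥ 1 := by
    rw [dotProduct_one]
    exact Finset.sum_pos (fun i _ ↦ hℓ.cellWeight_pos μ b i) Finset.univ_nonempty
  refine dotProduct_eq_zero _ fun u ↦ ?_
  have hu := horth (u - (w ⬝ᵥ u / w ⬝ᵥ 1) • 1) (by
    rw [dotProduct_sub, dotProduct_smul, smul_eq_mul, div_mul_cancel₀ _ hw.ne', sub_self])
  rwa [dotProduct_sub, dotProduct_smul, hsymm k 1, hone, hk, smul_zero, sub_zero] at hu

lemma weightJacobian_update_mulVec_eq_zero {b k : ι → ℝ} {i : ι} {x β : ℝ} (hx : x < b i)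
    (hk : cellWeight μ ℓ b ⬝ᵥ k = 0) (hkk : (weightJacobian μ ℓ b *ᵥ k) ⬝ᵥ k = 0)
    (hβ : cellWeight μ ℓ (Function.update b i x) ⬝ᵥ (k - Pi.single i β) = 0) :
    weightJacobian μ ℓ (Function.update b i x) *ᵥ (k - Pi.single i β) = 0 := by
  set b' := Function.update b i x
  set k' := k - Pi.single i β
  have hupdate (t : ℝ) : b' + t • k' = Function.update (b + t • k) i (x + t • (k i - β)) := by
    ext j
    rcases eq_or_ne j i with rfl | hj
    · simp [b', k']
    · simp [b', k', hj]
  have hle : ∀ᶠ t in 𝓝 (0 : ℝ), x + t • (k i - β) ≤ (b + t • k) i := by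
    have hlow : ContinuousAt (fun t : ℝ ↦ x + t • (k i - β)) 0 := by fun_prop
    have hhigh : ContinuousAt (fun t : ℝ ↦ (b + t • k) i) 0 := by fun_prop
    exact (hlow.eventually_lt hhigh (by simpa using hx)).mono fun _ ↦ le_of_lt
  refine hℓ.weightJacobian_mulVec_eq_zero μ hβ
    ((hℓ.dotProduct_weightJacobian_mulVec_nonpos μ hβ).antisymm ?_)
  have hfirst (t : ℝ) := (hℓ.hasDerivAt_partitionFunction_add_smul μ b k t).sub
    (hℓ.hasDerivAt_partitionFunction_add_smul μ b' k' t)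
  have hsecond := (hℓ.hasDerivAt_cellWeight_dotProduct μ b k k 0).sub
    (hℓ.hasDerivAt_cellWeight_dotProduct μ b' k' k' 0)
  simp only [zero_smul, add_zero, hkk, zero_sub] at hsecond
  rw [← neg_nonpos]
  refine nonpos_of_mul_neg_le_sq (.of_forall hfirst) hsecond (by simp [hk, hβ]) ?_ ?_
  · simpa [b'] using hℓ.positivelySpanning.partitionFunction_update_le μ hx.le
  have hneg : Tendsto (fun t : ℝ ↦ -t) (𝓝 0) (𝓝 0) := by
    simpa using (continuous_neg (G := ℝ)).tendsto 0
  filter_upwards [hle, hneg.eventually hle] with t ht ht'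
  have := hℓ.positivelySpanning.partitionFunction_sub_update_mul_le μ ht ht'
  simp only [midpoint_add_smul_add_neg_smul, ← hupdate] at this
  simpa using this

lemma cellWeight_update_dotProduct_eq_zero {b k : ι → ℝ} {i : ι} {x : ℝ} (hx : x ≤ b i)
    (hk : cellWeight μ ℓ b ⬝ᵥ k = 0) (hkk : (weightJacobian μ ℓ b *ᵥ k) ⬝ᵥ k = 0) :
    cellWeight μ ℓ (Function.update b i x) ⬝ᵥ k = 0 := by
  obtain ⟨b₀, hline⟩ : ∃ b₀, ∀ s, Function.update b i s = b₀ + s • Pi.single i 1 := by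
    refine ⟨Function.update b i 0, fun s ↦ funext fun j ↦ ?_⟩
    rcases eq_or_ne j i with rfl | hj <;> simp [*]
  have hpos (s : ℝ) : 0 < cellWeight μ ℓ (Function.update b i s) i := hℓ.cellWeight_pos μ _ i
  let D (s : ℝ) : ℝ := cellWeight μ ℓ (Function.update b i s) ⬝ᵥ k
  let W (s : ℝ) : ℝ := cellWeight μ ℓ (Function.update b i s) i
  let M (s : ℝ) := weightJacobian μ ℓ (Function.update b i s)
  have hD (s : ℝ) : HasDerivAt D ((M s *ᵥ Pi.single i 1) ⬝ᵥ k) s := by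
    simpa only [D, M, hline] using hℓ.hasDerivAt_cellWeight_dotProduct μ _ (Pi.single i 1) k s
  have hW (s : ℝ) : HasDerivAt W ((M s *ᵥ Pi.single i 1) i) s := by
    simpa only [W, M, hline] using
      hasDerivAt_pi.1 (hℓ.hasDerivAt_cellWeight_add_smul μ _ (Pi.single i 1) s) i
  have hratio (s : ℝ) : HasDerivAt (fun s ↦ D s / W s) _ s := (hD s).div (hW s) (hpos s).ne'
  have hconst := constant_of_has_deriv_right_zero (a := x) (b := b i)
    (fun s _ ↦ (hratio s).continuousAt.continuousWithinAt) fun s hs ↦ by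
      refine (hratio s).hasDerivWithinAt.congr_deriv ?_
      have hβ : M s *ᵥ (k - Pi.single i (D s / W s)) = 0 :=
        hℓ.weightJacobian_update_mulVec_eq_zero μ hs.2 hk hkk (by
          rw [dotProduct_sub, dotProduct_single, mul_div_cancel₀ _ (hpos s).ne', sub_self])
      have hcomm : (M s *ᵥ Pi.single i 1) ⬝ᵥ k = (M s *ᵥ k) i := by
        rw [hℓ.weightJacobian_mulVec_dotProduct_comm μ, dotProduct_single_one]
      have hi : (M s *ᵥ k) i = M s i i * (D s / W s) := by
        simpa [Matrix.mulVec_sub, sub_eq_zero, div_eq_mul_inv, mul_comm] using congrFun hβ i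
      have hW0 : W s ≠ 0 := (hpos s).ne'
      rw [hcomm, hi, Matrix.mulVec_single_one, Matrix.col_apply]
      field_simp
      ring
  have hend : D x / W x = 0 := by
    rw [← hconst (b i) ⟨hx, le_rfl⟩]
    simp [D, hk]
  exact (div_eq_zero_iff.1 hend).resolve_right (hpos x).ne'

lemma weightJacobian_update_dotProduct_eq_zero {b k : ι → ℝ} {i : ι} {x : ℝ} (hx : x ≤ b i)
    (hk : cellWeight μ ℓ b ⬝ᵥ k = 0) (hkk : (weightJacobian μ ℓ b *ᵥ k) ⬝ᵥ k = 0) :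
    (weightJacobian μ ℓ (Function.update b i x) *ᵥ k) ⬝ᵥ k = 0 := by
  rcases hx.lt_or_eq with hx | rfl
  · have := hℓ.weightJacobian_update_mulVec_eq_zero μ (β := 0) hx hk hkk
      (by simpa using hℓ.cellWeight_update_dotProduct_eq_zero μ hx.le hk hkk)
    rw [Pi.single_zero, sub_zero] at this
    rw [this, zero_dotProduct]
  · rwa [Function.update_eq_self]

lemma cellWeight_dotProduct_eq_zero {k : ι → ℝ} (hk : cellWeight μ ℓ 0 ⬝ᵥ k = 0)
    (hkk : (weightJacobian μ ℓ 0 *ᵥ k) ⬝ᵥ k = 0) (b : ι → ℝ) : cellWeight μ ℓ b ⬝ᵥ k = 0 := by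
  have hnonpos (b : ι → ℝ) (hb : b ≤ 0) : cellWeight μ ℓ b ⬝ᵥ k = 0 := by
    suffices h : ∀ s : Finset ι, cellWeight μ ℓ (s.piecewise b 0) ⬝ᵥ k = 0 ∧
        (weightJacobian μ ℓ (s.piecewise b 0) *ᵥ k) ⬝ᵥ k = 0 by
      simpa using (h Finset.univ).1
    intro s
    induction s using Finset.induction_on with
    | empty => simpa using ⟨hk, hkk⟩
    | insert i s hi ih =>
      have hle : b i ≤ s.piecewise b 0 i := by simpa [hi] using hb i
      rw [Finset.piecewise_insert]
      exact ⟨hℓ.cellWeight_update_dotProduct_eq_zero μ hle ih.1 ih.2,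
        hℓ.weightJacobian_update_dotProduct_eq_zero μ hle ih.1 ih.2⟩
  have hle : b ≤ fun _ ↦ ‖b‖ := fun i ↦ (le_abs_self _).trans (norm_le_pi_norm b i)
  have hshift := cellWeight_add_const μ ℓ (fun i ↦ b i - ‖b‖) ‖b‖
  simp only [sub_add_cancel] at hshift
  rw [hshift, smul_dotProduct, hnonpos _ fun i ↦ sub_nonpos.2 (hle i), smul_zero]

lemma partitionFunction_smul_eq {k : ι → ℝ} (hk : cellWeight μ ℓ 0 ⬝ᵥ k = 0)
    (hkk : (weightJacobian μ ℓ 0 *ᵥ k) ⬝ᵥ k = 0) (t : ℝ) :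
    partitionFunction μ ℓ (t • k) = partitionFunction μ ℓ 0 := by
  have hderiv (t : ℝ) : HasDerivAt (fun t ↦ partitionFunction μ ℓ (t • k)) 0 t := by
    have := hℓ.hasDerivAt_partitionFunction_add_smul μ 0 k t
    simpa only [zero_add, hℓ.cellWeight_dotProduct_eq_zero μ hk hkk] using this
  simpa using is_const_of_deriv_eq_zero (fun t ↦ (hderiv t).differentiableAt)
    (fun t ↦ (hderiv t).deriv) t 0

end IsVertexFamily

theorem IsVertexFamily.exists_eq_apply (hℓ : IsVertexFamily ℓ) {k : ι → ℝ}
    (hk : cellWeight μ ℓ 0 ⬝ᵥ k = 0) (hkk : (weightJacobian μ ℓ 0 *ᵥ k) ⬝ᵥ k = 0) :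
    ∃ y, ∀ i, k i = ℓ i y := by
  have hconst := hℓ.partitionFunction_smul_eq μ hk hkk
  obtain ⟨y, hy⟩ :=
    hℓ.positivelySpanning.exists_le_apply_of_partitionFunction_smul_eq μ hconst
  obtain ⟨z, hz⟩ :=
    hℓ.positivelySpanning.exists_le_apply_of_partitionFunction_smul_eq μ (k := -k)
      fun t ↦ by rw [smul_neg, ← neg_smul, hconst]
  have hsum : y + z = 0 := hℓ.positivelySpanning _ fun i ↦ by
    have := hy i
    have := hz i
    simp only [Pi.neg_apply, map_add] at *
    linarith
  refine ⟨y, fun i ↦ (hy i).antisymm' ?_⟩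
  have := hz i
  rw [← neg_eq_of_add_eq_zero_right hsum, map_neg, Pi.neg_apply] at this
  linarith

end Kernel

section Continuity

variable {V : Type*} [NormedAddCommGroup V] [NormedSpace ℝ V] [FiniteDimensional ℝ V]
  [MeasurableSpace V] [BorelSpace V] (μ : Measure V) [μ.IsAddHaarMeasure]
  {ι : Type*} [Finite ι] [Nonempty ι] {ℓ : ι → V →L[ℝ] ℝ}

omit [FiniteDimensional ℝ V] [MeasurableSpace V] [BorelSpace V] in
lemma continuousAt_indicator_cell {i : ι} {k : ι → ℝ} {y : V}
    (hy : ∀ j ≠ i, ℓ j y - k j ≠ ℓ i y - k i) :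
    ContinuousAt (fun ℓ' ↦ (cell ℓ' k i).indicator (fun y ↦ Real.exp (-maxAffine ℓ' k y)) y) ℓ := by
  have hcont (j : ι) : ContinuousAt (fun ℓ' : ι → V →L[ℝ] ℝ ↦ ℓ' j y - k j) ℓ :=
    Continuous.continuousAt (by fun_prop)
  by_cases hi : y ∈ cell ℓ k i
  · have hnear : ∀ᶠ ℓ' in 𝓝 ℓ, y ∈ cell ℓ' k i := by
      refine eventually_all.2 fun j ↦ ?_
      rcases eq_or_ne j i with rfl | hj
      · exact .of_forall fun _ ↦ le_rfl
      · exact ((hcont j).eventually_lt (hcont i) ((hi j).lt_of_ne (hy j hj))).mono fun _ h ↦ h.le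
    have hexp : Continuous fun ℓ' : ι → V →L[ℝ] ℝ ↦ Real.exp (-maxAffine ℓ' k y) := by fun_prop
    exact hexp.continuousAt.congr (hnear.mono fun ℓ' h ↦
      (indicator_of_mem h fun y ↦ Real.exp (-maxAffine ℓ' k y)).symm)
  · obtain ⟨j, hj⟩ : ∃ j, ℓ i y - k i < ℓ j y - k j := by
      simpa only [cell, mem_ofPred_eq, not_forall, not_le] using hi
    refine (continuousAt_const (y := (0 : ℝ))).congr
      (((hcont i).eventually_lt (hcont j) hj).mono fun ℓ' h ↦ ?_)
    exact (indicator_of_notMem (fun h' : y ∈ cell ℓ' k i ↦ (h' j).not_gt h) _).symm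

lemma continuousAt_cellWeight (hℓ : PositivelySpanning ℓ) (hinj : Function.Injective ℓ)
    (k : ι → ℝ) (i : ι) : ContinuousAt (fun ℓ ↦ cellWeight μ ℓ k i) ℓ := by
  cases nonempty_fintype ι
  obtain ⟨ε, hε, hco⟩ := hℓ.eventually_coercive
  simp only [cellWeight, ← integral_indicator (isClosed_cell _ k i).measurableSet]
  refine continuousAt_of_dominated (bound := fun y ↦ Real.exp ‖k‖ * Real.exp (-(ε * ‖y‖)))
    (.of_forall fun ℓ' ↦ ?_) (hco.mono fun ℓ' h ↦ .of_forall fun y ↦ ?_)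
    ((integrable_exp_neg_mul_norm μ hε).const_mul _) ?_
  · exact (Continuous.aestronglyMeasurable (by fun_prop)).indicator
      (isClosed_cell ℓ' k i).measurableSet
  · refine (norm_indicator_le_norm_self _ y).trans ?_
    rw [Real.norm_of_nonneg (Real.exp_nonneg _), ← Real.exp_add]
    gcongr
    linarith [h k y]
  · filter_upwards [ae_sub_ne_sub μ hinj k] with y hy
    exact continuousAt_indicator_cell fun j hj ↦ hy j i hj

end Continuity

section Faces

variable {E ι : Type*} [AddCommGroup E] [Module ℝ E] {p : ι → E}

lemma apply_le_of_mem_convexHull_range {a : E →ₗ[ℝ] ℝ} {c : ℝ} (h : ∀ i, a (p i) ≤ c) {x : E}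
    (hx : x ∈ convexHull ℝ (range p)) : a x ≤ c :=
  convexHull_min (range_subset_iff.2 h) (convex_halfSpace_le a.isLinear c) hx

lemma isExtreme_setOf_apply_eq (a : E →ₗ[ℝ] ℝ) (c : ℝ) :
    IsExtreme ℝ {x | a x ≤ c} {x | a x = c} := by
  refine ⟨fun x hx ↦ le_of_eq hx, ?_⟩
  rintro x hx y hy _ hz ⟨s, t, hs, ht, hst, rfl⟩
  simp only [mem_ofPred_eq, map_add, map_smul, smul_eq_mul] at hx hy hz ⊢
  have hc : s * c + t * c = c := by rw [← add_mul, hst, one_mul]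
  exact hx.antisymm (le_of_mul_le_mul_left (by linarith [mul_le_mul_of_nonneg_left hy ht.le]) hs)

lemma mem_convexHull_image_of_apply_eq {a : E →ₗ[ℝ] ℝ} {c : ℝ} (h : ∀ i, a (p i) ≤ c) {x : E}
    (hx : x ∈ convexHull ℝ (range p)) (hxc : a x = c) :
    x ∈ convexHull ℝ (p '' {i | a (p i) = c}) := by
  set G := convexHull ℝ (p '' {i | a (p i) = c})
  have hconv : Convex ℝ {x | a x ≤ c ∧ (a x = c → x ∈ G)} := by
    refine convex_iff_forall_pos.2 ?_
    rintro x ⟨hxc, hx⟩ y ⟨hyc, hy⟩ s t hs ht hst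
    refine ⟨convex_halfSpace_le a.isLinear c hxc hyc hs.le ht.le hst, fun hc ↦ ?_⟩
    have hseg : s • x + t • y ∈ openSegment ℝ x y := ⟨s, t, hs, ht, hst, rfl⟩
    have hext := isExtreme_setOf_apply_eq a c
    exact convex_convexHull ℝ _ (hx (hext.left_mem_of_mem_openSegment hxc hyc hc hseg))
      (hy (hext.right_mem_of_mem_openSegment hxc hyc hc hseg)) hs.le ht.le hst
  have hvert : range p ⊆ {x | a x ≤ c ∧ (a x = c → x ∈ G)} := range_subset_iff.2 fun i ↦
    ⟨h i, fun hi ↦ subset_convexHull ℝ _ (mem_image_of_mem p hi)⟩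
  exact (convexHull_min hvert hconv hx).2 hxc

lemma isExtreme_convexHull_image {a : E →ₗ[ℝ] ℝ} {c : ℝ} (h : ∀ i, a (p i) ≤ c) :
    IsExtreme ℝ (convexHull ℝ (range p)) (convexHull ℝ (p '' {i | a (p i) = c})) := by
  refine ⟨convexHull_mono (image_subset_range _ _), fun x hx y hy z hz hxy ↦ ?_⟩
  have hzc : a z = c :=
    convexHull_min (image_subset_iff.2 fun i hi ↦ hi) (convex_hyperplane a.isLinear c) hz
  exact mem_convexHull_image_of_apply_eq h hx
    ((isExtreme_setOf_apply_eq a c).left_mem_of_mem_openSegment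
      (apply_le_of_mem_convexHull_range h hx) (apply_le_of_mem_convexHull_range h hy) hzc hxy)

lemma isExtreme_segment {a : E →ₗ[ℝ] ℝ} {i j : ι} (hij : a (p i) = a (p j))
    (h : ∀ l, l ≠ i → l ≠ j → a (p l) < a (p i)) :
    IsExtreme ℝ (convexHull ℝ (range p)) (segment ℝ (p i) (p j)) := by
  have hle (l : ι) : a (p l) ≤ a (p i) := by
    rcases eq_or_ne l i with rfl | hi
    · rfl
    rcases eq_or_ne l j with rfl | hj
    · exact hij.ge
    exact (h l hi hj).le
  have hset : {l | a (p l) = a (p i)} = {i, j} := by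
    ext l
    refine ⟨fun hl ↦ ?_, ?_⟩
    · by_contra! hne
      simp only [mem_insert_iff, mem_singleton_iff, not_or] at hne
      exact (h l hne.1 hne.2).ne hl
    · rintro (rfl | rfl)
      exacts [rfl, hij.symm]
  have := isExtreme_convexHull_image hle
  rwa [hset, image_pair, convexHull_pair] at this

variable [Fintype ι]

lemma sum_smul_mem_convexHull_range {u : ι → ℝ} (hu : u ∈ stdSimplex ℝ ι) :
    ∑ i, u i • p i ∈ convexHull ℝ (range p) :=
  (convex_convexHull ℝ _).sum_mem (fun i _ ↦ hu.1 i) hu.2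
    fun i _ ↦ subset_convexHull ℝ _ (mem_range_self i)

lemma mem_of_isExtreme_of_sum_smul_mem {G : Set E} (hG : IsExtreme ℝ (convexHull ℝ (range p)) G)
    {u : ι → ℝ} (hu : u ∈ stdSimplex ℝ ι) (h : ∑ i, u i • p i ∈ G) {i : ι} (hi : 0 < u i) :
    p i ∈ G := by
  classical
  set v : ι → ℝ := (1 + u i) • u - u i • Pi.single i 1 with hv
  have hvu : v ∈ stdSimplex ℝ ι := by
    refine ⟨fun j ↦ ?_, ?_⟩
    · rcases eq_or_ne j i with rfl | hj
      · simp [v]; nlinarith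
      · simpa [v, hj] using mul_nonneg (by positivity) (hu.1 j)
    · simp [v, Finset.sum_sub_distrib, ← Finset.mul_sum, hu.2]
  have hvp : ∑ j, v j • p j = (1 + u i) • ∑ j, u j • p j - u i • p i := by
    simp [v, sub_smul, Finset.sum_sub_distrib, mul_smul, ← Finset.smul_sum, Pi.single_apply,
      ite_smul]
  refine hG.left_mem_of_mem_openSegment (subset_convexHull ℝ _ (mem_range_self i))
    (sum_smul_mem_convexHull_range hvu) h
    ⟨u i / (1 + u i), 1 / (1 + u i), by positivity, by positivity, by field_simp; ring, ?_⟩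
  rw [hvp, smul_sub, smul_smul, smul_smul, one_div_mul_cancel (by positivity), one_smul,
    one_div_mul_eq_div, add_sub_cancel]

lemma eq_zero_of_sum_smul_eq (hp : ConvexIndependent ℝ p) {S : Set ι}
    (hS : IsExtreme ℝ (convexHull ℝ (range p)) (convexHull ℝ (p '' S))) {u v : ι → ℝ}
    (hu : u ∈ stdSimplex ℝ ι) (hv : v ∈ stdSimplex ℝ ι) (hvS : ∀ i ∉ S, v i = 0)
    (huv : ∑ i, u i • p i = ∑ i, v i • p i) {i : ι} (hi : i ∉ S) : u i = 0 := by
  classical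
  have hmem : ∑ i, v i • p i ∈ convexHull ℝ (p '' S) := by
    have hsupp {j : ι} (hj : v j ≠ 0) : j ∈ S := not_imp_comm.1 (hvS j) hj
    rw [← Finset.sum_filter_of_ne (p := (· ∈ S)) fun j _ hj ↦ hsupp (left_ne_zero_of_smul hj)]
    refine (convex_convexHull ℝ _).sum_mem (fun j _ ↦ hv.1 j) ?_ fun j hj ↦
      subset_convexHull ℝ _ (mem_image_of_mem p (Finset.mem_filter.1 hj).2)
    rw [Finset.sum_filter_of_ne fun j _ hj ↦ hsupp hj, hv.2]
  by_contra hne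
  exact hi (hp S i (mem_of_isExtreme_of_sum_smul_mem hS hu (huv ▸ hmem) ((hu.1 i).lt_of_ne' hne)))

end Faces

section Softmax

/-- The relative interior of the standard simplex: weights that are all positive and sum to `1`. -/
def openSimplex (ι : Type*) [Fintype ι] : Set (ι → ℝ) :=
  {u ∈ stdSimplex ℝ ι | ∀ i, 0 < u i}

variable {ι : Type*} [Fintype ι]

/-- The softmax weights `exp (t i) / ∑ j, exp (t j)`. -/
noncomputable def softmax (t : ι → ℝ) (i : ι) : ℝ :=
  Real.exp (t i) / ∑ j, Real.exp (t j)

lemma continuous_softmax [Nonempty ι] : Continuous (softmax (ι := ι)) := by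
  unfold softmax
  have (t : ι → ℝ) : ∑ j, Real.exp (t j) ≠ 0 := by positivity
  fun_prop (disch := assumption)

lemma softmax_pos [Nonempty ι] (t : ι → ℝ) (i : ι) : 0 < softmax t i := by
  unfold softmax
  positivity

lemma softmax_mem_openSimplex [Nonempty ι] (t : ι → ℝ) : softmax t ∈ openSimplex ι := by
  refine ⟨⟨fun i ↦ (softmax_pos t i).le, ?_⟩, softmax_pos t⟩
  simp only [softmax]
  rw [← Finset.sum_div, div_self (by positivity)]

lemma softmax_le_exp_sub (t : ι → ℝ) (i j : ι) : softmax t i ≤ Real.exp (t i - t j) := by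
  rw [softmax, Real.exp_sub]
  gcongr
  exact Finset.single_le_sum (f := fun j ↦ Real.exp (t j)) (fun _ _ ↦ (Real.exp_pos _).le)
    (Finset.mem_univ j)

end Softmax

section Balance

lemma exists_tendsto_of_eventually_mem {α X : Type*} [TopologicalSpace X] {K : Set X}
    (hK : IsCompact K) {𝒰 : Ultrafilter α} {f : α → X} (h : ∀ᶠ a in 𝒰, f a ∈ K) :
    ∃ x ∈ K, Tendsto f 𝒰 (𝓝 x) :=
  hK.ultrafilter_le_nhds (𝒰.map f) (le_principal_iff.2 h)

variable {E F ι : Type*} [NormedAddCommGroup E] [InnerProductSpace ℝ E] [NormedAddCommGroup F]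
  [NormedSpace ℝ F] {q : ι → E} {p : ι → F}

lemma inner_lt_of_mem_interior_convexHull {x y : E} {c : ℝ} (hy : y ≠ 0)
    (hx : x ∈ interior (convexHull ℝ (range q))) (h : ∀ i, inner ℝ y (q i) ≤ c) :
    inner ℝ y x < c := by
  have hline : ∀ᶠ t in 𝓝[>] (0 : ℝ), x + t • y ∈ convexHull ℝ (range q) := by
    have hcont : Continuous fun t : ℝ ↦ x + t • y := by fun_prop
    exact (hcont.tendsto' 0 x (by simp)).mono_left nhdsWithin_le_nhds
      |>.eventually (mem_interior_iff_mem_nhds.1 hx)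
  obtain ⟨t, ht, ht0 : 0 < t⟩ := (hline.and self_mem_nhdsWithin).exists
  have hle := apply_le_of_mem_convexHull_range (a := innerₗ E y) h ht
  rw [innerₗ_apply_apply, inner_add_right, inner_smul_right, real_inner_self_eq_norm_sq] at hle
  have : 0 < t * ‖y‖ ^ 2 := by positivity
  linarith

lemma exists_le_inner_and_pos [Finite ι] [Nonempty ι]
    (h0 : (0 : E) ∈ interior (convexHull ℝ (range q))) {y : E} (hy : y ≠ 0) :
    ∃ j, (∀ i, inner ℝ y (q i) ≤ inner ℝ y (q j)) ∧ 0 < inner ℝ y (q j) := by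
  obtain ⟨j, hj⟩ := Finite.exists_max fun i ↦ inner ℝ y (q i)
  exact ⟨j, hj, by simpa using inner_lt_of_mem_interior_convexHull hy h0 hj⟩

variable [Fintype ι] [Nonempty ι]

lemma tendsto_softmax_inner {𝒰 : Filter E} {θ : E} (hnorm : Tendsto (fun y : E ↦ ‖y‖) 𝒰 atTop)
    (hθ : Tendsto (fun y : E ↦ ‖y‖⁻¹ • y) 𝒰 (𝓝 θ)) {i j : ι}
    (hij : inner ℝ θ (q i) < inner ℝ θ (q j)) :
    Tendsto (fun y ↦ softmax (fun l ↦ inner ℝ y (q l)) i) 𝒰 (𝓝 0) := by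
  have hinner : Tendsto (fun y : E ↦ inner ℝ (‖y‖⁻¹ • y) (q i - q j)) 𝒰
      (𝓝 (inner ℝ θ (q i - q j))) := hθ.inner tendsto_const_nhds
  have hneg : inner ℝ θ (q i - q j) < 0 := by simpa [inner_sub_right] using hij
  have hbot := hnorm.atTop_mul_neg hneg hinner
  refine squeeze_zero' (.of_forall fun y ↦ (softmax_pos _ i).le) ?_
    (Real.tendsto_exp_atBot.comp hbot)
  filter_upwards [hnorm.eventually_gt_atTop 0] with y hy
  refine (softmax_le_exp_sub _ i j).trans_eq ?_
  rw [Function.comp_apply, inner_smul_left, inner_sub_right, RCLike.conj_to_real,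
    mul_inv_cancel_left₀ hy.ne']

variable [FiniteDimensional ℝ E]

lemma exists_tendsto_inv_norm_smul {𝒰 : Ultrafilter E} (h : Tendsto (fun y : E ↦ ‖y‖) 𝒰 atTop) :
    ∃ θ : E, ‖θ‖ = 1 ∧ Tendsto (fun y : E ↦ ‖y‖⁻¹ • y) 𝒰 (𝓝 θ) := by
  obtain ⟨θ, hθ, hlim⟩ := exists_tendsto_of_eventually_mem (f := fun y : E ↦ ‖y‖⁻¹ • y)
    (isCompact_sphere (0 : E) 1) <| (h.eventually_gt_atTop 0).mono fun y hy ↦ by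
      simp [norm_smul, hy.ne']
  exact ⟨θ, mem_sphere_zero_iff_norm.1 hθ, hlim⟩

lemma eventually_inner_sum_smul_pos (hp : ConvexIndependent ℝ p)
    (hface : ∀ S : Set ι, IsExtreme ℝ (convexHull ℝ (range q)) (convexHull ℝ (q '' S)) →
      IsExtreme ℝ (convexHull ℝ (range p)) (convexHull ℝ (p '' S)))
    (h0 : (0 : E) ∈ interior (convexHull ℝ (range q))) {u : (ι → ℝ) → ι → ℝ}
    (hu : ∀ v ∈ openSimplex ι, u v ∈ stdSimplex ℝ ι)
    (hup : ∀ v ∈ openSimplex ι, ∑ i, u v i • p i = ∑ i, v i • p i)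
    {𝒰 : Ultrafilter E} (hnorm : Tendsto (fun y : E ↦ ‖y‖) 𝒰 atTop) :
    ∀ᶠ y in 𝒰, 0 < inner ℝ y (∑ i, u (softmax fun j ↦ inner ℝ y (q j)) i • q i) := by
  obtain ⟨θ, hθ, hlimθ⟩ := exists_tendsto_inv_norm_smul hnorm
  set σ : E → ι → ℝ := fun y ↦ softmax fun j ↦ inner ℝ y (q j)
  have hσ (y : E) : σ y ∈ openSimplex ι := softmax_mem_openSimplex _
  obtain ⟨v, hv, hlimv⟩ := exists_tendsto_of_eventually_mem (𝒰 := 𝒰) (isCompact_stdSimplex ℝ ι)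
    (.of_forall fun y ↦ (hσ y).1)
  obtain ⟨u', hu', hlimu⟩ := exists_tendsto_of_eventually_mem (𝒰 := 𝒰) (isCompact_stdSimplex ℝ ι)
    (.of_forall fun y ↦ hu _ (hσ y))
  obtain ⟨j, hj, hjpos⟩ := exists_le_inner_and_pos h0 (y := θ) (by rintro rfl; simp at hθ)
  have hvS : ∀ i ∉ {i | innerₗ E θ (q i) = inner ℝ θ (q j)}, v i = 0 := fun i hi ↦
    tendsto_nhds_unique (hlimv.apply_nhds i)
      (tendsto_softmax_inner hnorm hlimθ ((hj i).lt_of_ne hi))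
  have huv : ∑ i, u' i • p i = ∑ i, v i • p i :=
    tendsto_nhds_unique (tendsto_finsetSum _ fun i _ ↦ (hlimu.apply_nhds i).smul_const (p i))
      ((tendsto_finsetSum _ fun i _ ↦ (hlimv.apply_nhds i).smul_const (p i)).congr
        fun y ↦ (hup _ (hσ y)).symm)
  have hmax : inner ℝ θ (∑ i, u' i • q i) = inner ℝ θ (q j) := by
    have hterm (i : ι) : u' i * inner ℝ θ (q i) = u' i * inner ℝ θ (q j) := by
      by_cases hi : inner ℝ θ (q i) = inner ℝ θ (q j)
      · rw [hi]
      · rw [eq_zero_of_sum_smul_eq hp (hface _ (isExtreme_convexHull_image hj)) hu' hv hvS huv hi,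
          zero_mul, zero_mul]
    simp only [inner_sum, inner_smul_right, hterm, ← Finset.sum_mul, hu'.2, one_mul]
  have hlim : Tendsto (fun y : E ↦ inner ℝ (‖y‖⁻¹ • y) (∑ i, u (σ y) i • q i)) 𝒰
      (𝓝 (inner ℝ θ (∑ i, u' i • q i))) :=
    hlimθ.inner (tendsto_finsetSum _ fun i _ ↦ (hlimu.apply_nhds i).smul_const (q i))
  filter_upwards [hlim.eventually (lt_mem_nhds (hmax ▸ hjpos)), hnorm.eventually_gt_atTop 0]
    with y hy hy0
  rw [inner_smul_left] at hy
  exact pos_of_mul_pos_right hy (inv_pos.2 hy0).le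

theorem exists_sum_smul_eq_zero (hp : ConvexIndependent ℝ p)
    (hface : ∀ S : Set ι, IsExtreme ℝ (convexHull ℝ (range q)) (convexHull ℝ (q '' S)) →
      IsExtreme ℝ (convexHull ℝ (range p)) (convexHull ℝ (p '' S)))
    (h0 : (0 : E) ∈ interior (convexHull ℝ (range q))) {u : (ι → ℝ) → ι → ℝ}
    (hcont : ContinuousOn u (openSimplex ι)) (hu : ∀ v ∈ openSimplex ι, u v ∈ stdSimplex ℝ ι)
    (hup : ∀ v ∈ openSimplex ι, ∑ i, u v i • p i = ∑ i, v i • p i) :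
    ∃ v ∈ openSimplex ι, ∑ i, u v i • q i = 0 := by
  have hσ : Continuous fun y : E ↦ softmax fun j ↦ inner ℝ y (q j) :=
    continuous_softmax.comp (by fun_prop)
  have huσ := hcont.comp_continuous hσ fun y ↦ softmax_mem_openSimplex _
  have hpos : ∀ᶠ y in Bornology.cobounded E,
      0 < inner ℝ y (∑ i, u (softmax fun j ↦ inner ℝ y (q j)) i • q i) :=
    mem_iff_ultrafilter.2 fun 𝒰 h𝒰 ↦
      eventually_inner_sum_smul_pos hp hface h0 hu hup (tendsto_norm_cobounded_atTop.mono_left h𝒰)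
  obtain ⟨R, -, hR⟩ := hasBasis_cobounded_norm.eventually_iff.1 hpos
  obtain ⟨y, hy⟩ := exists_eq_zero_of_inner_pos (R := max R 1)
    (f := fun y ↦ ∑ i, u (softmax fun j ↦ inner ℝ y (q j)) i • q i)
    (continuous_finsetSum _ fun i _ ↦ ((continuous_pi_iff.1 huσ i).smul continuous_const))
    (by positivity) fun y hy ↦ hR (le_of_max_le_left hy)
  exact ⟨_, softmax_mem_openSimplex _, hy⟩

end Balance

section VertexFunctional

variable {E ι : Type*} [NormedAddCommGroup E] [InnerProductSpace ℝ E]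

/-- The functional `⟪p i - x, ·⟫` on the direction of the affine span of the points `p`, whose
domain makes the functionals span the dual even when the affine span is not the whole space. -/
noncomputable def vertexFunctional (p : ι → E) (x : E) (i : ι) : vectorSpan ℝ (range p) →L[ℝ] ℝ :=
  innerSL ℝ (p i - x) ∘L Submodule.subtypeL _

variable {p : ι → E}

lemma vertexFunctional_apply (x : E) (i : ι) (y : vectorSpan ℝ (range p)) :
    vertexFunctional p x i y = inner ℝ (p i - x) (y : E) :=
  rfl

lemma continuous_vertexFunctional : Continuous (vertexFunctional p) := by
  unfold vertexFunctional
  fun_prop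

lemma eq_zero_of_mem_vectorSpan_of_inner_sub_eq_zero {x y : E} (hy : y ∈ vectorSpan ℝ (range p))
    (h : ∀ i, inner ℝ (p i - x) y = 0) : y = 0 := by
  have hle : vectorSpan ℝ (range p) ≤ (ℝ ∙ y)ᗮ := by
    rw [vectorSpan_def, Submodule.span_le]
    rintro _ ⟨_, ⟨i, rfl⟩, _, ⟨j, rfl⟩, rfl⟩
    have hij : inner ℝ (p i - p j) y = 0 := by
      rw [← sub_sub_sub_cancel_right _ _ x, inner_sub_left, h, h, sub_zero]
    exact Submodule.mem_orthogonal_singleton_iff_inner_left.2 hij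
  exact inner_self_eq_zero.1 (Submodule.mem_orthogonal_singleton_iff_inner_left.1 (hle hy))

variable [Fintype ι]

lemma sub_mem_vectorSpan {u : ι → ℝ} (hu : u ∈ stdSimplex ℝ ι) (i : ι) :
    p i - ∑ j, u j • p j ∈ vectorSpan ℝ (range p) := by
  have : p i - ∑ j, u j • p j = ∑ j, u j • (p i - p j) := by
    simp only [smul_sub, Finset.sum_sub_distrib, ← Finset.sum_smul, hu.2, one_smul]
  rw [this]
  exact Submodule.sum_smul_mem _ _ fun j _ ↦
    vsub_mem_vectorSpan ℝ (mem_range_self i) (mem_range_self j)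

lemma sum_smul_sub_eq_zero {u : ι → ℝ} (hu : u ∈ stdSimplex ℝ ι) :
    ∑ i, u i • (p i - ∑ j, u j • p j) = 0 := by
  simp only [smul_sub, Finset.sum_sub_distrib, ← Finset.sum_smul, hu.2, one_smul, sub_self]

lemma positivelySpanning_vertexFunctional {u : ι → ℝ} (hu : u ∈ openSimplex ι) :
    PositivelySpanning (vertexFunctional p (∑ j, u j • p j)) := by
  intro y hy
  simp only [vertexFunctional_apply] at hy
  set x := ∑ j, u j • p j with hx
  have hsum : ∑ i, u i * inner ℝ (p i - x) (y : E) = 0 := by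
    simp only [← real_inner_smul_left, ← sum_inner, hx, sum_smul_sub_eq_zero hu.1, inner_zero_left]
  have hzero := (Finset.sum_eq_zero_iff_of_nonpos fun i _ ↦
    mul_nonpos_of_nonneg_of_nonpos (hu.2 i).le (hy i)).1 hsum
  refine Subtype.ext (eq_zero_of_mem_vectorSpan_of_inner_sub_eq_zero (x := x) y.2 fun i ↦ ?_)
  exact (mul_eq_zero.1 (hzero i (Finset.mem_univ i))).resolve_left (hu.2 i).ne'

variable [FiniteDimensional ℝ E]

omit [Fintype ι] in
lemma exists_inner_lt [Finite ι] (hp : ConvexIndependent ℝ p) (i : ι) :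
    ∃ a : E, ∀ j ≠ i, inner ℝ (p j) a < inner ℝ (p i) a := by
  have hi : p i ∉ convexHull ℝ (p '' {i}ᶜ) := fun h ↦ hp _ _ h rfl
  obtain ⟨f, c, hc, hci⟩ := geometric_hahn_banach_closed_point (convex_convexHull ℝ _)
    ((toFinite _).isClosed_convexHull ℝ) hi
  refine ⟨(InnerProductSpace.toDual ℝ E).symm f, fun j hj ↦ ?_⟩
  rw [real_inner_comm, InnerProductSpace.toDual_symm_apply, real_inner_comm,
    InnerProductSpace.toDual_symm_apply]
  exact (hc _ (subset_convexHull ℝ _ (mem_image_of_mem p hj))).trans hci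

lemma isVertexFamily_vertexFunctional [Nontrivial ι] (hp : ConvexIndependent ℝ p) {u : ι → ℝ}
    (hu : u ∈ openSimplex ι) : IsVertexFamily (vertexFunctional p (∑ j, u j • p j)) where
  positivelySpanning := positivelySpanning_vertexFunctional hu
  exists_exposing i := by
    obtain ⟨a, ha⟩ := exists_inner_lt hp i
    set ℓ := vertexFunctional p (∑ j, u j • p j)
    set e := (vectorSpan ℝ (range p)).orthogonalProjectionOnto a
    have hlt (j : ι) (hj : j ≠ i) : ℓ j e < ℓ i e := by
      have hℓ (j : ι) : ℓ j e = inner ℝ (p j - ∑ j, u j • p j) a :=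
        Submodule.inner_orthogonalProjectionOnto_eq_of_mem_left ⟨_, sub_mem_vectorSpan hu.1 j⟩ a
      simpa only [hℓ, inner_sub_left, sub_lt_sub_iff_right] using ha j hj
    have hpos : 0 < ℓ i e := by
      by_contra! hle
      have he : e = 0 := positivelySpanning_vertexFunctional hu e fun j ↦ by
        rcases eq_or_ne j i with rfl | hj
        exacts [hle, (hlt j hj).le.trans hle]
      obtain ⟨j, hj⟩ := exists_ne i
      simpa [he] using hlt j hj
    refine ⟨(ℓ i e)⁻¹ • e, ?_, fun j hj ↦ ?_⟩
    · rw [map_smul, smul_eq_mul, inv_mul_cancel₀ hpos.ne']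
    · rw [map_smul, smul_eq_mul, inv_mul_lt_one₀ hpos]
      exact hlt j hj

section Balanced

variable [MeasurableSpace (vectorSpan ℝ (range p))] [BorelSpace (vectorSpan ℝ (range p))]
  (μ : Measure (vectorSpan ℝ (range p))) [μ.IsAddHaarMeasure] [Nontrivial ι]

lemma sum_cellWeight_vertexFunctional_smul_sub (hp : ConvexIndependent ℝ p) {u : ι → ℝ}
    (hu : u ∈ openSimplex ι) :
    ∑ i, cellWeight μ (vertexFunctional p (∑ j, u j • p j)) 0 i • (p i - ∑ j, u j • p j) = 0 := by
  classical
  set x := ∑ j, u j • p j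
  set z := ∑ i, cellWeight μ (vertexFunctional p x) 0 i • (p i - x)
  have hz : z ∈ vectorSpan ℝ (range p) :=
    Submodule.sum_smul_mem _ _ fun i _ ↦ sub_mem_vectorSpan hu.1 i
  have := (isVertexFamily_vertexFunctional hp hu).sum_cellWeight_mul_apply μ 0 ⟨z, hz⟩
  simp only [vertexFunctional_apply, ← real_inner_smul_left, ← sum_inner] at this
  exact inner_self_eq_zero.1 this

theorem exists_sum_cellWeight_vertexFunctional_smul_eq_zero {q : ι → E}
    (hp : ConvexIndependent ℝ p)
    (hface : ∀ S : Set ι, IsExtreme ℝ (convexHull ℝ (range q)) (convexHull ℝ (q '' S)) →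
      IsExtreme ℝ (convexHull ℝ (range p)) (convexHull ℝ (p '' S)))
    (h0 : 0 ∈ interior (convexHull ℝ (range q))) :
    ∃ u ∈ openSimplex ι,
      ∑ i, cellWeight μ (vertexFunctional p (∑ j, u j • p j)) 0 i • q i = 0 := by
  classical
  let w (u : ι → ℝ) : ι → ℝ := cellWeight μ (vertexFunctional p (∑ j, u j • p j)) 0
  have hwpos {u : ι → ℝ} (hu : u ∈ openSimplex ι) (i : ι) : 0 < w u i :=
    (isVertexFamily_vertexFunctional hp hu).cellWeight_pos μ 0 i
  have hsum {u : ι → ℝ} (hu : u ∈ openSimplex ι) : 0 < ∑ i, w u i :=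
    Finset.sum_pos (fun i _ ↦ hwpos hu i) Finset.univ_nonempty
  have hw : ContinuousOn w (openSimplex ι) := by
    refine continuousOn_pi.2 fun i u hu ↦ ContinuousAt.continuousWithinAt ?_
    have hℓ := isVertexFamily_vertexFunctional hp hu
    exact (continuousAt_cellWeight μ hℓ.positivelySpanning hℓ.injective 0 i).comp
      (f := fun u : ι → ℝ ↦ vertexFunctional p (∑ j, u j • p j))
      (continuous_vertexFunctional.comp (by fun_prop)).continuousAt
  obtain ⟨u, hu, hbal⟩ := exists_sum_smul_eq_zero hp hface h0
    (u := fun u ↦ (∑ i, w u i)⁻¹ • w u)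
    (ContinuousOn.smul ((continuousOn_finsetSum _ fun i _ ↦ continuousOn_pi.1 hw i).inv₀
      fun u hu ↦ (hsum hu).ne') hw)
    (fun u hu ↦ ⟨fun i ↦ (mul_pos (inv_pos.2 (hsum hu)) (hwpos hu i)).le, by
      simp only [Pi.smul_apply, smul_eq_mul, ← Finset.mul_sum, inv_mul_cancel₀ (hsum hu).ne']⟩)
    (fun u hu ↦ by
      have := sum_cellWeight_vertexFunctional_smul_sub μ hp hu
      simp only [smul_sub, Finset.sum_sub_distrib, ← Finset.sum_smul, sub_eq_zero] at this
      simp only [Pi.smul_apply, smul_assoc, ← Finset.smul_sum]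
      rw [this, inv_smul_smul₀ (hsum hu).ne'])
  refine ⟨u, hu, ?_⟩
  simp only [Pi.smul_apply, smul_assoc, ← Finset.smul_sum] at hbal
  exact (smul_eq_zero_iff_right (inv_ne_zero (hsum hu).ne')).1 hbal

end Balanced

end VertexFunctional

section Gram

variable {E ι : Type*} [NormedAddCommGroup E] [InnerProductSpace ℝ E] {p q : ι → E}

lemma norm_linearCombination_eq_of_gram_eq (h : Matrix.gram ℝ p = Matrix.gram ℝ q) (c : ι →₀ ℝ) :
    ‖Finsupp.linearCombination ℝ p c‖ = ‖Finsupp.linearCombination ℝ q c‖ := by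
  have hpq (i j : ι) : inner ℝ (p i) (p j) = inner ℝ (q i) (q j) := congr($h i j)
  rw [← sq_eq_sq₀ (norm_nonneg _) (norm_nonneg _), ← real_inner_self_eq_norm_sq,
    ← real_inner_self_eq_norm_sq]
  simp only [Finsupp.linearCombination_apply, Finsupp.sum, sum_inner, inner_sum,
    real_inner_smul_left, real_inner_smul_right, hpq]

theorem exists_linearIsometryEquiv_of_gram_eq [FiniteDimensional ℝ E]
    (h : Matrix.gram ℝ p = Matrix.gram ℝ q) : ∃ T : E ≃ₗᵢ[ℝ] E, ∀ i, T (p i) = q i := by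
  set f := Finsupp.linearCombination ℝ p
  set g := Finsupp.linearCombination ℝ q
  have hfg (c : ι →₀ ℝ) : ‖f c‖ = ‖g c‖ := norm_linearCombination_eq_of_gram_eq h c
  have hker : f.ker ≤ g.ker := fun c hc ↦ by
    rw [LinearMap.mem_ker] at hc ⊢
    rw [← norm_eq_zero, ← hfg, hc, norm_zero]
  let L : f.range →ₗ[ℝ] E := f.ker.liftQ g hker ∘ₗ f.quotKerEquivRange.symm
  have hL (c : ι →₀ ℝ) : L (f.rangeRestrict c) = g c := by
    change f.ker.liftQ g hker (f.quotKerEquivRange.symm ⟨f c, LinearMap.mem_range_self f c⟩) = g c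
    rw [LinearMap.quotKerEquivRange_symm_apply_image, Submodule.mkQ_apply, Submodule.liftQ_apply]
  let L' : f.range →ₗᵢ[ℝ] E := ⟨L, fun y ↦ by
    obtain ⟨c, rfl⟩ := f.surjective_rangeRestrict y
    rw [hL, ← hfg]
    rfl⟩
  refine ⟨L'.extend.toLinearIsometryEquiv rfl, fun i ↦ ?_⟩
  calc L'.extend (p i) = L'.extend (f.rangeRestrict (.single i 1) : E) := by simp [f]
    _ = L (f.rangeRestrict (.single i 1)) := L'.extend_apply _
    _ = q i := by rw [hL]; simp [g]

end Gram

section Stress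

variable {E ι : Type*} [NormedAddCommGroup E] [InnerProductSpace ℝ E] [Fintype ι]
  {M : Matrix ι ι ℝ}

lemma dotProduct_inner_eq_zero {w : ι → ℝ} {q : ι → E} (h : ∑ i, w i • q i = 0) (e : E) :
    (w ⬝ᵥ fun i ↦ inner ℝ e (q i)) = 0 := by
  simp only [dotProduct, ← real_inner_smul_right, ← inner_sum, h, inner_zero_right]

lemma sum_mul_norm_sub_sq {w : ι → ℝ} {p : ι → E} {x : E}
    (h : ∑ i, w i • (p i - x) = 0) :
    ∑ i, w i * ‖p i - x‖ ^ 2 = ∑ i, w i * ‖p i‖ ^ 2 - (∑ i, w i) * ‖x‖ ^ 2 := by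
  have hx : ∑ i, w i * inner ℝ (p i - x) x = 0 := by
    simp only [← real_inner_smul_left, ← sum_inner, h, inner_zero_left]
  rw [Finset.sum_mul, ← Finset.sum_sub_distrib, ← sub_eq_zero, ← Finset.sum_sub_distrib,
    ← mul_eq_zero_of_right (-2) hx, Finset.mul_sum]
  refine Finset.sum_congr rfl fun i _ ↦ ?_
  rw [inner_sub_left, real_inner_self_eq_norm_sq, norm_sub_sq_real]
  ring

lemma sum_sum_mul_inner (hM : M.IsSymm) (v : ι → E) :
    ∑ i, ∑ j, M i j * inner ℝ (v i) (v j) =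
      ∑ i, (M *ᵥ 1) i * ‖v i‖ ^ 2 - (∑ i, ∑ j, M i j * ‖v i - v j‖ ^ 2) / 2 := by
  have hrow : ∑ i, ∑ j, M i j * ‖v i‖ ^ 2 = ∑ i, (M *ᵥ 1) i * ‖v i‖ ^ 2 := by
    simp only [Matrix.mulVec, dotProduct, Pi.one_apply, mul_one, Finset.sum_mul]
  have hcol : ∑ i, ∑ j, M i j * ‖v j‖ ^ 2 = ∑ i, (M *ᵥ 1) i * ‖v i‖ ^ 2 := by
    rw [Finset.sum_comm, ← hrow]
    simp only [hM.apply]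
  simp only [norm_sub_sq_real, mul_add, mul_sub, mul_left_comm _ (2 : ℝ), Finset.sum_add_distrib,
    Finset.sum_sub_distrib, ← Finset.mul_sum, hrow, hcol]
  ring

lemma sum_sum_mul_inner_eq_sum_mulVec_dotProduct {κ : Type*} [Fintype κ]
    (b : OrthonormalBasis κ ℝ E) (M : Matrix ι ι ℝ) (v : ι → E) :
    ∑ i, ∑ j, M i j * inner ℝ (v i) (v j) =
      ∑ a, (M *ᵥ fun j ↦ inner ℝ (b a) (v j)) ⬝ᵥ fun i ↦ inner ℝ (b a) (v i) := by
  have hinner (i j : ι) :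
      inner ℝ (v i) (v j) = ∑ a, inner ℝ (b a) (v i) * inner ℝ (b a) (v j) := by
    rw [← b.sum_inner_mul_inner]
    simp only [real_inner_comm (b _) (v i)]
  simp only [Matrix.mulVec, dotProduct, Finset.sum_mul, hinner, Finset.mul_sum]
  rw [Finset.sum_comm_cycle]
  refine Finset.sum_congr rfl fun a _ ↦ Finset.sum_congr rfl fun i _ ↦
    Finset.sum_congr rfl fun j _ ↦ ?_
  ring

theorem eq_zero_and_norm_eq_of_sum_sum_mul_inner [Nonempty ι] {w : ι → ℝ} (hM : M.IsSymm)
    (hMw : M *ᵥ 1 = w) (hM0 : ∀ i j, i ≠ j → 0 ≤ M i j) (hw : ∀ i, 0 < w i) {p q : ι → E} {x : E}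
    (hx : ∑ i, w i • (p i - x) = 0) (hp : ∑ i, ∑ j, M i j * inner ℝ (p i - x) (p j - x) = 0)
    (hq : ∑ i, ∑ j, M i j * inner ℝ (q i) (q j) ≤ 0)
    (hedge : ∀ i j, i ≠ j → 0 < M i j → ‖q i - q j‖ ≤ ‖p i - p j‖)
    (hnorm : ∀ i, ‖p i‖ ≤ ‖q i‖) :
    x = 0 ∧ ∑ i, ∑ j, M i j * inner ℝ (q i) (q j) = 0 ∧ (∀ i, ‖p i‖ = ‖q i‖) ∧
      ∀ i j, 0 < M i j → ‖q i - q j‖ = ‖p i - p j‖ := by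
  have hle (i j : ι) : M i j * ‖q i - q j‖ ^ 2 ≤ M i j * ‖p i - p j‖ ^ 2 := by
    rcases eq_or_ne i j with rfl | hij
    · simp only [sub_self, le_refl]
    rcases (hM0 i j hij).eq_or_lt with h0 | hpos
    · simp only [← h0, zero_mul, le_refl]
    · gcongr
      exact hedge i j hij hpos
  have hlew (i : ι) : w i * ‖p i‖ ^ 2 ≤ w i * ‖q i‖ ^ 2 := by
    have := hw i
    gcongr
    exact hnorm i
  have hlen := Finset.sum_le_sum fun i (_ : i ∈ Finset.univ) ↦
    Finset.sum_le_sum fun j (_ : j ∈ Finset.univ) ↦ hle i j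
  have hwt := Finset.sum_le_sum fun i (_ : i ∈ Finset.univ) ↦ hlew i
  rw [sum_sum_mul_inner hM, hMw] at hp hq ⊢
  simp only [sub_sub_sub_cancel_right, sum_mul_norm_sub_sq hx] at hp
  have hW : 0 < ∑ i, w i := Finset.sum_pos (fun i _ ↦ hw i) Finset.univ_nonempty
  have hx0 : ‖x‖ ^ 2 = 0 := by nlinarith [sq_nonneg ‖x‖]
  rw [hx0, mul_zero, sub_zero] at hp
  have hwt_eq := (Finset.sum_eq_sum_iff_of_le fun i _ ↦ hlew i).1 (by linarith)
  have hlen_eq := (Finset.sum_eq_sum_iff_of_le fun i _ ↦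
    Finset.sum_le_sum fun j _ ↦ hle i j).1 (by linarith)
  refine ⟨by simpa using hx0, by linarith, fun i ↦ ?_, fun i j hij ↦ ?_⟩
  · exact (sq_eq_sq₀ (norm_nonneg _) (norm_nonneg _)).1
      (mul_left_cancel₀ (hw i).ne' (hwt_eq i (Finset.mem_univ i)))
  · have := (Finset.sum_eq_sum_iff_of_le fun j _ ↦ hle i j).1 (hlen_eq i (Finset.mem_univ i)) j
      (Finset.mem_univ j)
    exact (sq_eq_sq₀ (norm_nonneg _) (norm_nonneg _)).1 (mul_left_cancel₀ hij.ne' this)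

end Stress

section Rigidity

variable {V : Type*} [NormedAddCommGroup V] [NormedSpace ℝ V] [MeasurableSpace V] [BorelSpace V]
  [FiniteDimensional ℝ V] (μ : Measure V) [μ.IsAddHaarMeasure] {ι : Type*} [Fintype ι]
  [DecidableEq ι] [Nonempty ι] {ℓ : ι → V →L[ℝ] ℝ} {E : Type*} [NormedAddCommGroup E]
  [InnerProductSpace ℝ E] [FiniteDimensional ℝ E] {q : ι → E}

namespace IsVertexFamily

variable (hℓ : IsVertexFamily ℓ) (hq : ∑ i, cellWeight μ ℓ 0 i • q i = 0)
include hℓ hq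

lemma sum_sum_weightJacobian_mul_inner_nonpos :
    ∑ i, ∑ j, weightJacobian μ ℓ 0 i j * inner ℝ (q i) (q j) ≤ 0 := by
  rw [sum_sum_mul_inner_eq_sum_mulVec_dotProduct (stdOrthonormalBasis ℝ E)]
  exact Finset.sum_nonpos fun a _ ↦ hℓ.dotProduct_weightJacobian_mulVec_nonpos μ
    (dotProduct_inner_eq_zero hq _)

lemma exists_inner_eq_apply
    (h : ∑ i, ∑ j, weightJacobian μ ℓ 0 i j * inner ℝ (q i) (q j) = 0) (e : E) :
    ∃ y, ∀ i, inner ℝ e (q i) = ℓ i y := by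
  set b := stdOrthonormalBasis ℝ E
  have hbal (a : Fin (finrank ℝ E)) := dotProduct_inner_eq_zero hq (b a)
  rw [sum_sum_mul_inner_eq_sum_mulVec_dotProduct b] at h
  have hzero := (Finset.sum_eq_zero_iff_of_nonpos fun a _ ↦
    hℓ.dotProduct_weightJacobian_mulVec_nonpos μ (hbal a)).1 h
  choose y hy using fun a ↦ hℓ.exists_eq_apply μ (hbal a) (hzero a (Finset.mem_univ a))
  refine ⟨∑ a, inner ℝ e (b a) • y a, fun i ↦ ?_⟩
  simp only [map_sum, map_smul, ← hy, smul_eq_mul, b.sum_inner_mul_inner]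

end IsVertexFamily

end Rigidity

lemma nontrivial_of_mem_interior_convexHull {E ι : Type*} [NormedAddCommGroup E] [NormedSpace ℝ E]
    [Nontrivial E] {q : ι → E} {x : E} (hx : x ∈ interior (convexHull ℝ (range q))) :
    Nontrivial ι := by
  by_contra h
  rw [not_nontrivial_iff_subsingleton] at h
  rcases (subsingleton_range q).eq_empty_or_singleton with hq | ⟨y, hq⟩
  · simp [hq] at hx
  · have := Module.punctured_nhds_neBot ℝ E y
    simp [hq] at hx

section VertexFunctionalRigidity

variable {E ι : Type*} [NormedAddCommGroup E] [InnerProductSpace ℝ E] [FiniteDimensional ℝ E]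
  [Fintype ι] [DecidableEq ι] [Nontrivial ι] {p q : ι → E}
  [MeasurableSpace (vectorSpan ℝ (range p))] [BorelSpace (vectorSpan ℝ (range p))]
  (μ : Measure (vectorSpan ℝ (range p))) [μ.IsAddHaarMeasure] (hp : ConvexIndependent ℝ p)
  {u : ι → ℝ} (hu : u ∈ openSimplex ι)
include hp hu

lemma isExtreme_segment_of_weightJacobian_pos {i j : ι} (hij : i ≠ j)
    (h : 0 < weightJacobian μ (vertexFunctional p (∑ l, u l • p l)) 0 i j) :
    IsExtreme ℝ (convexHull ℝ (range p)) (segment ℝ (p i) (p j)) := by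
  obtain ⟨y, hy, hlt⟩ :=
    (isVertexFamily_vertexFunctional hp hu).exists_forall_lt_of_weightJacobian_pos μ hij h
  simp only [vertexFunctional_apply, inner_sub_left, Pi.zero_apply, sub_zero, sub_left_inj,
    sub_lt_sub_iff_right] at hy hlt
  refine isExtreme_segment (a := (innerₗ E (y : E))) ?_ fun l hi hj ↦ ?_
  · simpa only [innerₗ_apply_apply, real_inner_comm] using hy.symm
  · simpa only [innerₗ_apply_apply, real_inner_comm] using hlt l hi hj

lemma sum_sum_weightJacobian_vertexFunctional_mul_inner_sub :
    ∑ i, ∑ j, weightJacobian μ (vertexFunctional p (∑ l, u l • p l)) 0 i j *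
      inner ℝ (p i - ∑ l, u l • p l) (p j - ∑ l, u l • p l) = 0 := by
  refine Finset.sum_eq_zero fun i _ ↦ ?_
  have := congrFun ((isVertexFamily_vertexFunctional hp hu).weightJacobian_mulVec_apply μ 0
    ⟨_, sub_mem_vectorSpan hu.1 i⟩) i
  simpa only [Matrix.mulVec, dotProduct, vertexFunctional_apply, real_inner_comm,
    Pi.zero_apply] using this

omit [DecidableEq ι] in
theorem gram_eq_of_sum_cellWeight_smul_eq_zero
    (hq : ∑ i, cellWeight μ (vertexFunctional p (∑ l, u l • p l)) 0 i • q i = 0)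
    (hedge : ∀ i j, i ≠ j → IsExtreme ℝ (convexHull ℝ (range p)) (segment ℝ (p i) (p j)) →
      ‖q i - q j‖ ≤ ‖p i - p j‖) (hnorm : ∀ i, ‖p i‖ ≤ ‖q i‖) :
    Matrix.gram ℝ p = Matrix.gram ℝ q := by
  classical
  have hℓ := isVertexFamily_vertexFunctional hp hu
  obtain ⟨hx, hform, hnorm_eq, hedge_eq⟩ := eq_zero_and_norm_eq_of_sum_sum_mul_inner
    (hℓ.isSymm_weightJacobian μ 0) (hℓ.weightJacobian_mulVec_one μ 0)
    (fun i j ↦ hℓ.weightJacobian_nonneg μ 0) (hℓ.cellWeight_pos μ 0)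
    (sum_cellWeight_vertexFunctional_smul_sub μ hp hu)
    (sum_sum_weightJacobian_vertexFunctional_mul_inner_sub μ hp hu)
    (hℓ.sum_sum_weightJacobian_mul_inner_nonpos μ hq)
    (fun i j hij h ↦ hedge i j hij (isExtreme_segment_of_weightJacobian_pos μ hp hu hij h)) hnorm
  ext i j
  obtain ⟨y, hy⟩ := hℓ.exists_inner_eq_apply μ hq hform (q i)
  have hpi : p i ∈ vectorSpan ℝ (range p) := by
    simpa only [hx, sub_zero] using sub_mem_vectorSpan (p := p) hu.1 i
  let z : vectorSpan ℝ (range p) := y - ⟨p i, hpi⟩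
  have hz (j : ι) : vertexFunctional p (∑ l, u l • p l) j z =
      inner ℝ (q i) (q j) - inner ℝ (p i) (p j) := by
    rw [map_sub, ← hy, vertexFunctional_apply, hx, sub_zero, real_inner_comm (p j) (p i)]
  have hz0 : z = 0 := hℓ.eq_zero_of_weightJacobian_pos μ
    (by rw [hz, real_inner_self_eq_norm_sq, real_inner_self_eq_norm_sq, hnorm_eq, sub_self])
    fun j _ hpos ↦ by
      rw [hz, real_inner_eq_norm_mul_self_add_norm_mul_self_sub_norm_sub_mul_self_div_two,
        real_inner_eq_norm_mul_self_add_norm_mul_self_sub_norm_sub_mul_self_div_two,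
        hnorm_eq, hnorm_eq, hedge_eq i j hpos, sub_self]
  rw [Matrix.gram_apply, Matrix.gram_apply, eq_comm, ← sub_eq_zero, ← hz, hz0, map_zero]

end VertexFunctionalRigidity

theorem comb_equivalent_version_general {E ι : Type*} [NormedAddCommGroup E]
    [InnerProductSpace ℝ E] [FiniteDimensional ℝ E] [Finite ι] (p q : ι → E)
    (hp : ConvexIndependent ℝ p)
    (hface : ∀ S : Set ι, IsExtreme ℝ (convexHull ℝ (range q)) (convexHull ℝ (q '' S)) →
      IsExtreme ℝ (convexHull ℝ (range p)) (convexHull ℝ (p '' S)))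
    (h0 : 0 ∈ interior (convexHull ℝ (range q)))
    (hedge : ∀ i j, i ≠ j → IsExtreme ℝ (convexHull ℝ (range p)) (segment ℝ (p i) (p j)) →
      ‖q i - q j‖ ≤ ‖p i - p j‖) (hnorm : ∀ i, ‖p i‖ ≤ ‖q i‖) :
    ∃ T : E ≃ₗᵢ[ℝ] E, ∀ i, T (p i) = q i := by
  classical
  cases nonempty_fintype ι
  rcases subsingleton_or_nontrivial E with hE | hE
  · exact ⟨.refl ℝ E, fun i ↦ Subsingleton.elim _ _⟩
  have : Nontrivial ι := nontrivial_of_mem_interior_convexHull h0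
  borelize ↥(vectorSpan ℝ (range p))
  obtain ⟨u, hu, hbal⟩ :=
    exists_sum_cellWeight_vertexFunctional_smul_eq_zero Measure.addHaar hp hface h0
  exact exists_linearIsometryEquiv_of_gram_eq
    (gram_eq_of_sum_cellWeight_smul_eq_zero _ hp hu hbal hedge hnorm)

theorem comb_equivalent_version {n d : ℕ}
    (p q : Fin n → EuclideanSpace ℝ (Fin d))
    (hpinj : Function.Injective p) (hqinj : Function.Injective q)
    (hpvert : Set.range p = Set.extremePoints ℝ (convexHull ℝ (Set.range p)))
    (hqvert : Set.range q = Set.extremePoints ℝ (convexHull ℝ (Set.range q)))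
    (hcomb : CombEquiv p q)
    (h0 : (0 : EuclideanSpace ℝ (Fin d)) ∈ interior (convexHull ℝ (Set.range q)))
    (h1 : ∀ i j, IsEdge p i j → ‖q i - q j‖ ≤ ‖p i - p j‖)
    (h2 : ∀ i, ‖p i‖ ≤ ‖q i‖) :
    ∃ T : EuclideanSpace ℝ (Fin d) ≃ₗᵢ[ℝ] EuclideanSpace ℝ (Fin d),
      ∀ i, T (p i) = q i := by
  have hpconv : ConvexIndependent ℝ p := by
    rw [← hpinj.convexIndependent_iff_set, hpvert]
    exact (convex_convexHull ℝ _).convexIndependent_extremePoints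
  exact comb_equivalent_version_general p q hpconv (fun S ↦ (hcomb S).2) h0
    (fun i j hij h ↦ h1 i j ⟨hij, h⟩) h2
end

section
/- Let K ⊆ EuclideanSpace ℝ (Fin d) be a compact convex set, let x ∈ interior K, and let f : EuclideanSpace ℝ (Fin d) → ℝ → EuclideanSpace ℝ (Fin d) be such that the map (y, t) ↦ f y t is continuous on K ×ˢ Set.Icc (0:ℝ) 1, f y 0 = y for all y ∈ K, and f y t ≠ x for all y ∈ frontier K and all t ∈ Set.Icc (0:ℝ) 1. Then x ∈ interior ((fun y => f y 1) '' K). -/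
/-!
Suppose first that `φ` is a compactly supported `C¹` map. For small `t` the map `y ↦ y + t • φ y`
is a diffeomorphism preserving any compact set `K` that contains the support of `φ`, so
`∫ y in K, g (y + t • φ y) * det (1 + t • φ' y) = ∫ y in K, g y`. When `g` is a polynomial the left
side is a polynomial in `t`, hence is constant, and the identity persists at `t = 1`; by
Stone–Weierstrass it then holds for every continuous `g`. If `y ↦ y + φ y` missed a point
interior to `K`, the distance to the compact image of `K` would be a `g` for which the left side
vanishes and the right side does not. So `y ↦ y + φ y` is surjective, and by smoothing this remains
true for continuous `φ`.

The homotopy is reduced to this case by a cutoff: the points of `K` that ever reach `z` form a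
compact set disjoint from `frontier K`, so letting the running time drop continuously from `1` on
that set to `0` on `frontier K` gives a map that extends by the identity outside `K`.
-/

open Function Set Filter Topology MeasureTheory Polynomial
open scoped NNReal

section PolynomialFunctions

/-- The function `f` is given by a polynomial of degree at most `N`. -/
def IsPolynomialOfDegreeLE {R : Type*} [Semiring R] (N : ℕ) (f : R → R) : Prop :=
  ∃ P : R[X], P.natDegree ≤ N ∧ ∀ t, P.eval t = f t

namespace IsPolynomialOfDegreeLE

theorem const {R : Type*} [Semiring R] (c : R) : IsPolynomialOfDegreeLE 0 fun _ : R ↦ c :=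
  ⟨C c, by simp, by simp⟩

theorem add {R : Type*} [Semiring R] {M N : ℕ} {f g : R → R} (hf : IsPolynomialOfDegreeLE M f)
    (hg : IsPolynomialOfDegreeLE N g) : IsPolynomialOfDegreeLE (max M N) fun t ↦ f t + g t := by
  obtain ⟨P, hP, hPf⟩ := hf
  obtain ⟨Q, hQ, hQg⟩ := hg
  exact ⟨P + Q, natDegree_add_le_of_le hP hQ, by simp [hPf, hQg]⟩

theorem mul {R : Type*} [CommSemiring R] {M N : ℕ} {f g : R → R}
    (hf : IsPolynomialOfDegreeLE M f) (hg : IsPolynomialOfDegreeLE N g) :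
    IsPolynomialOfDegreeLE (M + N) fun t ↦ f t * g t := by
  obtain ⟨P, hP, hPf⟩ := hf
  obtain ⟨Q, hQ, hQg⟩ := hg
  exact ⟨P * Q, natDegree_mul_le_of_le hP hQ, by simp [hPf, hQg]⟩

theorem det_one_add_smul {R M : Type*} [CommRing R] [Nontrivial R] [AddCommGroup M] [Module R M]
    [Module.Free R M] [Module.Finite R M] (A : M →ₗ[R] M) :
    IsPolynomialOfDegreeLE (Module.finrank R M) fun t ↦ LinearMap.det (1 + t • A) := by
  let b := Module.Free.chooseBasis R M
  let B := LinearMap.toMatrix b b A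
  refine ⟨((X : R[X]) • B.map C + (1 : Matrix _ _ R).map C).det, ?_, fun t ↦ ?_⟩
  · rw [Module.finrank_eq_card_chooseBasisIndex]
    exact natDegree_det_X_add_C_le B 1
  · have hB : LinearMap.toMatrix b b (1 + t • A) = t • B + 1 := by
      rw [map_add, map_smul, LinearMap.toMatrix_one, add_comm]
    beta_reduce
    rw [← LinearMap.det_toMatrix b, hB, ← coe_evalRingHom, RingHom.map_det]
    congr 1
    ext i j
    by_cases hij : i = j <;> simp [hij, mul_comm t]

theorem integral {α : Type*} [MeasurableSpace α] {μ : Measure α} {N : ℕ} {F : ℝ → α → ℝ}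
    (hF : ∀ y, IsPolynomialOfDegreeLE N (F · y)) (hint : ∀ t, Integrable (F t) μ) :
    IsPolynomialOfDegreeLE N fun t ↦ ∫ y, F t y ∂μ := by
  let s := Finset.range (N + 1)
  let v : ℕ → ℝ := (↑)
  have hv : InjOn v s := Nat.cast_injective.injOn
  have interpolation (t : ℝ) (y : α) :
      F t y = ∑ i ∈ s, F i y * (Lagrange.basis s v i).eval t := by
    obtain ⟨P, hP, hPF⟩ := hF y
    have hdeg : P.degree < s.card := by
      rw [Finset.card_range]
      exact (degree_le_of_natDegree_le hP).trans_lt (by exact_mod_cast N.lt_succ_self)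
    calc F t y = P.eval t := (hPF t).symm
      _ = (Lagrange.interpolate s v fun i ↦ P.eval (v i)).eval t := by
        rw [← Lagrange.eq_interpolate hv hdeg]
      _ = ∑ i ∈ s, F i y * (Lagrange.basis s v i).eval t := by
        simp [Lagrange.interpolate_apply, eval_finsetSum, v, hPF]
  refine ⟨Lagrange.interpolate s v fun i ↦ ∫ y, F i y ∂μ, ?_, fun t ↦ ?_⟩
  · have hdeg := Lagrange.degree_interpolate_lt (s := s) (fun i ↦ ∫ y, F i y ∂μ) hv
    rw [Finset.card_range] at hdeg
    exact natDegree_le_iff_coeff_eq_zero.2 fun m hm ↦ (degree_lt_iff_coeff_zero _ _).1 hdeg m hm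
  · simp_rw [interpolation t]
    rw [integral_finsetSum _ fun (i : ℕ) _ ↦ (hint i).mul_const _]
    simp [Lagrange.interpolate_apply, eval_finsetSum, integral_mul_const]

end IsPolynomialOfDegreeLE

/-- The subalgebra of those continuous functions whose restrictions to all lines are polynomials of
uniformly bounded degree. On a finite-dimensional space these are the polynomial functions. -/
def linewisePolynomials (E : Type*) [AddCommGroup E] [Module ℝ E] [TopologicalSpace E] :
    Subalgebra ℝ C(E, ℝ) where
  carrier := {g | ∃ N, ∀ a u : E, IsPolynomialOfDegreeLE N fun t : ℝ ↦ g (a + t • u)}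
  mul_mem' := fun ⟨M, hf⟩ ⟨N, hg⟩ ↦ ⟨M + N, fun a u ↦ (hf a u).mul (hg a u)⟩
  add_mem' := fun ⟨M, hf⟩ ⟨N, hg⟩ ↦ ⟨max M N, fun a u ↦ (hf a u).add (hg a u)⟩
  algebraMap_mem' c := ⟨0, fun _ _ ↦ .const c⟩

theorem coe_mem_linewisePolynomials {E : Type*} [AddCommGroup E] [Module ℝ E] [TopologicalSpace E]
    (l : StrongDual ℝ E) : (l : C(E, ℝ)) ∈ linewisePolynomials E :=
  ⟨1, fun a u ↦ ⟨C (l a) + X * C (l u), by compute_degree, fun t ↦ by simp [mul_comm t]⟩⟩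

theorem linewisePolynomials_separatesPoints (E : Type*) [AddCommGroup E] [Module ℝ E]
    [TopologicalSpace E] [SeparatingDual ℝ E] : (linewisePolynomials E).SeparatesPoints := by
  intro x y hxy
  obtain ⟨l, hl⟩ := SeparatingDual.exists_separating_of_ne (R := ℝ) hxy
  exact ⟨l, ⟨l, coe_mem_linewisePolynomials l, rfl⟩, hl⟩

end PolynomialFunctions

section CompactConvergence

variable {X : Type*} [TopologicalSpace X]

theorem dense_subalgebra_of_separatesPoints {A : Subalgebra ℝ C(X, ℝ)} (hA : A.SeparatesPoints) :
    Dense (A : Set C(X, ℝ)) := by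
  intro f
  rw [mem_closure_iff_nhds_basis (nhds_basis_uniformity'
    (Metric.uniformity_basis_dist.compactConvergenceUniformity (α := X)))]
  rintro ⟨K, ε⟩ ⟨hK, hε⟩
  obtain ⟨g, hgA, hg⟩ :=
    ContinuousMap.exists_mem_subalgebra_near_continuous_of_isCompact_of_separatesPoints hA f hK hε
  exact ⟨g, hgA, fun x hx ↦ by
    change dist (f x) (g x) < ε
    rw [dist_comm, dist_eq_norm]
    exact hg x hx⟩

theorem continuous_setIntegral_continuousMap [MeasurableSpace X] [OpensMeasurableSpace X]
    {μ : Measure X} [IsFiniteMeasureOnCompacts μ] {K : Set X} (hK : IsCompact K)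
    (hKm : MeasurableSet K) :
    Continuous fun g : C(X, ℝ) ↦ ∫ y in K, g y ∂μ := by
  refine continuous_iff_continuousAt.2 fun g ↦ Metric.tendsto_nhds.2 fun ε hε ↦ ?_
  have hδ : 0 < ε / (μ.real K + 1) := by positivity
  have near := Metric.tendstoUniformlyOn_iff.1
    (ContinuousMap.tendsto_iff_forall_isCompact_tendstoUniformlyOn.1
      (tendsto_id (x := 𝓝 g)) K hK) _ hδ
  filter_upwards [near] with h hh
  have hint (k : C(X, ℝ)) : IntegrableOn k K μ :=
    k.continuous.continuousOn.integrableOn_compact' hK hKm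
  rw [dist_eq_norm, ← integral_sub (hint h) (hint g)]
  calc ‖∫ y in K, h y - g y ∂μ‖ ≤ ε / (μ.real K + 1) * μ.real K :=
        norm_setIntegral_le_of_norm_le_const hK.measure_lt_top fun y hy ↦ by
          rw [← dist_eq_norm, dist_comm]
          exact (hh y hy).le
    _ < ε := by
        rw [div_mul_eq_mul_div, div_lt_iff₀ (by positivity)]
        linarith

end CompactConvergence

section Perturbation

variable {E : Type*} [NormedAddCommGroup E] [NormedSpace ℝ E]

theorem bijective_add_of_lipschitzWith [CompleteSpace E] {ψ : E → E} {c : ℝ≥0}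
    (hψ : LipschitzWith c ψ) (hc : c < 1) : Bijective fun y ↦ y + ψ y := by
  have happrox : ApproximatesLinearOn (fun y ↦ y + ψ y)
      (ContinuousLinearEquiv.refl ℝ E : E →L[ℝ] E) univ c :=
    ApproximatesLinearOn.approximatesLinearOn_iff_lipschitzOnWith.2 <| by
      convert! hψ.lipschitzOnWith using 1
      ext y
      simp
  have hc' : Subsingleton E ∨ c < ‖((ContinuousLinearEquiv.refl ℝ E).symm : E →L[ℝ] E)‖₊⁻¹ := by
    cases subsingleton_or_nontrivial E
    · exact .inl ‹_›
    · exact .inr (by simpa using hc)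
  exact ⟨injOn_univ.1 (happrox.injOn hc'), happrox.surjective hc'⟩

theorem det_one_add_pos [CompleteSpace E] {A : E →L[ℝ] E} (hA : ‖A‖ < 1) : 0 < (1 + A).det := by
  have hne : ∀ t ∈ Icc (0 : ℝ) 1, (1 + t • A).det ≠ 0 := fun t ht ↦ by
    have hlt : ‖-(t • A)‖ < 1 := by
      rw [norm_neg, norm_smul, Real.norm_of_nonneg ht.1]
      exact (mul_le_of_le_one_left (norm_nonneg A) ht.2).trans_lt hA
    have hunit : IsUnit (1 + t • A) := by simpa using isUnit_one_sub_of_norm_lt_one hlt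
    exact ((hunit.map ContinuousLinearMap.toLinearMapRingHom).map LinearMap.det).ne_zero
  have hcont : Continuous fun t : ℝ ↦ (1 + t • A).det :=
    ContinuousLinearMap.continuous_det.comp (by fun_prop)
  by_contra! hneg
  obtain ⟨t, ht, h0⟩ := intermediate_value_Icc' zero_le_one hcont.continuousOn
    (show (0 : ℝ) ∈ Icc _ _ from ⟨by simpa using hneg, by simp [ContinuousLinearMap.det]⟩)
  exact hne t ht h0

theorem image_eq_of_support_subset {α : Type*} [AddZeroClass α] {ψ : α → α} {K : Set α}
    (hbij : Bijective fun y ↦ y + ψ y) (hsupp : support ψ ⊆ K) : (fun y ↦ y + ψ y) '' K = K := by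
  have hfix : EqOn (fun y ↦ y + ψ y) id Kᶜ := fun y hy ↦ by
    simp [notMem_support.1 fun h ↦ hy (hsupp h)]
  rw [← compl_inj_iff, ← image_compl_eq hbij, hfix.image_eq, image_id]

variable [FiniteDimensional ℝ E] [MeasurableSpace E] [BorelSpace E] (μ : Measure E)
  [μ.IsAddHaarMeasure]

theorem setIntegral_det_smul_comp_add_of_lipschitzWith {F : Type*} [NormedAddCommGroup F]
    [NormedSpace ℝ F] {K : Set E} (hK : MeasurableSet K) {ψ : E → E} (hψ : Differentiable ℝ ψ)
    {c : ℝ≥0} (hlip : LipschitzWith c ψ) (hc : c < 1) (hsupp : support ψ ⊆ K) (g : E → F) :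
    ∫ y in K, (1 + fderiv ℝ ψ y).det • g (y + ψ y) ∂μ = ∫ y in K, g y ∂μ := by
  have hbij := bijective_add_of_lipschitzWith hlip hc
  have hder (y : E) : HasFDerivAt (fun y ↦ y + ψ y) (1 + fderiv ℝ ψ y) y :=
    (hasFDerivAt_id y).add (hψ y).hasFDerivAt
  have hdet (y : E) : 0 < (1 + fderiv ℝ ψ y).det :=
    det_one_add_pos ((norm_fderiv_le_of_lipschitz ℝ hlip).trans_lt hc)
  have cov := integral_image_eq_integral_abs_det_fderiv_smul μ hK
    (fun y _ ↦ (hder y).hasFDerivWithinAt) hbij.injective.injOn g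
  rw [image_eq_of_support_subset hbij hsupp] at cov
  simpa only [abs_of_pos (hdet _)] using cov.symm

end Perturbation

section CompactSupport

variable {E : Type*} [NormedAddCommGroup E] [NormedSpace ℝ E] [FiniteDimensional ℝ E]

section ChangeOfVariables

variable [MeasurableSpace E] [BorelSpace E] (μ : Measure E) [μ.IsAddHaarMeasure]
  {K : Set E} {φ : E → E}

theorem exists_pos_setIntegral_det_mul_comp_add_smul (hK : IsCompact K) (hφ : ContDiff ℝ 1 φ)
    (hsupp : support φ ⊆ K) (g : E → ℝ) : ∃ δ > (0 : ℝ), ∀ t ∈ Ioo 0 δ,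
      ∫ y in K, (1 + t • fderiv ℝ φ y).det * g (y + t • φ y) ∂μ = ∫ y in K, g y ∂μ := by
  obtain ⟨L, hL⟩ := hφ.lipschitzWith_of_hasCompactSupport
    (HasCompactSupport.intro' hK hK.isClosed fun y hy ↦ notMem_support.1 fun h ↦ hy (hsupp h))
    one_ne_zero
  refine ⟨(L + 1 : ℝ)⁻¹, by positivity, fun t ht ↦ ?_⟩
  have hlip : LipschitzWith (‖t‖₊ * L) (t • φ) := (lipschitzWith_smul t).comp hL
  have hc : ‖t‖₊ * L < 1 := by
    rw [← NNReal.coe_lt_coe]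
    calc ‖t‖ * L = t * L := by rw [Real.norm_of_nonneg ht.1.le]
      _ < t * (L + 1) := by nlinarith [ht.1]
      _ < 1 := by rw [← lt_div_iff₀ (by positivity), one_div]; exact ht.2
  simpa [fderiv_const_smul (hφ.differentiable one_ne_zero _)] using
    setIntegral_det_smul_comp_add_of_lipschitzWith μ hK.measurableSet
      ((hφ.differentiable one_ne_zero).const_smul t) hlip hc
      ((support_const_smul_subset t φ).trans hsupp) g

theorem setIntegral_det_mul_comp_add_of_mem_linewisePolynomials (hK : IsCompact K)
    (hφ : ContDiff ℝ 1 φ) (hsupp : support φ ⊆ K) {g : C(E, ℝ)} (hg : g ∈ linewisePolynomials E) :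
    ∫ y in K, (1 + fderiv ℝ φ y).det * g (y + φ y) ∂μ = ∫ y in K, g y ∂μ := by
  let F (t : ℝ) (y : E) : ℝ := (1 + t • fderiv ℝ φ y).det * g (y + t • φ y)
  obtain ⟨N, hN⟩ := hg
  have hpoly (y : E) : IsPolynomialOfDegreeLE (Module.finrank ℝ E + N) (F · y) :=
    (IsPolynomialOfDegreeLE.det_one_add_smul (fderiv ℝ φ y : E →ₗ[ℝ] E)).mul (hN y (φ y))
  have hint (t : ℝ) : IntegrableOn (F t) K μ := by
    have := hφ.continuous
    have := hφ.continuous_fderiv one_ne_zero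
    have hdet : Continuous fun y ↦ (1 + t • fderiv ℝ φ y).det :=
      ContinuousLinearMap.continuous_det.comp (by fun_prop)
    exact (hdet.mul (by fun_prop)).continuousOn.integrableOn_compact hK
  obtain ⟨P, -, hP⟩ := IsPolynomialOfDegreeLE.integral hpoly hint
  obtain ⟨δ, hδ, hsmall⟩ := exists_pos_setIntegral_det_mul_comp_add_smul μ hK hφ hsupp g
  have hconst : P = C (∫ y in K, g y ∂μ) :=
    eq_of_infinite_eval_eq _ _ <| (Ioo_infinite hδ).mono fun t ht ↦ by
      simpa [hP] using hsmall t ht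
  simpa [F, hconst] using (hP 1).symm

theorem setIntegral_det_mul_comp_add (hK : IsCompact K) (hφ : ContDiff ℝ 1 φ)
    (hsupp : support φ ⊆ K) (g : C(E, ℝ)) :
    ∫ y in K, (1 + fderiv ℝ φ y).det * g (y + φ y) ∂μ = ∫ y in K, g y ∂μ := by
  have := hφ.continuous_fderiv one_ne_zero
  let D : C(E, ℝ) := ⟨fun y ↦ (1 + fderiv ℝ φ y).det,
    ContinuousLinearMap.continuous_det.comp (by fun_prop)⟩
  let G : C(E, E) := ⟨fun y ↦ y + φ y, continuous_id.add hφ.continuous⟩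
  have hint := continuous_setIntegral_continuousMap (μ := μ) hK hK.measurableSet
  have hleft : Continuous fun g : C(E, ℝ) ↦ ∫ y in K, D y * g (G y) ∂μ :=
    hint.comp (continuous_const.mul (ContinuousMap.continuous_precomp G))
  have hdense := dense_subalgebra_of_separatesPoints (linewisePolynomials_separatesPoints E)
  refine congrFun (hleft.ext_on hdense hint fun g hg ↦ ?_) g
  exact setIntegral_det_mul_comp_add_of_mem_linewisePolynomials μ hK hφ hsupp hg

end ChangeOfVariables

theorem surjective_add_of_contDiff {φ : E → E} (hφ : ContDiff ℝ 1 φ)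
    (hsupp : HasCompactSupport φ) : Surjective fun y ↦ y + φ y := by
  borelize E
  intro z
  by_contra hz
  obtain ⟨K, hK, hKz⟩ := exists_compact_superset (hsupp.isCompact.insert z)
  let S := (fun y ↦ y + φ y) '' K
  have hS : IsClosed S := (hK.image (continuous_id.add hφ.continuous)).isClosed
  have hzS : z ∉ S := fun ⟨y, _, hy⟩ ↦ hz ⟨y, hy⟩
  have hSne : S.Nonempty := ⟨_, mem_image_of_mem _ (interior_subset (hKz (mem_insert _ _)))⟩
  let g : C(E, ℝ) := ⟨(Metric.infDist · S), Metric.continuous_infDist_pt S⟩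
  have hg0 : ∀ y ∈ K, g (y + φ y) = 0 := fun y hy ↦
    Metric.infDist_zero_of_mem (mem_image_of_mem _ hy)
  have hgz : 0 < g z := (hS.notMem_iff_infDist_pos hSne).1 hzS
  have hpos : 0 < ∫ y in K, g y ∂Measure.addHaar := by
    rw [setIntegral_pos_iff_support_of_nonneg_ae (f := g)
      (.of_forall fun _ ↦ Metric.infDist_nonneg)
      (g.continuous.continuousOn.integrableOn_compact hK)]
    have hopen : IsOpen (support g ∩ interior K) :=
      g.continuous.isOpen_support.inter isOpen_interior
    exact (hopen.measure_pos _ ⟨z, hgz.ne', hKz (mem_insert _ _)⟩).trans_le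
      (measure_mono (inter_subset_inter_right _ interior_subset))
  have hsuppK : support φ ⊆ K :=
    (subset_tsupport φ).trans ((subset_insert _ _).trans (hKz.trans interior_subset))
  refine hpos.ne' ?_
  rw [← setIntegral_det_mul_comp_add Measure.addHaar hK hφ hsuppK g]
  exact setIntegral_eq_zero_of_forall_eq_zero fun y hy ↦ by rw [hg0 y hy, mul_zero]

theorem surjective_add_of_continuous {φ : E → E} (hφ : Continuous φ)
    (hsupp : HasCompactSupport φ) : Surjective fun y ↦ y + φ y := by
  intro z
  by_contra! hz
  obtain ⟨ψ, hψ, hclose, hψsupp⟩ := hφ.exists_contDiff_approx 1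
    (ε := fun y ↦ dist (y + φ y) z) (by fun_prop) fun y ↦ dist_pos.2 (hz y)
  obtain ⟨y, rfl⟩ := surjective_add_of_contDiff (mod_cast hψ) (hsupp.mono hψsupp) z
  exact (hclose y).ne (by simp [dist_comm])

end CompactSupport

section Homotopy

variable {E : Type*} [NormedAddCommGroup E] [NormedSpace ℝ E] [FiniteDimensional ℝ E]

theorem exists_continuous_cutoff {X Y : Type*} [TopologicalSpace X] [T4Space X]
    [TopologicalSpace Y] [T1Space Y] {K : Set X} (hK : IsCompact K) {f : X → ℝ → Y}
    (hf : ContinuousOn (fun yt : X × ℝ ↦ f yt.1 yt.2) (K ×ˢ Icc 0 1)) {z : Y}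
    (hz : ∀ y ∈ frontier K, ∀ t ∈ Icc (0 : ℝ) 1, f y t ≠ z) :
    ∃ s : C(X, ℝ), (∀ y, s y ∈ Icc 0 1) ∧ (∀ y ∈ frontier K, s y = 0) ∧
      ∀ y ∈ K, ∀ t ∈ Icc 0 1, f y t = z → s y = 1 := by
  let T := (K ×ˢ Icc (0 : ℝ) 1) ∩ (fun yt : X × ℝ ↦ f yt.1 yt.2) ⁻¹' {z}
  have hprod : IsCompact (K ×ˢ Icc (0 : ℝ) 1) := hK.prod isCompact_Icc
  have hT : IsCompact T := hprod.of_isClosed_subset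
    (hf.preimage_isClosed_of_isClosed hprod.isClosed isClosed_singleton) inter_subset_left
  have hdisj : Disjoint (frontier K) (Prod.fst '' T) := by
    rw [Set.disjoint_left]
    rintro y hy ⟨⟨y, t⟩, ⟨⟨-, ht⟩, h⟩, rfl⟩
    exact hz y hy t ht h
  obtain ⟨s, hs0, hs1, hs⟩ := exists_continuous_zero_one_of_isClosed isClosed_frontier
    (hT.image continuous_fst).isClosed hdisj
  exact ⟨s, hs, hs0, fun y hy t ht h ↦ hs1 ⟨(y, t), ⟨⟨hy, ht⟩, h⟩, rfl⟩⟩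

theorem mem_image_of_homotopy {K : Set E} (hK : IsCompact K) {f : E → ℝ → E}
    (hf : ContinuousOn (fun yt : E × ℝ ↦ f yt.1 yt.2) (K ×ˢ Icc 0 1))
    (hid : ∀ y ∈ K, f y 0 = y) {z : E} (hzK : z ∈ K)
    (hz : ∀ y ∈ frontier K, ∀ t ∈ Icc (0 : ℝ) 1, f y t ≠ z) :
    z ∈ (fun y ↦ f y 1) '' K := by
  classical
  obtain ⟨s, hs, hs0, hs1⟩ := exists_continuous_cutoff hK hf hz
  let G : E → E := K.piecewise (fun y ↦ f y (s y)) id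
  have hG : Continuous G := by
    refine continuous_piecewise (fun y hy ↦ ?_) ?_ continuousOn_id
    · simp [hs0 y hy, hid y (hK.isClosed.frontier_subset hy)]
    · rw [hK.isClosed.closure_eq]
      exact hf.comp (f := fun y ↦ (y, s y)) (by fun_prop) fun y hy ↦ ⟨hy, hs y⟩
  have hsupp : HasCompactSupport fun y ↦ G y - y := .intro hK fun y hy ↦ by simp [G, hy]
  obtain ⟨y, hy⟩ := surjective_add_of_continuous (hG.sub continuous_id) hsupp z
  have hGy : G y = z := by simpa using hy
  have hyK : y ∈ K := by
    by_contra h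
    exact h (by rwa [← show y = z by simpa [G, h] using hGy] at hzK)
  have hfy : f y (s y) = z := by simpa [G, hyK] using hGy
  exact ⟨y, hyK, by simpa [hs1 y hyK (s y) (hs y) hfy] using hfy⟩

theorem homotopy_interior_general {K : Set E} (hK : IsCompact K) {x : E} (hx : x ∈ interior K)
    {f : E → ℝ → E} (hf : ContinuousOn (fun yt : E × ℝ ↦ f yt.1 yt.2) (K ×ˢ Icc 0 1))
    (hid : ∀ y ∈ K, f y 0 = y) (hbd : ∀ y ∈ frontier K, ∀ t ∈ Icc (0 : ℝ) 1, f y t ≠ x) :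
    x ∈ interior ((fun y ↦ f y 1) '' K) := by
  let S := (fun yt : E × ℝ ↦ f yt.1 yt.2) '' (frontier K ×ˢ Icc 0 1)
  have hfrontier : frontier K ⊆ K := hK.isClosed.frontier_subset
  have hS : IsClosed S := ((hK.of_isClosed_subset isClosed_frontier hfrontier).prod
    isCompact_Icc).image_of_continuousOn (hf.mono (prod_mono_left hfrontier)) |>.isClosed
  have hxS : x ∉ S := fun ⟨yt, ⟨hy, ht⟩, h⟩ ↦ hbd yt.1 hy yt.2 ht h
  rw [mem_interior_iff_mem_nhds] at hx ⊢
  filter_upwards [hx, hS.compl_mem_nhds hxS] with z hzK hzS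
  exact mem_image_of_homotopy hK hf hid hzK fun y hy t ht h ↦ hzS ⟨(y, t), ⟨hy, ht⟩, h⟩

end Homotopy

theorem homotopy_interior {d : ℕ}
    (K : Set (EuclideanSpace ℝ (Fin d)))
    (hKcomp : IsCompact K) (hKconv : Convex ℝ K)
    (x : EuclideanSpace ℝ (Fin d)) (hx : x ∈ interior K)
    (f : EuclideanSpace ℝ (Fin d) → ℝ → EuclideanSpace ℝ (Fin d))
    (hcont : ContinuousOn (fun yt : EuclideanSpace ℝ (Fin d) × ℝ => f yt.1 yt.2)
      (K ×ˢ Set.Icc (0 : ℝ) 1))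
    (hid : ∀ y ∈ K, f y 0 = y)
    (hbd : ∀ y ∈ frontier K, ∀ t ∈ Set.Icc (0 : ℝ) 1, f y t ≠ x) :
    x ∈ interior ((fun y => f y 1) '' K) :=
  homotopy_interior_general hKcomp hx hcont hid hbd
end
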